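/- arXiv:2006.04799 — 5 statements merged into one kernel-verified Lean document; each statement's English description precedes it below -/
import Mathlib

section
/- Dual Ramsey Theorem (Graham–Rothschild, rigid surjection form): for every pair of finite linearly ordered sets R and S and every natural number r, there exists a natural number n such that, with {0,1,…,n−1} carrying its natural order, for every coloring c of the set Epi(n,R) of rigid surjections from {0,…,n−1} onto R with r colors there exist a rigid surjection γ ∈ Epi(n,S) and a color j such that c(σ ∘ γ) = j for every rigid surjection σ ∈ Epi(S,R). -/
/-- A map between linearly ordered sets is a *rigid surjection* if it is surjective and
the least elements of preimages of points are ordered as the points themselves: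
whenever `b₀ < b₁`, the least element of `f ⁻¹' {b₀}` is smaller than the least element
of `f ⁻¹' {b₁}`. -/
def IsRigidSurjection {α β : Type*} [LinearOrder α] [LinearOrder β] (f : α → β) : Prop :=
  Function.Surjective f ∧
    ∀ ⦃b₀ b₁ : β⦄, b₀ < b₁ → ∀ ⦃a₀ a₁ : α⦄,
      IsLeast {a | f a = b₀} a₀ → IsLeast {a | f a = b₁} a₁ → a₀ < a₁

/-- `PWord s L e`: reading `L` from left to right with the letters `< s` available, each letter is
either already available or is the next new one; at the end the letters `< e` are available. -/
def PWord : ℕ → List ℕ → ℕ → Prop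
  | s, [], e => s = e
  | s, x :: L, e => (x < s ∧ PWord s L e) ∨ (x = s ∧ PWord (s + 1) L e)

/-- Substitution map: letters `< a` are fixed, the parameter `a + i` is replaced by `f[i]`. -/
def pext (a : ℕ) (f : List ℕ) (x : ℕ) : ℕ := if x < a then x else f.getD (x - a) a

/-- The part of a word before the first parameter. -/
def ppre (a : ℕ) (f : List ℕ) : List ℕ := f.takeWhile (fun x => decide (x < a))

theorem PWord.le {s e : ℕ} {L : List ℕ} (h : PWord s L e) : s ≤ e := by
  induction L generalizing s with
  | nil => simp only [PWord] at h; omega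
  | cons x L ih =>
    simp only [PWord] at h
    rcases h with ⟨_, h⟩ | ⟨_, h⟩
    · exact ih h
    · have := ih h; omega

theorem PWord.lt {s e : ℕ} {L : List ℕ} (h : PWord s L e) : ∀ x ∈ L, x < e := by
  induction L generalizing s with
  | nil => simp
  | cons x L ih =>
    simp only [PWord] at h
    intro y hy
    rcases h with ⟨h1, h⟩ | ⟨h1, h⟩ <;> have := h.le <;> rcases List.mem_cons.1 hy with rfl | hy
    · omega
    · exact ih h y hy
    · omega
    · exact ih h y hy

theorem PWord.append {s t e : ℕ} {L L' : List ℕ} (h : PWord s L t) (h' : PWord t L' e) :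
    PWord s (L ++ L') e := by
  induction L generalizing s with
  | nil => simp only [PWord] at h; subst h; simpa using h'
  | cons x L ih =>
    simp only [PWord, List.cons_append] at h ⊢
    rcases h with ⟨h1, h⟩ | ⟨h1, h⟩
    · exact Or.inl ⟨h1, ih h⟩
    · exact Or.inr ⟨h1, ih h⟩

theorem pword_old {s : ℕ} {L : List ℕ} (h : ∀ x ∈ L, x < s) : PWord s L s := by
  induction L with
  | nil => simp [PWord]
  | cons x L ih =>
    simp only [PWord]
    exact Or.inl ⟨h x (by simp), ih fun y hy => h y (by simp [hy])⟩

theorem pword_range' (s m : ℕ) : PWord s (List.range' s m) (s + m) := by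
  induction m generalizing s with
  | zero => simp [PWord]
  | succ m ih =>
    simp only [List.range'_succ, PWord]
    right
    refine ⟨trivial, ?_⟩
    have := ih (s + 1)
    rwa [show s + 1 + m = s + (m + 1) by ring] at this

theorem pword_shift {a i s e : ℕ} {T : List ℕ} (ha : a ≤ s) (h : PWord s T e) :
    PWord (s + i) (T.map fun x => if x < a then x else x + i) (e + i) := by
  induction T generalizing s with
  | nil => simp only [PWord, List.map_nil] at h ⊢; omega
  | cons x L ih =>
    simp only [PWord, List.map_cons] at h ⊢
    rcases h with ⟨h1, h⟩ | ⟨h1, h⟩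
    · left
      refine ⟨by split_ifs <;> omega, ih ha h⟩
    · right
      refine ⟨by split_ifs <;> omega, ?_⟩
      have := ih (s := s + 1) (by omega) h
      rwa [show s + 1 + i = s + i + 1 by ring] at this

theorem pword_comp_aux {a b e : ℕ} (F f1 f2 : List ℕ) (h1 : PWord a f1 b) (h2 : PWord b f2 e)
    (hF : PWord (a + f1.length) F (a + (f1 ++ f2).length)) :
    PWord b (F.map (pext a (f1 ++ f2))) e := by
  induction F generalizing f1 f2 b with
  | nil =>
    simp only [PWord, List.length_append] at hF
    have : f2 = [] := List.length_eq_zero_iff.1 (by omega)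
    subst this
    simpa [PWord] using h2
  | cons x F ih =>
    simp only [PWord, List.map_cons] at hF ⊢
    rcases hF with ⟨hx, hF⟩ | ⟨hx, hF⟩
    · left
      refine ⟨?_, ih f1 f2 h1 h2 hF⟩
      unfold pext
      split_ifs with hxa
      · have := h1.le; omega
      · have hl : x - a < f1.length := by omega
        rw [List.getD_append _ _ _ _ hl, List.getD_eq_getElem _ _ hl]
        exact h1.lt _ (List.getElem_mem hl)
    · cases f2 with
      | nil => have := hF.le; simp at this
      | cons y f2 =>
        have hy : pext a (f1 ++ y :: f2) x = y := by
          unfold pext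
          rw [if_neg (by omega), hx]
          simp
        have key : f1 ++ y :: f2 = (f1 ++ [y]) ++ f2 := by simp
        rw [hy]
        simp only [PWord] at h2
        rw [key] at hF ⊢
        rcases h2 with ⟨hyb, h2⟩ | ⟨hyb, h2⟩
        · left
          refine ⟨hyb, ih (f1 ++ [y]) f2 (h1.append (by simp [PWord, hyb])) h2 ?_⟩
          simpa [add_assoc] using hF
        · right
          refine ⟨hyb, ih (f1 ++ [y]) f2 (h1.append (by simp [PWord, hyb])) h2 ?_⟩
          simpa [add_assoc] using hF

theorem pword_comp {a e : ℕ} {F f : List ℕ} (hF : PWord a F (a + f.length)) (hf : PWord a f e) :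
    PWord a (F.map (pext a f)) e := by
  have := pword_comp_aux (a := a) (b := a) F [] f (by simp [PWord]) hf (by simpa using hF)
  simpa using this

theorem pext_assoc {a : ℕ} {F G f : List ℕ} (hF : PWord a F (a + G.length)) :
    (F.map (pext a G)).map (pext a f) = F.map (pext a (G.map (pext a f))) := by
  rw [List.map_map]
  apply List.map_congr_left
  intro x hx
  have := hF.lt x hx
  by_cases hxa : x < a
  · simp [pext, hxa]
  · have hl : x - a < G.length := by omega
    have h1 : pext a G x = G[x - a] := by
      rw [pext, if_neg hxa, List.getD_eq_getElem _ _ hl]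
    have h2 : pext a (G.map (pext a f)) x = pext a f (G[x - a]) := by
      rw [pext, if_neg hxa, List.getD_eq_getElem _ _ (by simpa using hl), List.getElem_map]
    rw [Function.comp_apply, h1, h2]

theorem pext_id {a : ℕ} (f : List ℕ) (g : List ℕ) :
    (List.range' a g.length).map (pext a (g ++ f)) = g := by
  apply List.ext_getElem
  · simp
  · intro i h1 h2
    have h2' : i < g.length := h2
    simp [pext, List.getElem?_append_left h2', h2']

theorem pword_decomp {a e : ℕ} {f : List ℕ} (h : PWord a f e) (hae : a < e) :
    ∃ t, f = ppre a f ++ a :: t ∧ PWord (a + 1) t e := by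
  induction f with
  | nil => simp only [PWord] at h; omega
  | cons x f ih =>
    simp only [PWord] at h
    rcases h with ⟨hx, h⟩ | ⟨hx, h⟩
    · obtain ⟨t, ht, hw⟩ := ih h
      refine ⟨t, ?_, hw⟩
      have : ppre a (x :: f) = x :: ppre a f := by simp [ppre, hx]
      rw [this, List.cons_append, ← ht]
    · refine ⟨f, ?_, h⟩
      simp [ppre, hx]

theorem ppre_lt {a : ℕ} {f : List ℕ} : ∀ x ∈ ppre a f, x < a := by
  intro x hx
  have := List.mem_takeWhile_imp hx
  simpa using this

theorem ppre_append {a : ℕ} {g t : List ℕ} (h : ∀ x ∈ g, x < a) : ppre a (g ++ a :: t) = g := by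
  unfold ppre
  rw [List.takeWhile_append_of_pos (by simpa using h)]
  simp

theorem ppre_all {a : ℕ} {g : List ℕ} (h : ∀ x ∈ g, x < a) : ppre a g = g := by
  unfold ppre
  rw [List.takeWhile_eq_self_iff]
  simpa using h

theorem ppre_congr {a s t e : ℕ} {G : List ℕ} {φ ψ : ℕ → ℕ} (hG : PWord s G e) (hst : s ≤ t)
    (hlt : ∀ x < t, φ x = ψ x) (h1 : a ≤ φ t) (h2 : a ≤ ψ t) :
    ppre a (G.map φ) = ppre a (G.map ψ) := by
  induction G generalizing s with
  | nil => simp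
  | cons x G ih =>
    simp only [PWord] at hG
    unfold ppre at ih ⊢
    simp only [List.map_cons, List.takeWhile_cons]
    rcases hG with ⟨hx, h⟩ | ⟨hx, h⟩
    · rw [hlt x (by omega), ih h hst]
    · rcases hst.eq_or_lt with rfl | hst
      · subst hx
        simp [not_lt.2 h1, not_lt.2 h2]
      · rw [hlt x (by omega), ih h hst]

/-- The prefix of a substitution depends only on the prefix of what is substituted. -/
theorem ppre_comp {a e e' : ℕ} {G f : List ℕ} (hG : PWord a G e) (hf : PWord a f e') :
    ppre a (G.map (pext a f)) = ppre a (G.map (pext a (ppre a f))) := by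
  rcases hf.le.eq_or_lt with rfl | hlt
  · rw [ppre_all hf.lt]
  · obtain ⟨t, ht, -⟩ := pword_decomp hf hlt
    set g := ppre a f with hg
    refine ppre_congr (t := a + g.length) hG (by omega) ?_ ?_ ?_
    · intro x hx
      unfold pext
      split_ifs with hxa
      · rfl
      · rw [ht, List.getD_append _ _ _ _ (by omega)]
    · rw [ht]; simp [pext]
    · simp [pext]

/-- Hales-Jewett. -/
theorem pword_hj (a m : ℕ) (κ : Type) [Finite κ] :
    ∃ n, ∀ c : List ℕ → κ, ∃ F, PWord a F (a + m) ∧ F.length = n ∧ ∃ j, ∀ f, PWord a f a →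
      f.length = m → c (F.map (pext a f)) = j := by
  classical
  obtain ⟨ι, hι, H⟩ := Combinatorics.Line.exists_mono_in_high_dimension (Fin m → Fin a) κ
  refine ⟨Fintype.card ι * m, fun c => ?_⟩
  obtain ⟨l, j, hj⟩ := H fun v =>
    c ((Finset.univ : Finset ι).toList.flatMap fun i => List.ofFn fun t => (v i t : ℕ))
  let block : ι → List ℕ := fun i =>
    (l.idxFun i).elim (List.range' a m) fun v => List.ofFn fun t => (v t : ℕ)
  have hlen : ∀ i, (block i).length = m := by
    intro i
    simp only [block]
    cases l.idxFun i <;> simp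
  have hb : ∀ i, (l.idxFun i = none ∧ block i = List.range' a m) ∨ (∀ x ∈ block i, x < a) := by
    intro i
    simp only [block]
    cases l.idxFun i with
    | none => left; simp
    | some v =>
      right
      intro x hx
      simp only [Option.elim_some, List.mem_ofFn] at hx
      obtain ⟨t, rfl⟩ := hx
      exact (v t).2
  have hall : ∀ L : List ι, PWord (a + m) (L.flatMap block) (a + m) := by
    intro L
    apply pword_old
    intro x hx
    obtain ⟨i, -, hi⟩ := List.mem_flatMap.1 hx
    rcases hb i with ⟨-, h⟩ | h
    · rw [h, List.mem_range'_1] at hi; omega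
    · have := h x hi; omega
  have hW : ∀ L : List ι, (∃ i ∈ L, l.idxFun i = none) → PWord a (L.flatMap block) (a + m) := by
    intro L
    induction L with
    | nil => simp
    | cons i L ih =>
      intro hi
      rw [List.flatMap_cons]
      rcases hb i with ⟨-, h⟩ | h
      · rw [h]
        exact (pword_range' a m).append (hall L)
      · by_cases hm : l.idxFun i = none
        · have h0 : block i = List.range' a m := by simp [block, hm]
          rw [h0]
          exact (pword_range' a m).append (hall L)
        · refine (pword_old h).append (ih ?_)
          obtain ⟨i', hi', hn⟩ := hi
          rcases List.mem_cons.1 hi' with rfl | h'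
          · exact absurd hn hm
          · exact ⟨i', h', hn⟩
  refine ⟨(Finset.univ : Finset ι).toList.flatMap block, ?_, ?_, j, ?_⟩
  · apply hW
    obtain ⟨i, hi⟩ := l.proper
    exact ⟨i, by simp, hi⟩
  · simp [List.length_flatMap, hlen]
  · intro f hf hfm
    subst hfm
    have := hj (fun t => ⟨f[t], hf.lt _ (List.getElem_mem _)⟩)
    rw [← this]
    congr 1
    rw [List.map_flatMap]
    congr 1
    funext i
    simp only [block, Combinatorics.Line.apply_def]
    cases l.idxFun i with
    | none =>
      have := pext_id (a := a) [] f
      rw [List.append_nil] at this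
      simp [this]
    | some v =>
      simp only [Option.elim_some, Option.getD_some, List.map_ofFn]
      congr 1
      funext t
      simp [pext]

/-- `PGR a k`: Graham-Rothschild for `k`-parameter words over an alphabet with `a` letters. -/
def PGR (a k : ℕ) : Prop := ∀ (m : ℕ) (κ : Type) [Finite κ], ∃ n, ∀ c : List ℕ → κ,
  ∃ F, PWord a F (a + m) ∧ F.length = n ∧ ∃ j, ∀ f, PWord a f (a + k) → f.length = m →
    c (F.map (pext a f)) = j

theorem pword_left {s e : ℕ} {L L' : List ℕ} (h : PWord s (L ++ L') e) : ∃ t, PWord s L t := by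
  induction L generalizing s with
  | nil => exact ⟨s, by simp [PWord]⟩
  | cons x L ih =>
    simp only [PWord, List.cons_append] at h ⊢
    rcases h with ⟨h1, h⟩ | ⟨h1, h⟩
    · obtain ⟨t, ht⟩ := ih h
      exact ⟨t, Or.inl ⟨h1, ht⟩⟩
    · obtain ⟨t, ht⟩ := ih h
      exact ⟨t, Or.inr ⟨h1, ht⟩⟩

/-- Step 1: make the color depend only on the prefix. -/
theorem pgr_step1 {a k : ℕ} (ih : PGR (a + 1) k) (κ : Type) [Finite κ] (i : ℕ) :
    ∀ M, ∃ n, ∀ c : List ℕ → κ, ∃ F, PWord a F (a + M) ∧ F.length = n ∧ ∃ c' : List ℕ → κ,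
      ∀ f, PWord a f (a + (k + 1)) → f.length = M → (ppre a f).length < i →
        c (F.map (pext a f)) = c' (ppre a f) := by
  classical
  induction i with
  | zero =>
    intro M
    exact ⟨M, fun c => ⟨List.range' a M, pword_range' a M, by simp, c, by simp⟩⟩
  | succ i IH =>
    intro M
    rcases le_or_gt M i with hM | hM
    · obtain ⟨n, hn⟩ := IH M
      refine ⟨n, fun c => ?_⟩
      obtain ⟨F, hF, hFn, c', hc'⟩ := hn c
      refine ⟨F, hF, hFn, c', fun f hf hfM _ => hc' f hf hfM ?_⟩
      obtain ⟨t, ht, -⟩ := pword_decomp hf (by omega)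
      have := congrArg List.length ht
      simp at this
      omega
    · obtain ⟨M', rfl⟩ : ∃ M', M = i + 1 + M' := ⟨M - (i + 1), by omega⟩
      obtain ⟨N, hN⟩ := ih M' ((Fin i → Fin a) → κ)
      obtain ⟨n, hn⟩ := IH (i + 1 + N)
      refine ⟨n, fun c => ?_⟩
      obtain ⟨F1, hF1, hF1n, c1, hc1⟩ := hn c
      obtain ⟨T, hT, hTN, J, hJ⟩ := hN fun h v =>
        c (F1.map (pext a ((List.ofFn fun t => (v t : ℕ)) ++ a :: h)))
      set T' := T.map fun x => if x < a then x else x + i with hT'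
      set F2 := List.range' a (i + 1) ++ T' with hF2
      have hF2len : F2.length = i + 1 + N := by simp [hF2, hT', hTN]
      have hF2W : PWord a F2 (a + (i + 1 + M')) := by
        refine (pword_range' a (i + 1)).append ?_
        have := pword_shift (a := a) (i := i) (by omega) hT
        rwa [show a + 1 + i = a + (i + 1) by ring,
          show a + 1 + M' + i = a + (i + 1 + M') by ring] at this
      have hsub : ∀ f : List ℕ, f.length = i + 1 + M' →
          F2.map (pext a f) = f.take (i + 1) ++ T'.map (pext a f) := by
        intro f hf
        rw [hF2, List.map_append]
        congr 1
        have h := pext_id (a := a) (f.drop (i + 1)) (f.take (i + 1))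
        rw [List.take_append_drop] at h
        rwa [show (f.take (i + 1)).length = i + 1 by simp; omega] at h
      refine ⟨F1.map (pext a F2), ?_, by simp [hF1n], fun g => if g.length < i then c1 g else
        if h : ∃ v : Fin i → Fin a, (List.ofFn fun t => (v t : ℕ)) = g then J h.choose else c g, ?_⟩
      · exact pword_comp (by rw [hF2len]; exact hF1) hF2W
      · intro f hf hfM hfi
        rw [pext_assoc (by rw [hF2len]; exact hF1)]
        obtain ⟨t, ht, htW⟩ := pword_decomp hf (by omega)
        have hlt : ∀ x ∈ ppre a f, x < a := ppre_lt
        have hlen := congrArg List.length ht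
        simp only [List.length_append, List.length_cons] at hlen
        set g := ppre a f with hg
        rcases Nat.lt_succ_iff_lt_or_eq.1 hfi with hi | hi
        · have hW2 : PWord a (F2.map (pext a f)) (a + (k + 1)) :=
            pword_comp (by rw [hfM]; exact hF2W) hf
          have hpre : ppre a (F2.map (pext a f)) = g := by
            rw [hsub f hfM, ht]
            have : (g ++ a :: t).take (i + 1) = g ++ a :: t.take (i - g.length) := by
              rw [List.take_append, List.take_of_length_le (by omega),
                show i + 1 - g.length = (i - g.length) + 1 by omega, List.take_succ_cons]
            rw [this, List.append_assoc, List.cons_append, ppre_append hlt]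
          rw [hc1 _ hW2 (by simp [hF2len]) (by rw [hpre]; exact hi), hpre]
          exact (if_pos hi).symm
        · have hex : ∃ v : Fin i → Fin a, (List.ofFn fun t => (v t : ℕ)) = g := by
            refine ⟨fun t => ⟨g[t], hlt _ (List.getElem_mem _)⟩, ?_⟩
            apply List.ext_getElem
            · simp [hi]
            · intro n h1 h2
              simp
          beta_reduce
          rw [if_neg (by omega), dif_pos hex]
          have hv := hex.choose_spec
          set v := hex.choose
          have htM : t.length = M' := by omega
          have hJt := congrFun (hJ t (by rwa [show a + 1 + k = a + (k + 1) by ring]) htM) v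
          rw [← hJt]
          simp only [hv]
          congr 3
          rw [hsub f hfM]
          have h1 : f.take (i + 1) = g ++ [a] := by
            rw [ht, List.take_append, List.take_of_length_le (by omega),
                show i + 1 - g.length = 1 by omega]
            simp
          have h2 : T'.map (pext a f) = T.map (pext (a + 1) t) := by
            rw [hT', List.map_map]
            apply List.map_congr_left
            intro x hx
            simp only [Function.comp_apply]
            rcases lt_trichotomy x a with h | h | h
            · rw [if_pos h, pext, pext, if_pos h, if_pos (by omega)]
            · subst h
              rw [if_neg (by omega), pext, pext, if_neg (by omega), if_pos (by omega), ht,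
                show x + i - x = g.length by omega]
              simp
            · have hxT := hT.lt x hx
              rw [if_neg (by omega), pext, pext, if_neg (by omega), if_neg (by omega), ht,
                List.getD_append_right _ _ _ _ (by omega),
                show x + i - a - g.length = (x - (a + 1)) + 1 by omega, List.getD_cons_succ,
                List.getD_eq_getElem _ _ (by omega), List.getD_eq_getElem _ _ (by omega)]
          rw [h1, h2]
          simp

/-- Step 2: make the color of a prefix depend only on its length. -/
theorem pgr_step2 (a : ℕ) (κ : Type) [Finite κ] (p : ℕ) :
    ∃ M, ∀ c : List ℕ → κ, ∃ F, PWord a F (a + p) ∧ F.length = M ∧ ∃ d : ℕ → κ,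
      ∀ f e, PWord a f e → f.length = p →
        c (ppre a (F.map (pext a f))) = d (ppre a f).length := by
  induction p with
  | zero =>
    refine ⟨0, fun c => ⟨[], by simp [PWord], by simp, fun _ => c [], ?_⟩⟩
    intro f e _ _
    simp [ppre]
  | succ p IH =>
    obtain ⟨M, hM⟩ := IH
    obtain ⟨N, hN⟩ := pword_hj a (M + 1) κ
    refine ⟨N, fun c => ?_⟩
    obtain ⟨G, hG, hGN, j, hj⟩ := hN c
    obtain ⟨F, hF, hFM, d, hd⟩ := hM fun g => c (ppre a (G.map (pext a g)))
    set F' := F ++ [a + p] with hF'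
    have hF'W : PWord a F' (a + (p + 1)) := hF.append (by simp [PWord, add_assoc])
    have hF'l : F'.length = M + 1 := by simp [hF', hFM]
    have hGF : PWord a G (a + F'.length) := by rw [hF'l]; exact hG
    refine ⟨G.map (pext a F'), pword_comp hGF hF'W, by simp [hGN],
      fun l => if l = p + 1 then j else d l, ?_⟩
    intro f e hf hfp
    rw [pext_assoc hGF]
    have hW' : PWord a (F'.map (pext a f)) e := pword_comp (by rw [hfp]; exact hF'W) hf
    rcases hf.le.eq_or_lt with rfl | hlt
    · have h1 : ∀ x ∈ G.map (pext a (F'.map (pext a f))), x < a :=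
        (pword_comp (by simpa using hGF) hW').lt
      rw [ppre_all h1, ppre_all hf.lt]
      beta_reduce
      rw [if_pos hfp]
      exact hj _ hW' (by simp [hF'l])
    · obtain ⟨t, ht, htW⟩ := pword_decomp hf hlt
      have hlen := congrArg List.length ht
      simp only [List.length_append, List.length_cons] at hlen
      beta_reduce
      rw [if_neg (by omega)]
      obtain ⟨f', y, rfl⟩ : ∃ f' y, f = f' ++ [y] := by
        rcases List.eq_nil_or_concat f with h | ⟨f', y, h⟩
        · simp [h] at hfp
        · exact ⟨f', y, by simpa using h⟩
      have hf'p : f'.length = p := by simpa using hfp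
      obtain ⟨e', hf'⟩ : ∃ e', PWord a f' e' := pword_left hf
      have hFsub : F'.map (pext a (f' ++ [y])) = F.map (pext a f') ++ [y] := by
        rw [hF', List.map_append]
        congr 1
        · apply List.map_congr_left
          intro x hx
          have := hF.lt x hx
          unfold pext
          split_ifs with h
          · rfl
          · rw [List.getD_append _ _ _ _ (by omega)]
        · simp [pext, hf'p]
      have hd' := hd f' e' hf' hf'p
      have hFf : PWord a (F.map (pext a f')) e' := pword_comp (by rw [hf'p]; exact hF) hf'
      have hpp : ∀ (u : List ℕ) (y e : ℕ), PWord a (u ++ [y]) e → a < e →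
          ppre a (u ++ [y]) = ppre a u := by
        intro u y e hu hae
        obtain ⟨t, ht, -⟩ := pword_decomp hu hae
        set g := ppre a (u ++ [y]) with hg
        have hglt : ∀ x ∈ g, x < a := ppre_lt
        rcases List.eq_nil_or_concat t with h | ⟨t', z, h⟩
        · subst h
          have := (List.append_inj' ht (by simp)).1
          rw [this, ppre_all hglt]
        · subst h
          have : u ++ [y] = (g ++ a :: t') ++ [z] := by rw [ht]; simp
          have := (List.append_inj' this (by simp)).1
          rw [this, ppre_append hglt]
      rw [hpp _ _ _ hf hlt, ← hd', ppre_comp hG hW']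
      rw [hFsub] at hW' ⊢
      have hfin := hpp _ _ _ hW' hlt
      rw [hfin]

/-- Step 3: pigeonhole on lengths. -/
theorem pgr_step3 {a : ℕ} (ha : 0 < a) (k : ℕ) (κ : Type) [Finite κ] (m : ℕ) :
    ∃ p, ∀ d : ℕ → κ, ∃ F, PWord a F (a + m) ∧ F.length = p ∧ ∃ j,
      ∀ f, PWord a f (a + (k + 1)) → f.length = m →
        d (ppre a (F.map (pext a f))).length = j := by
  classical
  have := Fintype.ofFinite κ
  refine ⟨Fintype.card κ * m, fun d => ?_⟩
  obtain ⟨j, -, hj⟩ := Finset.exists_le_card_fiber_of_mul_le_card_of_maps_to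
    (s := Finset.range (Fintype.card κ * m)) (t := (Finset.univ : Finset κ)) (f := d) (n := m)
    (by simp) ⟨d 0, by simp⟩ (by simp)
  obtain ⟨I, hI, hIm⟩ := Finset.exists_subset_card_eq hj
  set p := Fintype.card κ * m
  let φ : ℕ → ℕ := fun i => if i ∈ I then a + (I.filter (· < i)).card else 0
  have hW : ∀ q, PWord a ((List.range q).map φ) (a + (I.filter (· < q)).card) := by
    intro q
    induction q with
    | zero => simp [PWord]
    | succ q ih =>
      rw [List.range_succ, List.map_append]
      refine ih.append ?_
      have hcard : (I.filter (· < q + 1)).card =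
          (I.filter (· < q)).card + if q ∈ I then 1 else 0 := by
        split_ifs with h
        · rw [← Finset.card_insert_of_notMem (a := q) (by simp)]
          congr 1
          ext x
          simp only [Finset.mem_filter, Finset.mem_insert]
          constructor
          · rintro ⟨h1, h2⟩
            rcases Nat.lt_succ_iff_lt_or_eq.1 h2 with h3 | h3
            · exact Or.inr ⟨h1, h3⟩
            · exact Or.inl h3
          · rintro (rfl | ⟨h1, h2⟩)
            · exact ⟨h, by omega⟩
            · exact ⟨h1, by omega⟩
        · rw [add_zero]
          congr 1
          apply Finset.filter_congr
          intro x hx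
          have : x ≠ q := fun hh => h (hh ▸ hx)
          omega
      rw [hcard]
      by_cases h : q ∈ I
      · simp [PWord, φ, h, add_assoc]
      · simp [PWord, φ, h, ha]
  have hIp : I.filter (· < p) = I := by
    apply Finset.filter_true_of_mem
    intro x hx
    have := hI hx
    simp only [Finset.mem_filter, Finset.mem_range] at this
    exact this.1
  have hF := hW p
  rw [hIp, hIm] at hF
  refine ⟨(List.range p).map φ, hF, by simp, j, ?_⟩
  intro f hf hfm
  have hW2 := pword_comp (by rw [hfm]; exact hF) hf
  obtain ⟨t, ht, -⟩ := pword_decomp hW2 (by omega)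
  set L := ((List.range p).map φ).map (pext a f) with hL
  set g := ppre a L with hg
  have hlen : g.length < p := by
    have := congrArg List.length ht
    simp [hL] at this
    omega
  have hval : L[g.length]? = some a := by
    rw [ht]; simp
  have hmem : g.length ∈ I := by
    by_contra hn
    rw [hL] at hval
    simp [hlen, φ, hn, pext, ha] at hval
    omega
  have := hI hmem
  simp only [Finset.mem_filter] at this
  exact this.2

theorem pgr {a : ℕ} (ha : 0 < a) (k : ℕ) : PGR a k := by
  induction k generalizing a with
  | zero => intro m κ _; exact pword_hj a m κ
  | succ k ih =>
    intro m κ _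
    obtain ⟨p, hp⟩ := pgr_step3 ha k κ m
    obtain ⟨M, hM⟩ := pgr_step2 a κ p
    obtain ⟨n, hn⟩ := pgr_step1 (ih (a := a + 1) (by omega)) κ M M
    refine ⟨n, fun c => ?_⟩
    obtain ⟨F1, hF1, hF1n, c', h1⟩ := hn c
    obtain ⟨F2, hF2, hF2n, d, h2⟩ := hM c'
    obtain ⟨F3, hF3, hF3n, j, h3⟩ := hp d
    have h23 : PWord a (F2.map (pext a F3)) (a + m) := pword_comp (by rw [hF3n]; exact hF2) hF3
    refine ⟨F1.map (pext a (F2.map (pext a F3))), pword_comp (by simpa [hF2n] using hF1) h23,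
      by simp [hF1n], j, ?_⟩
    intro f hf hfm
    have hW3 := pword_comp (by rw [hfm]; exact hF3) hf
    have hW2 := pword_comp (a := a) (F := F2) (by simpa [hF3n] using hF2) hW3
    rw [pext_assoc (by simpa [hF2n] using hF1), pext_assoc (by simpa [hF3n] using hF2)]
    obtain ⟨t, ht, -⟩ := pword_decomp hW2 (by omega)
    have hlen := congrArg List.length ht
    simp only [List.length_append, List.length_cons, List.length_map, hF2n] at hlen
    rw [h1 _ hW2 (by simp [hF2n]) (by omega), h2 _ _ hW3 (by simp [hF3n]), h3 f hf hfm]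

theorem pword_char {s e : ℕ} {L : List ℕ} : PWord s L e ↔ s ≤ e ∧ (∀ x ∈ L, x < e) ∧
    (∀ b, s ≤ b → b < e → b ∈ L) ∧
    ∀ i (h : i < L.length) b, s ≤ b → b < L[i] → ∃ i', ∃ h' : i' < i, L[i'] = b := by
  induction L generalizing s with
  | nil =>
    simp only [PWord]
    constructor
    · rintro rfl; simp
    · rintro ⟨h1, -, h2, -⟩
      by_contra hne
      exact absurd (h2 s le_rfl (by omega)) (by simp)
  | cons x L ih =>
    simp only [PWord, ih]
    constructor
    · rintro (⟨hx, h1, h2, h3, h4⟩ | ⟨hx, h1, h2, h3, h4⟩)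
      · refine ⟨h1, ?_, ?_, ?_⟩
        · intro y hy
          rcases List.mem_cons.1 hy with rfl | hy
          · omega
          · exact h2 y hy
        · intro b hb hbe
          exact List.mem_cons_of_mem _ (h3 b hb hbe)
        · intro i h b hb hbi
          cases i with
          | zero => simp at hbi; omega
          | succ i =>
            obtain ⟨i', h', hh⟩ := h4 i (by simpa using h) b hb (by simpa using hbi)
            exact ⟨i' + 1, by omega, by simpa using hh⟩
      · refine ⟨by omega, ?_, ?_, ?_⟩
        · intro y hy
          rcases List.mem_cons.1 hy with rfl | hy
          · omega
          · exact h2 y hy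
        · intro b hb hbe
          rcases hb.eq_or_lt with rfl | hb
          · simp [hx]
          · exact List.mem_cons_of_mem _ (h3 b hb hbe)
        · intro i h b hb hbi
          cases i with
          | zero => simp at hbi; omega
          | succ i =>
            rcases hb.eq_or_lt with rfl | hb
            · exact ⟨0, by omega, by simp [hx]⟩
            · obtain ⟨i', h', hh⟩ := h4 i (by simpa using h) b hb (by simpa using hbi)
              exact ⟨i' + 1, by omega, by simpa using hh⟩
    · rintro ⟨h1, h2, h3, h4⟩
      have hxs : x ≤ s := by
        by_contra hlt
        obtain ⟨i', h', -⟩ := h4 0 (by simp) s le_rfl (by simpa using hlt)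
        omega
      rcases hxs.eq_or_lt with rfl | hxs
      · right
        refine ⟨rfl, h2 x (by simp), fun y hy => h2 y (by simp [hy]), ?_, ?_⟩
        · intro b hb hbe
          rcases List.mem_cons.1 (h3 b (by omega) hbe) with rfl | h
          · omega
          · exact h
        · intro i h b hb hbi
          obtain ⟨i', h', hh⟩ := h4 (i + 1) (by simpa using h) b (by omega) (by simpa using hbi)
          cases i' with
          | zero => simp at hh; omega
          | succ i' => exact ⟨i', by omega, by simpa using hh⟩
      · left
        refine ⟨hxs, h1, fun y hy => h2 y (by simp [hy]), ?_, ?_⟩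
        · intro b hb hbe
          rcases List.mem_cons.1 (h3 b (by omega) hbe) with rfl | h
          · omega
          · exact h
        · intro i h b hb hbi
          obtain ⟨i', h', hh⟩ := h4 (i + 1) (by simpa using h) b (by omega) (by simpa using hbi)
          cases i' with
          | zero => simp at hh; omega
          | succ i' => exact ⟨i', by omega, by simpa using hh⟩

theorem rigid_iff {α β : Type*} [LinearOrder α] [Finite α] [LinearOrder β] {f : α → β} :
    IsRigidSurjection f ↔ Function.Surjective f ∧ ∀ a, ∀ b < f a, ∃ a' < a, f a' = b := by
  unfold IsRigidSurjection
  refine and_congr_right fun hs => ⟨fun h a b hb => ?_, fun h b₀ b₁ hb a₀ a₁ h0 h1 => ?_⟩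
  · have hmin : ∀ b, ∃ a, IsLeast {a | f a = b} a := fun b => by
      obtain ⟨a, ha, hm⟩ := Set.exists_min_image {a | f a = b} id (Set.toFinite _) (hs b)
      exact ⟨a, ha, hm⟩
    obtain ⟨a0, h0⟩ := hmin b
    obtain ⟨a1, h1⟩ := hmin (f a)
    exact ⟨a0, (h hb h0 h1).trans_le (h1.2 rfl), h0.1⟩
  · obtain ⟨a', ha', hf⟩ := h a₁ b₀ (by rw [h1.1]; exact hb)
    exact (h0.2 hf).trans_lt ha'

theorem rigid_of_pword {n e : ℕ} {L : List ℕ} (h : PWord 0 L e) (hn : L.length = n) :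
    IsRigidSurjection (fun i : Fin n => (⟨L[i], h.lt _ (List.getElem_mem _)⟩ : Fin e)) := by
  subst hn
  obtain ⟨-, h2, h3, h4⟩ := pword_char.1 h
  refine rigid_iff.2 ⟨fun b => ?_, fun i b hb => ?_⟩
  · obtain ⟨i, hi, hh⟩ := List.getElem_of_mem (h3 b (by omega) b.2)
    exact ⟨⟨i, hi⟩, Fin.ext hh⟩
  · obtain ⟨i', h', hh⟩ := h4 i i.2 b (by omega) hb
    exact ⟨⟨i', by omega⟩, h', Fin.ext hh⟩

theorem pword_of_rigid {n e : ℕ} {f : Fin n → Fin e} (h : IsRigidSurjection f) :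
    PWord 0 (List.ofFn fun i => (f i : ℕ)) e := by
  obtain ⟨h1, h2⟩ := rigid_iff.1 h
  refine pword_char.2 ⟨by omega, ?_, ?_, ?_⟩
  · intro x hx
    obtain ⟨i, rfl⟩ := List.mem_ofFn.1 hx
    exact (f i).2
  · intro b _ hb
    obtain ⟨i, hi⟩ := h1 ⟨b, hb⟩
    exact List.mem_ofFn.2 ⟨i, by simp [hi]⟩
  · intro i hi b _ hb
    simp only [List.getElem_ofFn] at hb
    obtain ⟨i', h', hh⟩ := h2 _ ⟨b, by omega⟩ (Fin.lt_def.2 hb)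
    exact ⟨i', h', by simp [hh]⟩

theorem rigid_fin (k m r : ℕ) (hr : 0 < r) :
    ∃ n : ℕ, ∀ c : {f : Fin n → Fin (k + 1) // IsRigidSurjection f} → Fin r,
      ∃ (γ : Fin n → Fin (m + 1)) (_ : IsRigidSurjection γ) (j : Fin r),
        ∀ (σ : Fin (m + 1) → Fin (k + 1)) (_ : IsRigidSurjection σ)
          (h : IsRigidSurjection (σ ∘ γ)), c ⟨σ ∘ γ, h⟩ = j := by
  classical
  obtain ⟨n, hn⟩ := pgr (a := 1) one_pos k m (Fin r)
  refine ⟨n + 1, fun c => ?_⟩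
  obtain ⟨F, hF, hFn, j, hj⟩ := hn fun L =>
    if h : PWord 0 (0 :: L) (k + 1) ∧ (0 :: L).length = n + 1 then
      c ⟨_, rigid_of_pword h.1 h.2⟩ else ⟨0, hr⟩
  have hF0 : PWord 0 (0 :: F) (m + 1) := by
    simp only [PWord]
    right
    exact ⟨trivial, by rwa [add_comm m 1]⟩
  refine ⟨_, rigid_of_pword hF0 (by simp [hFn]), j, ?_⟩
  intro σ hσ h
  have hσW := pword_of_rigid hσ
  rw [List.ofFn_succ] at hσW
  simp only [PWord, not_lt_zero, false_and, false_or] at hσW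
  obtain ⟨hσ0, hσW⟩ := hσW
  set f := List.ofFn fun i : Fin m => (σ i.succ : ℕ) with hf
  have hfl : f.length = m := by simp [hf]
  have hres := hj f (by rwa [add_comm 1 k]) hfl
  have hcomp : PWord 1 (F.map (pext 1 f)) (k + 1) := pword_comp (by rw [hfl]; exact hF) hσW
  rw [dif_pos ⟨by simp only [PWord]; right; exact ⟨trivial, hcomp⟩, by simp [hFn]⟩] at hres
  rw [← hres]
  congr 2
  funext i
  apply Fin.ext
  refine Fin.cases ?_ (fun i => ?_) i
  · simpa using hσ0
  · have hi : (i : ℕ) < F.length := by rw [hFn]; exact i.2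
    simp only [Function.comp_apply, Fin.getElem_fin, Fin.val_succ, List.getElem_cons_succ,
      List.getElem_map]
    have key : ∀ (y : ℕ) (hy : y < m + 1), (σ ⟨y, hy⟩ : ℕ) = pext 1 f y := by
      intro y hy
      cases y with
      | zero => simpa [pext] using hσ0
      | succ y =>
        have : y < m := by omega
        simp [pext, hf, this]
    exact key _ _

theorem rigid_orderIso {α β : Type*} [LinearOrder α] [LinearOrder β] [Finite α] (e : α ≃o β) :
    IsRigidSurjection e :=
  rigid_iff.2 ⟨e.surjective, fun a b hb => ⟨e.symm b, by simpa using e.symm.strictMono hb, by simp⟩⟩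

theorem rigid_comp {α β δ : Type*} [LinearOrder α] [LinearOrder β] [LinearOrder δ] [Finite α]
    [Finite β] {f : α → β} {g : β → δ} (hg : IsRigidSurjection g) (hf : IsRigidSurjection f) :
    IsRigidSurjection (g ∘ f) := by
  obtain ⟨hg1, hg2⟩ := rigid_iff.1 hg
  obtain ⟨hf1, hf2⟩ := rigid_iff.1 hf
  refine rigid_iff.2 ⟨hg1.comp hf1, fun a b hb => ?_⟩
  obtain ⟨b', hb', rfl⟩ := hg2 _ _ hb
  obtain ⟨a₁, ha₁, rfl⟩ := hf2 _ _ hb'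
  exact ⟨a₁, ha₁, rfl⟩

/-- **Dual Ramsey Theorem** (Graham–Rothschild, rigid surjection form). -/
theorem dual_ramsey_rigid_surjections (R S : Type*) [Fintype R] [LinearOrder R]
    [Fintype S] [LinearOrder S] (r : ℕ) :
    ∃ n : ℕ, ∀ c : {f : Fin n → R // IsRigidSurjection f} → Fin r,
      ∃ (γ : Fin n → S) (_ : IsRigidSurjection γ) (j : Fin r),
        ∀ (σ : S → R) (_ : IsRigidSurjection σ) (h : IsRigidSurjection (σ ∘ γ)),
          c ⟨σ ∘ γ, h⟩ = j := by
  let eR := Fintype.orderIsoFinOfCardEq R rfl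
  let eS := Fintype.orderIsoFinOfCardEq S rfl
  rcases Nat.eq_zero_or_pos r with rfl | hr
  · exact ⟨Fintype.card R, fun c => (c ⟨eR, rigid_orderIso eR⟩).elim0⟩
  by_cases hσ : ∃ σ : S → R, IsRigidSurjection σ
  swap
  · exact ⟨Fintype.card S, fun c => ⟨eS, rigid_orderIso eS, ⟨0, hr⟩, fun σ h => absurd ⟨σ, h⟩ hσ⟩⟩
  obtain ⟨σ₀, hσ₀⟩ := hσ
  cases isEmpty_or_nonempty S with
  | inl hS =>
    refine ⟨Fintype.card S, fun c => ⟨eS, rigid_orderIso eS,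
      c ⟨σ₀ ∘ eS, rigid_comp hσ₀ (rigid_orderIso eS)⟩, fun σ _ h => ?_⟩⟩
    obtain rfl : σ = σ₀ := Subsingleton.elim _ _
    rfl
  | inr hS =>
    have hR : Nonempty R := hS.map σ₀
    obtain ⟨k, hk⟩ := Nat.exists_eq_succ_of_ne_zero (Fintype.card_ne_zero (α := R))
    obtain ⟨m, hm⟩ := Nat.exists_eq_succ_of_ne_zero (Fintype.card_ne_zero (α := S))
    let eR := Fintype.orderIsoFinOfCardEq R hk
    let eS := Fintype.orderIsoFinOfCardEq S hm
    obtain ⟨n, hn⟩ := rigid_fin k m r hr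
    refine ⟨n, fun c => ?_⟩
    obtain ⟨γ, hγ, j, hj⟩ := hn fun f => c ⟨eR ∘ f.1, rigid_comp (rigid_orderIso eR) f.2⟩
    refine ⟨eS ∘ γ, rigid_comp (rigid_orderIso eS) hγ, j, fun σ hσ h => ?_⟩
    have hσ' : IsRigidSurjection (eR.symm ∘ σ ∘ eS) :=
      rigid_comp (rigid_orderIso eR.symm) (rigid_comp hσ (rigid_orderIso eS))
    rw [← hj _ hσ' (rigid_comp hσ' hγ)]
    congr 2
    funext i
    simp
end

section
/- For every d, m, r ∈ ℕ and every ε > 0 there exists n ∈ ℕ such that for every coloring c of the set of linear isometric embeddings of ℓ∞^d(ℂ) into ℓ∞^n(ℂ) with r colors, there exist a linear isometric embedding γ : ℓ∞^m(ℂ) → ℓ∞^n(ℂ) and a color j such that for every linear isometric embedding η : ℓ∞^d(ℂ) → ℓ∞^m(ℂ) there is a linear isometric embedding ξ : ℓ∞^d(ℂ) → ℓ∞^n(ℂ) with c(ξ) = j and ‖γ ∘ η − ξ‖ ≤ ε (operator norm). -/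
/-- `ℓ∞ⁿ(ℂ)`: the space `ℂⁿ` with the supremum norm. -/
abbrev LinfC (n : ℕ) : Type := PiLp ⊤ (fun _ : Fin n => ℂ)

namespace ARP

/-- Words with `k` new letters `a, a+1, ...`, first occurring in order, over the alphabet `[0,a)`. -/
inductive RG : ℕ → ℕ → List ℕ → Prop
  | nil (a : ℕ) : RG a 0 []
  | old {a k x : ℕ} {w : List ℕ} : x < a → RG a k w → RG a k (x :: w)
  | new {a k : ℕ} {w : List ℕ} : RG (a+1) k w → RG a (k+1) (a :: w)

/-- Substitute the `i`-th entry of `f` for the letter `a+i`. -/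
def sub (a : ℕ) (f : List ℕ) (x : ℕ) : ℕ := if x < a then x else f.getD (x-a) 0

/-- Shift letters `≥ a` by one. -/
def sh (a x : ℕ) : ℕ := if x < a then x else x+1

/-- The part of `σ` before the parameter number `|u|`, with `u` substituted. -/
def pre (a : ℕ) (σ u : List ℕ) : List ℕ :=
  (σ.takeWhile (fun x => decide (x < a + u.length))).map (sub a u)

theorem RG.lt {a k : ℕ} {w : List ℕ} (h : RG a k w) : ∀ x ∈ w, x < a + k := by
  induction h with
  | nil => simp
  | old hx h ih => 
    intro y hy
    rcases List.mem_cons.1 hy with rfl | hy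
    · omega
    · exact ih y hy
  | new h ih => 
    intro y hy
    rcases List.mem_cons.1 hy with rfl | hy
    · omega
    · have := ih y hy
      omega

theorem RG.decomp {a k : ℕ} {w : List ℕ} (h : RG a k w) : ∀ i < k, ∃ s t, w = s ++ (a+i) :: t ∧
    (∀ x ∈ s, x < a + i) ∧ RG (a+i+1) (k-i-1) t := by
  induction h with
  | nil => simp
  | @old a k x w hx h ih =>
    intro i hi
    obtain ⟨s, t, rfl, hs, ht⟩ := ih i hi
    refine ⟨x :: s, t, rfl, ?_, ht⟩
    intro y hy
    rcases List.mem_cons.1 hy with rfl | hy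
    · omega
    · exact hs y hy
  | @new a k w h ih =>
    intro i hi
    rcases i with _ | i
    · exact ⟨[], w, rfl, by simp, h⟩
    · obtain ⟨s, t, rfl, hs, ht⟩ := ih i (by omega)
      refine ⟨a :: s, t, by simp; omega, ?_, ?_⟩
      · intro y hy
        rcases List.mem_cons.1 hy with rfl | hy
        · omega
        · have := hs y hy
          omega
      · convert ht using 1 <;> omega

theorem RG.mem {a k : ℕ} {w : List ℕ} (h : RG a k w) (i : ℕ) (hi : i < k) : a + i ∈ w := by
  obtain ⟨s, t, rfl, _⟩ := h.decomp i hi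
  simp

theorem RG.split {a k : ℕ} {u v : List ℕ} (h : RG a (k+1) (u ++ a :: v)) (hu : ∀ x ∈ u, x < a) :
    RG (a+1) k v := by
  induction u with
  | nil =>
    cases h with
    | old hx h => exact absurd hx (lt_irrefl _)
    | new h => exact h
  | cons y u ih =>
    cases h with
    | old hx h => exact ih h (fun x hx => hu x (List.mem_cons_of_mem _ hx))
    | new h => exact absurd (hu a (by simp)) (lt_irrefl _)

theorem RG.append {a k l : ℕ} {u v : List ℕ} (h : RG a k u) (h' : RG (a+k) l v) :
    RG a (k+l) (u ++ v) := by
  induction h with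
  | nil => simpa using h'
  | old hx h ih => exact RG.old hx (ih h')
  | @new a k w h ih =>
    have := ih (by convert h' using 1; omega)
    have h2 := RG.new this
    rw [List.cons_append]
    convert h2 using 1; omega

theorem RG.const {a : ℕ} {w : List ℕ} (h : ∀ x ∈ w, x < a) : RG a 0 w := by
  induction w with
  | nil => exact RG.nil a
  | cons x w ih => exact RG.old (h x (by simp)) (ih fun y hy => h y (by simp [hy]))

theorem RG.block {a : ℕ} {w : List ℕ} (h : ∀ x ∈ w, x ≤ a) (h' : a ∈ w) : RG a 1 w := by
  induction w with
  | nil => simp at h'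
  | cons x w ih =>
    rcases (h x (by simp)).lt_or_eq with hx | rfl
    · refine RG.old hx (ih (fun y hy => h y (by simp [hy])) ?_)
      rcases List.mem_cons.1 h' with rfl | h'
      · omega
      · exact h'
    · exact RG.new (RG.const fun y hy => Nat.lt_succ_of_le (h y (by simp [hy])))

theorem RG.comp {a k b n : ℕ} {σ : List ℕ} (h : RG a n σ) : ∀ (env f : List ℕ), f.length = n →
    env.length = a → (∀ x ∈ env, x < b) → RG b k f →
    RG b k (σ.map fun x => (env ++ f).getD x 0) := by
  induction h generalizing b k with
  | nil a =>
    intro env f hf _ _ hr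
    rw [List.length_eq_zero_iff] at hf
    subst hf
    simpa using hr
  | @old a n x w hx h ih =>
    intro env f hf he hb hr
    refine RG.old ?_ (ih env f hf he hb hr)
    show (env ++ f).getD x 0 < b
    rw [List.getD_append _ _ _ _ (by omega), List.getD_eq_getElem _ _ (by omega)]
    exact hb _ (List.getElem_mem _)
  | @new a n w h ih =>
    intro env f hf he hb hr
    rcases f with _ | ⟨y, f⟩
    · simp at hf
    have key : (env ++ y :: f).getD a 0 = y := by
      rw [List.getD_append_right _ _ _ _ (by omega)]
      simp [he]
    have e : env ++ y :: f = (env ++ [y]) ++ f := by simp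
    rw [List.map_cons, key, e]
    cases hr with
    | old hy hr =>
      refine RG.old hy (ih (env ++ [y]) f (by simpa using hf) (by simp [he]) ?_ hr)
      intro x hx
      rcases List.mem_append.1 hx with hx | hx
      · exact hb x hx
      · simp at hx; omega
    | new hr =>
      refine RG.new (ih (env ++ [_]) f (by simpa using hf) (by simp [he]) ?_ hr)
      intro x hx
      rcases List.mem_append.1 hx with hx | hx
      · exact (hb x hx).trans (Nat.lt_succ_self _)
      · simp at hx; omega

theorem sub_eq (a : ℕ) (f : List ℕ) (x : ℕ) : (List.range a ++ f).getD x 0 = sub a f x := by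
  unfold sub
  split_ifs with h
  · rw [List.getD_append _ _ _ _ (by simpa using h), List.getD_eq_getElem _ _ (by simpa using h)]
    simp
  · rw [List.getD_append_right _ _ _ _ (by simpa using h)]
    simp

theorem RG.sub {a k n : ℕ} {σ f : List ℕ} (h : RG a n σ) (hn : f.length = n) (hf : RG a k f) :
    RG a k (σ.map (sub a f)) := by
  have := RG.comp h (List.range a) f hn (by simp) (by simp) hf
  simpa only [sub_eq] using this

theorem RG.sh {a b k : ℕ} {w : List ℕ} (h : RG b k w) (hab : a ≤ b) :
    RG (b+1) k (w.map (sh a)) := by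
  induction h with
  | nil => exact RG.nil _
  | @old b k x w hx h ih =>
    refine RG.old ?_ (ih hab)
    unfold ARP.sh; split_ifs <;> omega
  | @new b k w h ih =>
    have e : ARP.sh a b = b+1 := by unfold ARP.sh; split_ifs <;> omega
    rw [List.map_cons, e]
    exact RG.new (ih (by omega))

theorem sub_sub' {a x : ℕ} {τ f : List ℕ} (h : x < a + τ.length) :
    sub a f (sub a τ x) = sub a (τ.map (sub a f)) x := by
  unfold ARP.sub
  by_cases hx : x < a
  · simp [hx]
  · simp only [hx, if_false]
    have h1 : x - a < τ.length := by omega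
    simp [List.getElem?_eq_getElem h1]

theorem map_sub_sub {a n : ℕ} {σ τ f : List ℕ} (h : RG a n σ) (hn : τ.length = n) :
    (σ.map (sub a τ)).map (sub a f) = σ.map (sub a (τ.map (sub a f))) := by
  rw [List.map_map]
  refine List.map_congr_left fun x hx => sub_sub' ?_
  rw [hn]; exact h.lt x hx

theorem sub_cons_sh (a y x : ℕ) (g : List ℕ) : sub a (y :: g) (sh a x) = sub a g x := by
  unfold ARP.sub ARP.sh
  by_cases hx : x < a
  · simp [hx]
  · have e : x + 1 - a = (x - a) + 1 := by omega
    have : ¬ (x + 1 < a) := by omega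
    simp [hx, this, e]

theorem sub_succ (a : ℕ) (v : List ℕ) : sub (a+1) v = sub a (a :: v) := by
  funext x
  unfold ARP.sub
  rcases lt_trichotomy x a with h | rfl | h
  · simp [h, Nat.lt_succ_of_lt h]
  · simp
  · have e : x - a = (x - (a+1)) + 1 := by omega
    have h1 : ¬ x < a := by omega
    have h2 : ¬ x < a + 1 := by omega
    simp only [h1, h2, if_false]
    rw [e, List.getD_cons_succ]

theorem sub_append_left {a x : ℕ} {u v : List ℕ} (h : x < a + u.length) :
    sub a (u ++ v) x = sub a u x := by
  unfold ARP.sub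
  split_ifs
  · rfl
  · rw [List.getD_append _ _ _ _ (by omega)]

theorem sub_lt {a x : ℕ} {u : List ℕ} (hu : ∀ y ∈ u, y < a) (h : x < a + u.length) :
    sub a u x < a := by
  unfold ARP.sub
  split_ifs with h'
  · exact h'
  · rw [List.getD_eq_getElem _ _ (by omega)]
    exact hu _ (List.getElem_mem _)

theorem pre_lt {a : ℕ} {σ u : List ℕ} (hu : ∀ y ∈ u, y < a) : ∀ x ∈ pre a σ u, x < a := by
  intro x hx
  unfold pre at hx
  obtain ⟨y, hy, rfl⟩ := List.mem_map.1 hx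
  have := List.mem_takeWhile_imp hy
  exact sub_lt hu (by simpa using this)

theorem pre_length {a : ℕ} {σ u : List ℕ} : (pre a σ u).length ≤ σ.length := by
  unfold pre
  rw [List.length_map]
  exact (List.takeWhile_prefix _).length_le

theorem map_eq_pre {a n : ℕ} {σ u v : List ℕ} (h : RG a n σ) (hn : u.length < n) :
    ∃ w, σ.map (sub a (u ++ a :: v)) = pre a σ u ++ a :: w := by
  obtain ⟨s, t, rfl, hs, -⟩ := h.decomp u.length hn
  refine ⟨t.map (sub a (u ++ a :: v)), ?_⟩
  unfold pre
  rw [List.takeWhile_append_of_pos (by simpa using hs), List.takeWhile_cons_of_neg (by simp)]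
  rw [List.map_append, List.map_cons, List.append_nil]
  congr 1
  · exact List.map_congr_left fun x hx => sub_append_left (hs x hx)
  · congr 1
    unfold ARP.sub
    simp

theorem line (a : ℕ) (κ : Type) [Finite κ] : ∃ n, ∀ C : List ℕ → κ, ∃ W, RG a 1 W ∧
    W.length = n ∧ ∃ c, ∀ x < a, C (W.map (sub a [x])) = c := by
  obtain ⟨ι, _, hι⟩ := Combinatorics.Line.exists_mono_in_high_dimension (Fin a) κ
  let e := Fintype.equivFin ι
  refine ⟨Fintype.card ι, fun C => ?_⟩
  obtain ⟨l, c, hl⟩ := hι (fun v => C (List.ofFn fun i => (v (e.symm i)).val))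
  let g : Fin (Fintype.card ι) → ℕ := fun i => ((l.idxFun (e.symm i)).map Fin.val).getD a
  refine ⟨List.ofFn g, RG.block ?_ ?_, by simp, c, fun x hx => ?_⟩
  · intro x hx
    obtain ⟨i, rfl⟩ := (List.mem_ofFn' _ _).1 hx
    dsimp only [g]
    cases l.idxFun (e.symm i) with
    | none => simp
    | some y => simpa using y.2.le
  · obtain ⟨i, hi⟩ := l.proper
    exact (List.mem_ofFn' _ _).2 ⟨e i, by simp [g, hi]⟩
  · rw [← hl ⟨x, hx⟩, List.map_ofFn]
    congr 2
    funext i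
    simp only [g, Function.comp, Combinatorics.Line.coe_apply]
    cases l.idxFun (e.symm i) with
    | none => simp [ARP.sub]
    | some y => simp [ARP.sub]

theorem finite_words (a N : ℕ) : {v : List ℕ | v.length ≤ N ∧ ∀ x ∈ v, x < a}.Finite := by
  refine ((List.finite_length_le (Fin a) N).image (List.map Fin.val)).subset ?_
  rintro v ⟨h1, h2⟩
  lift v to List (Fin a) using h2
  exact ⟨v, by simpa using h1, rfl⟩

theorem hj (a M : ℕ) (κ : Type) [Finite κ] : ∃ n, ∀ χ : List ℕ → κ, ∃ σ, RG a M σ ∧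
    σ.length = n ∧ ∃ g : ℕ → κ, ∀ u : List ℕ, (∀ x ∈ u, x < a) → u.length ≤ M →
      χ (pre a σ u) = g u.length := by
  induction M with
  | zero =>
    refine ⟨0, fun χ => ⟨[], RG.nil a, rfl, fun _ => χ [], fun u _ _ => by simp [pre]⟩⟩
  | succ M ih =>
    obtain ⟨N, hN⟩ := ih
    have := (finite_words a N).to_subtype
    obtain ⟨n, hn⟩ := line a ({v : List ℕ | v.length ≤ N ∧ ∀ x ∈ v, x < a} → κ)
    refine ⟨n + N, fun χ => ?_⟩
    obtain ⟨W, hW, hWn, c, hc⟩ := hn (fun u v => χ (u ++ v.1))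
    classical
    obtain ⟨σ, hσ, hσN, g, hg⟩ := hN (fun v => if h : v ∈ {v : List ℕ | v.length ≤ N ∧ ∀ x ∈ v, x < a} then c ⟨v, h⟩ else χ [])
    refine ⟨W ++ σ.map (sh a), ?_, by simp [hWn, hσN],
      fun i => Nat.casesOn i (χ (pre a (W ++ σ.map (sh a)) [])) g, ?_⟩
    · have := hW.append (hσ.sh le_rfl)
      rwa [add_comm 1 M] at this
    intro u hu hl
    rcases u with _ | ⟨x, u⟩
    · rfl
    have hx : x < a := hu x (by simp)
    have hu' : ∀ y ∈ u, y < a := fun y hy => hu y (by simp [hy])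
    have e : pre a (W ++ σ.map (sh a)) (x :: u) = W.map (sub a [x]) ++ pre a σ u := by
      unfold pre
      rw [List.takeWhile_append_of_pos, List.takeWhile_map, List.map_append]
      · congr 1
        · refine List.map_congr_left fun y hy => ?_
          have := hW.lt y hy
          exact sub_append_left (u := [x]) (v := u) (by simpa using this)
        · rw [List.map_map]
          have e1 : (sub a (x :: u)) ∘ sh a = sub a u := funext fun y => sub_cons_sh a x y u
          rw [e1]
          congr 2
          funext y
          simp only [Function.comp, List.length_cons, ARP.sh]
          refine decide_eq_decide.2 ?_
          split_ifs <;> omega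
      · intro y hy
        have := hW.lt y hy
        simp; omega
    have hm : pre a σ u ∈ {v : List ℕ | v.length ≤ N ∧ ∀ x ∈ v, x < a} :=
      ⟨hσN ▸ pre_length, pre_lt hu'⟩
    have h1 := congrFun (hc x hx) ⟨_, hm⟩
    have h2 := hg u hu' (by simpa using hl)
    rw [dif_pos hm] at h2
    rw [e]
    exact h1.trans h2

/-- The Graham-Rothschild property for `k`-parameter words. -/
def GR (k : ℕ) : Prop := ∀ (a m : ℕ) (κ : Type) [Finite κ], ∃ n, ∀ c : List ℕ → κ,
  ∃ σ, RG a m σ ∧ σ.length = n ∧ ∃ j, ∀ f, RG a k f → f.length = m → c (σ.map (sub a f)) = j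

theorem gr_zero : GR 0 := by
  intro a m κ _
  obtain ⟨n, hn⟩ := hj a m κ
  refine ⟨n, fun c => ?_⟩
  obtain ⟨σ, hσ, hl, g, hg⟩ := hn c
  refine ⟨σ, hσ, hl, g m, fun f hf hm => ?_⟩
  have := hg f (by simpa using hf.lt) hm.le
  rw [hm] at this
  rw [← this]
  unfold pre
  congr 2
  symm
  rw [List.takeWhile_eq_self_iff]
  intro x hx
  have := hσ.lt x hx
  simpa [hm] using this

theorem gr_tail {k : ℕ} (H : GR k) (a M : ℕ) : ∀ (κ : Type) [Finite κ], ∃ n, ∀ c : List ℕ → κ,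
    ∃ σ, RG a M σ ∧ σ.length = n ∧ ∃ χ : List ℕ → κ, ∀ u v, (∀ x ∈ u, x < a) → RG (a+1) k v →
      u.length + v.length + 1 = M → c (σ.map (sub a (u ++ a :: v))) = χ u := by
  induction M with
  | zero => 
    intro κ _
    exact ⟨0, fun c => ⟨[], RG.nil a, rfl, fun _ => c [], fun u v _ _ h => by omega⟩⟩
  | succ M ih =>
    intro κ _
    obtain ⟨N, hN⟩ := ih (Fin a → κ)
    obtain ⟨n, hn⟩ := H (a+1) N κ
    refine ⟨n+1, fun c => ?_⟩
    obtain ⟨τ, hτ, hτn, j, hj⟩ := hn (fun v => c (a :: v))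
    obtain ⟨σ, hσ, hσN, χ, hχ⟩ := hN (fun w x => c ((a :: τ).map (sub a (x.1 :: w))))
    have hρ : RG a (M+1) (a :: σ.map (sh a)) := RG.new (hσ.sh le_rfl)
    have hτ' : RG a (N+1) (a :: τ) := RG.new hτ
    refine ⟨(a :: τ).map (sub a (a :: σ.map (sh a))), hτ'.sub (by simp [hσN]) hρ, by simp [hτn],
      fun u => match u with
        | [] => j
        | x :: u => if h : x < a then χ u ⟨x, h⟩ else j, ?_⟩
    intro u v hu hv hl
    rw [map_sub_sub hτ' (by simp [hσN])]
    rcases u with _ | ⟨x, u⟩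
    · have h1 : (a :: σ.map (sh a)).map (sub a ([] ++ a :: v)) =
        a :: (σ.map (sh a)).map (sub (a+1) v) := by
        rw [List.nil_append, ← sub_succ, List.map_cons]
        simp [ARP.sub]
      rw [h1, ← sub_succ, List.map_cons]
      have h2 : sub (a+1) ((σ.map (sh a)).map (sub (a+1) v)) a = a := by simp [ARP.sub]
      rw [h2]
      exact hj _ ((hσ.sh le_rfl).sub (by simpa using hl) hv) (by simp [hσN])
    · have hx : x < a := hu x (by simp)
      have hu' : ∀ y ∈ u, y < a := fun y hy => hu y (by simp [hy])
      have h1 : (a :: σ.map (sh a)).map (sub a (x :: u ++ a :: v)) =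
          x :: σ.map (sub a (u ++ a :: v)) := by
        rw [List.cons_append, List.map_cons, List.map_map]
        congr 1
        · simp [ARP.sub]
        · exact List.map_congr_left fun y _ => sub_cons_sh a x y _
      rw [h1]
      have := congrFun (hχ u v hu' hv (by simp at hl; omega)) ⟨x, hx⟩
      simpa [hx] using this

theorem sel_aux {a : ℕ} (ha : 0 < a) (b : List Bool) : ∃ σ, RG a (b.count true) σ ∧
    σ.length = b.length ∧ ∀ u v : List ℕ, (∀ x ∈ u, x < a) →
    u.length + v.length + 1 = b.count true →
    ∃ u' v', σ.map (sub a (u ++ a :: v)) = u' ++ a :: v' ∧ (∀ x ∈ u', x < a) ∧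
      b[u'.length]? = some true := by
  induction b with
  | nil => exact ⟨[], RG.nil a, rfl, fun u v _ h => by simp at h⟩
  | cons x b ih =>
    obtain ⟨σ, hσ, hl, h⟩ := ih
    cases x with
    | false =>
      refine ⟨0 :: σ, RG.old ha (by simpa using hσ), by simp [hl], fun u v hu hm => ?_⟩
      obtain ⟨u', v', e, h1, h2⟩ := h u v hu (by simpa using hm)
      refine ⟨0 :: u', v', ?_, ?_, by simpa using h2⟩
      · rw [List.map_cons, e]
        simp [ARP.sub, ha]
      · intro x hx
        rcases List.mem_cons.1 hx with rfl | hx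
        · exact ha
        · exact h1 x hx
    | true =>
      refine ⟨a :: σ.map (sh a), ?_, by simp [hl], fun u v hu hm => ?_⟩
      · rw [List.count_cons_self]
        exact RG.new (hσ.sh le_rfl)
      rcases u with _ | ⟨x, u⟩
      · refine ⟨[], (σ.map (sh a)).map (sub a (a :: v)), ?_, by simp, by simp⟩
        simp [ARP.sub]
      · have hx : x < a := hu x (by simp)
        have hu' : ∀ y ∈ u, y < a := fun y hy => hu y (by simp [hy])
        rw [List.count_cons_self] at hm
        obtain ⟨u', v', e, h1, h2⟩ := h u v hu' (by simp at hm; omega)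
        refine ⟨x :: u', v', ?_, ?_, by simpa using h2⟩
        · rw [List.cons_append, List.map_cons, List.map_map, List.cons_append, ← e]
          congr 1
          · simp [ARP.sub]
          · exact List.map_congr_left fun y _ => sub_cons_sh a x y _
        · intro y hy
          rcases List.mem_cons.1 hy with rfl | hy
          · exact hx
          · exact h1 y hy

theorem sel (a m : ℕ) (κ : Type) [Finite κ] : ∃ M, ∀ g : ℕ → κ, ∃ σ, RG a m σ ∧ σ.length = M ∧
    ∃ j, ∀ u v : List ℕ, (∀ x ∈ u, x < a) → u.length + v.length + 1 = m →
    ∃ u' v', σ.map (sub a (u ++ a :: v)) = u' ++ a :: v' ∧ (∀ x ∈ u', x < a) ∧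
      g u'.length = j := by
  classical
  have := Fintype.ofFinite κ
  rcases Nat.eq_zero_or_pos a with rfl | ha
  · have hr : ∀ (m a : ℕ), RG a m (List.range' a m) := by
      intro m
      induction m with
      | zero => intro a; exact RG.nil a
      | succ m ih => intro a; exact RG.new (ih (a+1))
    refine ⟨m, fun g => ⟨List.range' 0 m, hr m 0, by simp, g 0, ?_⟩⟩
    intro u v hu hm
    rcases u with _ | ⟨x, u⟩
    · refine ⟨[], (List.range' 1 v.length).map (sub 0 (0 :: v)), ?_, by simp, rfl⟩
      have : m = v.length + 1 := by simp at hm; omega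
      subst this
      rw [List.range'_succ]
      simp [ARP.sub]
    · exact absurd (hu x (by simp)) (by omega)
  · refine ⟨Fintype.card κ * m, fun g => ?_⟩
    obtain ⟨j, hj⟩ : ∃ j : κ, m ≤ ((Finset.range (Fintype.card κ * m)).filter (fun i => g i = j)).card := by
      obtain ⟨j, -, hj⟩ := Finset.exists_le_card_fiber_of_mul_le_card_of_maps_to
        (s := Finset.range (Fintype.card κ * m)) (t := (Finset.univ : Finset κ)) (f := g) (n := m)
        (fun _ _ => Finset.mem_univ _) ⟨g 0, Finset.mem_univ _⟩ (by simp)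
      exact ⟨j, hj⟩
    obtain ⟨T, hT, hTm⟩ := Finset.exists_subset_card_eq hj
    let b : List Bool := (List.range (Fintype.card κ * m)).map (fun i => decide (i ∈ T))
    have hb : b.count true = m := by
      have h1 : b.count true = (List.range (Fintype.card κ * m)).countP (fun i => decide (i ∈ T)) := by
        simp only [b, List.count, List.countP_map]
        congr 1
        funext i
        simp
      have h2 : T = (Finset.range (Fintype.card κ * m)).filter (fun i => i ∈ T) := by
        ext i
        simp only [Finset.mem_filter, Finset.mem_range]
        refine ⟨fun h => ⟨?_, h⟩, fun h => h.2⟩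
        have := hT h
        simp at this
        exact this.1
      rw [h1, List.countP_eq_length_filter]
      refine Eq.trans ?_ hTm
      conv_rhs => rw [h2]
      rfl
    obtain ⟨σ, hσ, hl, h⟩ := sel_aux ha b
    rw [hb] at hσ h
    refine ⟨σ, hσ, by simp [hl, b], j, fun u v hu hm => ?_⟩
    obtain ⟨u', v', e, h1, h2⟩ := h u v hu hm
    refine ⟨u', v', e, h1, ?_⟩
    have : u'.length ∈ T := by
      simp only [b, List.getElem?_map, Option.map_eq_some_iff] at h2
      obtain ⟨i, hi, hi'⟩ := h2
      rw [List.getElem?_eq_some_iff] at hi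
      obtain ⟨h3, rfl⟩ := hi
      simpa using hi'
    have := hT this
    simp at this
    exact this.2

theorem gr_succ {k : ℕ} (H : GR k) : GR (k+1) := by
  intro a m κ _
  obtain ⟨M', hM'⟩ := sel a m κ
  obtain ⟨M, hM⟩ := hj a M' κ
  obtain ⟨n, hn⟩ := gr_tail H a M κ
  refine ⟨n, fun c => ?_⟩
  obtain ⟨σ₁, h1, l1, χ, hχ⟩ := hn c
  obtain ⟨σ₂, h2, l2, g, hg⟩ := hM χ
  obtain ⟨σ₃, h3, l3, j, hj⟩ := hM' g
  refine ⟨σ₁.map (sub a (σ₂.map (sub a σ₃))), h1.sub (by simp [l2]) (h2.sub l3 h3), by simp [l1],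
    j, fun f hf hm => ?_⟩
  obtain ⟨u, v, rfl, hu, hv⟩ := hf.decomp 0 (by omega)
  simp only [add_zero] at *
  obtain ⟨u', v', e, hu', hgj⟩ := hj u v hu (by simp at hm; omega)
  have hf2 : RG a (k+1) (σ₃.map (sub a (u ++ a :: v))) := h3.sub hm hf
  have hl2 : (σ₃.map (sub a (u ++ a :: v))).length = M' := by simp [l3]
  rw [map_sub_sub h1 (by simp [l2]), map_sub_sub h2 l3]
  rw [e] at hf2 hl2 ⊢
  have hlt : u'.length < M' := by rw [← hl2]; simp
  have hf3 := h2.sub hl2 hf2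
  obtain ⟨w, hw⟩ := map_eq_pre (v := v') h2 hlt
  have hl3 : (σ₂.map (sub a (u' ++ a :: v'))).length = M := by simp [l2]
  rw [hw] at hf3 hl3 ⊢
  rw [hχ _ w (pre_lt hu') (hf3.split (pre_lt hu')) (by simp at hl3; omega), hg u' hu' hlt.le, hgj]

theorem gr (k : ℕ) : GR k := by
  induction k with
  | zero => exact gr_zero
  | succ k ih => exact gr_succ ih

/-- The `ℓ¹` norm. -/
noncomputable def N {d : ℕ} (v : Fin d → ℂ) : ℝ := ∑ k, ‖v k‖

/-- Linear combination of the rows of `A`. -/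
noncomputable def lin {m d : ℕ} (A : Fin m → Fin d → ℂ) (v : Fin m → ℂ) : Fin d → ℂ :=
  fun k => ∑ j, v j * A j k

theorem N_nonneg {d : ℕ} (v : Fin d → ℂ) : 0 ≤ N v := Finset.sum_nonneg fun _ _ => norm_nonneg _

theorem N_zero {d : ℕ} : N (0 : Fin d → ℂ) = 0 := by simp [N]

theorem N_eq_zero {d : ℕ} {v : Fin d → ℂ} (h : N v ≤ 0) : v = 0 := by
  have h0 := le_antisymm h (N_nonneg v)
  unfold N at h0
  rw [Finset.sum_eq_zero_iff_of_nonneg fun _ _ => norm_nonneg _] at h0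
  funext k
  simpa using h0 k (Finset.mem_univ k)

theorem N_smul {d : ℕ} (c : ℂ) (v : Fin d → ℂ) : N (c • v) = ‖c‖ * N v := by
  simp [N, Finset.mul_sum]

theorem N_cont {d : ℕ} : Continuous (N : (Fin d → ℂ) → ℝ) := by
  unfold N; fun_prop

theorem N_single {d : ℕ} (k : Fin d) (c : ℂ) : N (Pi.single k c : Fin d → ℂ) = ‖c‖ := by
  unfold N
  rw [Finset.sum_eq_single k]
  · simp
  · intro b _ hb; simp [hb]
  · simp

theorem coord_le {d : ℕ} (v : Fin d → ℂ) (k : Fin d) : ‖v k‖ ≤ N v :=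
  Finset.single_le_sum (f := fun k => ‖v k‖) (fun _ _ => norm_nonneg _) (Finset.mem_univ k)

theorem N_lin {m d : ℕ} {A : Fin m → Fin d → ℂ} {C : ℝ} (hA : ∀ j, N (A j) ≤ C) (v : Fin m → ℂ) :
    N (lin A v) ≤ C * N v := by
  calc N (lin A v) ≤ ∑ k, ∑ j, ‖v j‖ * ‖A j k‖ := by
        refine Finset.sum_le_sum fun k _ => (norm_sum_le _ _).trans ?_
        simp
    _ = ∑ j, ‖v j‖ * N (A j) := by
        rw [Finset.sum_comm]
        simp [N, Finset.mul_sum]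
    _ ≤ ∑ j, ‖v j‖ * C := 
        Finset.sum_le_sum fun j _ => mul_le_mul_of_nonneg_left (hA j) (norm_nonneg _)
    _ = C * N v := by rw [← Finset.sum_mul, mul_comm]; rfl

theorem lin_lin {m d e : ℕ} (A : Fin m → Fin d → ℂ) (L : Fin e → Fin m → ℂ) (a : Fin e → ℂ) :
    lin A (lin L a) = lin (fun k => lin A (L k)) a := by
  funext k
  simp only [lin, Finset.sum_mul, Finset.mul_sum]
  rw [Finset.sum_comm]
  simp only [mul_assoc]

theorem lin_single {m d : ℕ} (A : Fin m → Fin d → ℂ) (j : Fin m) (c : ℂ) :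
    lin A (Pi.single j c) = c • A j := by
  funext k
  unfold lin
  rw [Finset.sum_eq_single j]
  · simp
  · intro b _ hb; simp [hb]
  · simp

theorem lin_id {d : ℕ} (a : Fin d → ℂ) : lin (fun k => Pi.single k 1) a = a := by
  funext k
  unfold lin
  rw [Finset.sum_eq_single k]
  · simp
  · intro b _ hb; simp [Ne.symm hb]
  · simp

theorem lin_sub {m d : ℕ} (A B : Fin m → Fin d → ℂ) (v : Fin m → ℂ) :
    lin A v - lin B v = lin (fun j => A j - B j) v := by
  funext k
  simp [lin, mul_sub, Finset.sum_sub_distrib]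

theorem lin_sub_right {m d : ℕ} (A : Fin m → Fin d → ℂ) (v w : Fin m → ℂ) :
    lin A v - lin A w = lin A (v - w) := by
  funext k
  simp [lin, sub_mul, Finset.sum_sub_distrib]

theorem net (d : ℕ) {ε : ℝ} (hε : 0 < ε) : ∃ F : Finset (Fin d → ℂ), (∀ a ∈ F, N a ≤ 1) ∧
    ∀ w, N w ≤ 1 → ∃ a ∈ F, N (w - a) ≤ ε ∧ (N a < N w ∨ a = 0) := by
  classical
  have hK : IsCompact {w : Fin d → ℂ | N w ≤ 1} := by
    refine Metric.isCompact_of_isClosed_isBounded (isClosed_le N_cont continuous_const) ?_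
    refine (Metric.isBounded_closedBall (x := (0 : Fin d → ℂ)) (r := 1)).subset fun w hw => ?_
    rw [mem_closedBall_zero_iff, pi_norm_le_iff_of_nonneg zero_le_one]
    exact fun k => (coord_le w k).trans hw
  obtain ⟨δ, hδ, hδε, hδ1⟩ : ∃ δ : ℝ, 0 < δ ∧ δ < ε ∧ δ < 1 := by
    refine ⟨min ε 1 / 2, by positivity, ?_, ?_⟩
    · have := min_le_left ε 1
      linarith
    · have := min_le_right ε 1
      linarith
  let φ : (Fin d → ℂ) → (Fin d → ℂ) := fun w => (((1 - δ : ℝ)) : ℂ) • w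
  have hφ : ∀ w, N (φ w) = (1 - δ) * N w := fun w => by
    simp only [φ]
    rw [N_smul, Complex.norm_real, Real.norm_of_nonneg (by linarith)]
  have hφ' : ∀ w, N (w - φ w) = δ * N w := fun w => by
    have : w - φ w = ((δ : ℝ) : ℂ) • w := by
      funext k; simp [φ]; ring
    rw [this, N_smul, Complex.norm_real, Real.norm_of_nonneg hδ.le]
  obtain ⟨t, ht, hts⟩ := hK.elim_nhds_subcover
    (fun w => {w' | N (w' - φ w) < ε ∧ (N (φ w) < N w' ∨ φ w = 0)}) (fun w hw => by
      have hw : N w ≤ 1 := hw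
      have h1 : ∀ᶠ w' in nhds w, N (w' - φ w) < ε := by
        have hc : Continuous fun w' => N (w' - φ w) := N_cont.comp (by fun_prop)
        refine hc.continuousAt.eventually_lt continuousAt_const ?_
        rw [hφ']
        nlinarith
      by_cases h0 : w = 0
      · filter_upwards [h1] with w' hw'
        exact ⟨hw', Or.inr (by simp [φ, h0])⟩
      · have hpos : 0 < N w := lt_of_not_ge fun h => h0 (N_eq_zero h)
        have h2 : ∀ᶠ w' in nhds w, N (φ w) < N w' := by
          refine continuousAt_const.eventually_lt N_cont.continuousAt ?_
          rw [hφ]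
          nlinarith
        filter_upwards [h1, h2] with w' hw' hw2
        exact ⟨hw', Or.inl hw2⟩)
  refine ⟨t.image φ, ?_, ?_⟩
  · intro a ha
    obtain ⟨w, hw, rfl⟩ := Finset.mem_image.1 ha
    rw [hφ]
    have : N w ≤ 1 := ht w hw
    nlinarith [N_nonneg w]
  · intro w hw
    have := hts hw
    simp only [Set.mem_iUnion] at this
    obtain ⟨w', hw', h⟩ := this
    exact ⟨φ w', Finset.mem_image_of_mem _ hw', h.1.le, h.2⟩

theorem enum {d : ℕ} (D : Finset (Fin d → ℂ)) : ∃ (K : ℕ) (p : ℕ → Fin d → ℂ),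
    (∀ t < K, p t ∈ D) ∧ (∀ a ∈ D, ∃ t < K, p t = a) ∧
    ∀ s t, s < K → t < K → N (p s) < N (p t) → s < t := by
  classical
  have : Std.Total (fun a b : Fin d → ℂ => N a ≤ N b) := ⟨fun a b => le_total _ _⟩
  have : IsTrans (Fin d → ℂ) (fun a b : Fin d → ℂ => N a ≤ N b) := ⟨fun a b c => le_trans⟩
  let l := D.toList.insertionSort (fun a b => N a ≤ N b)
  have hl : l.Pairwise (fun a b => N a ≤ N b) := List.pairwise_insertionSort _ _
  have hm : ∀ a, a ∈ l ↔ a ∈ D := fun a => by simp [l]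
  refine ⟨l.length, fun t => l.getD t 0, ?_, ?_, ?_⟩
  · intro t ht
    rw [← hm]
    dsimp only
    rw [List.getD_eq_getElem _ _ ht]
    exact List.getElem_mem _
  · intro a ha
    obtain ⟨t, ht, h⟩ := List.getElem_of_mem ((hm a).2 ha)
    exact ⟨t, ht, by dsimp only; rw [List.getD_eq_getElem _ _ ht, h]⟩
  · intro s t hs ht h
    dsimp only at h
    rw [List.getD_eq_getElem _ _ ht, List.getD_eq_getElem _ _ hs] at h
    by_contra! hst
    rcases hst.lt_or_eq with hst | rfl
    · have := List.pairwise_iff_getElem.1 hl t s ht hs hst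
      linarith
    · exact lt_irrefl _ h

theorem snet (d : ℕ) {ε : ℝ} (hε : 0 < ε) : ∃ (K : ℕ) (p : ℕ → Fin d → ℂ), 0 < K ∧
    (∀ t < K, N (p t) ≤ 1) ∧ (∀ k, ∃ t < K, p t = Pi.single k 1) ∧
    (∀ t < K, ∀ w, N w ≤ N (p t) → ∃ s ≤ t, N (w - p s) ≤ ε) ∧
    (∀ w, N w ≤ 1 → ∃ s < K, N (w - p s) ≤ ε) := by
  classical
  obtain ⟨F, hF, hF'⟩ := net d hε
  obtain ⟨K, p, h1, h2, h3⟩ := enum (F ∪ Finset.univ.image fun k => Pi.single k 1)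
  have hle : ∀ t < K, N (p t) ≤ 1 := by
    intro t ht
    rcases Finset.mem_union.1 (h1 t ht) with h | h
    · exact hF _ h
    · obtain ⟨k, -, h⟩ := Finset.mem_image.1 h
      rw [← h, N_single]; simp
  have hz : 0 < K ∧ p 0 = 0 := by
    obtain ⟨a, ha, -, h⟩ := hF' 0 (by rw [N_zero]; exact zero_le_one)
    have ha0 : a = 0 := by
      rcases h with h | h
      · rw [N_zero] at h
        exact absurd (N_nonneg a) (by linarith)
      · exact h
    subst ha0
    obtain ⟨t, ht, hp⟩ := h2 0 (Finset.mem_union_left _ ha)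
    refine ⟨by omega, N_eq_zero ?_⟩
    by_contra! hc
    have := h3 t 0 ht (by omega) (by rw [hp, N_zero]; exact hc)
    omega
  refine ⟨K, p, hz.1, hle, fun k => h2 _ (Finset.mem_union_right _ (Finset.mem_image_of_mem _ (Finset.mem_univ k))), ?_, ?_⟩
  · intro t ht w hw
    obtain ⟨a, ha, h, h'⟩ := hF' w (hw.trans (hle t ht))
    rcases h' with h' | rfl
    · obtain ⟨s, hs, rfl⟩ := h2 a (Finset.mem_union_left _ ha)
      exact ⟨s, (h3 s t hs ht (h'.trans_le hw)).le, h⟩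
    · exact ⟨0, Nat.zero_le _, by rw [hz.2]; exact h⟩
  · intro w hw
    obtain ⟨a, ha, h, -⟩ := hF' w hw
    obtain ⟨s, hs, rfl⟩ := h2 a (Finset.mem_union_left _ ha)
    exact ⟨s, hs, h⟩

theorem read {X : Type} (l : List X) {σ : List ℕ} {n : ℕ} (hσ : RG 0 l.length σ)
    (hn : σ.length = n) : ∃ x : Fin n → X, (∀ i, x i ∈ l) ∧ (∀ y ∈ l, ∃ i, x i = y) ∧
    ∀ (F : X → ℕ) (i : Fin n), (σ.map (sub 0 (l.map F))).getD i 0 = F (x i) := by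
  subst hn
  have hlt : ∀ i : Fin σ.length, σ[i] < l.length := fun i => by
    have := hσ.lt _ (List.getElem_mem i.2)
    simpa using this
  refine ⟨fun i => l[σ[i]]'(hlt i), fun i => List.getElem_mem _, ?_, ?_⟩
  · intro y hy
    obtain ⟨t, ht, rfl⟩ := List.getElem_of_mem hy
    have := hσ.mem t ht
    obtain ⟨i, hi, h⟩ := List.getElem_of_mem this
    refine ⟨⟨i, hi⟩, ?_⟩
    simp [h]
  · intro F i
    have := hlt i
    rw [List.getD_eq_getElem _ _ (by simp)]
    simp only [List.getElem_map, ARP.sub, Nat.not_lt_zero, if_false, Nat.sub_zero]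
    rw [List.getD_eq_getElem _ _ (by simpa using this)]
    simp

/-- The list of levels. -/
def lX {I : Type} (K m : ℕ) (lI : List I) : List ((ℕ × I) ⊕ Fin m) :=
  ((List.range K).flatMap fun t => lI.map fun L => Sum.inl (t, L)) ++ (List.finRange m).map Sum.inr

theorem mem_lX_inl {I : Type} {K m : ℕ} {lI : List I} {t : ℕ} {L : I} :
    (Sum.inl (t, L) : (ℕ × I) ⊕ Fin m) ∈ lX K m lI ↔ t < K ∧ L ∈ lI := by
  simp [lX]

theorem mem_lX_inr {I : Type} {K m : ℕ} {lI : List I} {j : Fin m} :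
    (Sum.inr j : (ℕ × I) ⊕ Fin m) ∈ lX K m lI := by
  simp [lX]

theorem word {I : Type} {K m : ℕ} {lI : List I} (F : (ℕ × I) ⊕ Fin m → ℕ)
    (h1 : ∀ t < K, ∀ L ∈ lI, F (Sum.inl (t, L)) ≤ t)
    (h2 : ∀ t < K, ∃ L ∈ lI, F (Sum.inl (t, L)) = t) (h3 : ∀ j, F (Sum.inr j) < K) :
    RG 0 K ((lX K m lI).map F) := by
  have key : ∀ K' ≤ K, RG 0 K' (((List.range K').flatMap fun t => lI.map fun L => (Sum.inl (t, L) : (ℕ × I) ⊕ Fin m)).map F) := by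
    intro K'
    induction K' with
    | zero => intro _; exact RG.nil 0
    | succ K' ih =>
      intro hK
      rw [List.range_succ, List.flatMap_append, List.map_append]
      refine (ih (by omega)).append ?_
      rw [zero_add]
      apply RG.block
      · intro x hx
        simp at hx
        obtain ⟨L, hL, rfl⟩ := hx
        exact h1 K' (by omega) L hL
      · obtain ⟨L, hL, h⟩ := h2 K' (by omega)
        simp
        exact ⟨L, hL, h⟩
  unfold lX
  rw [List.map_append]
  refine (key K le_rfl).append (l := 0) (RG.const ?_)
  intro x hx
  simp at hx
  obtain ⟨j, rfl⟩ := hx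
  simpa using h3 j

theorem norm_le' {n : ℕ} (x : PiLp ⊤ (fun _ : Fin n => ℂ)) {C : ℝ} (hC : 0 ≤ C) :
    ‖x‖ ≤ C ↔ ∀ i, ‖x i‖ ≤ C := by
  rw [← PiLp.norm_ofLp, pi_norm_le_iff_of_nonneg hC]

theorem norm_lt' {n : ℕ} (x : PiLp ⊤ (fun _ : Fin n => ℂ)) {C : ℝ} (hC : 0 < C) :
    ‖x‖ < C ↔ ∀ i, ‖x i‖ < C := by
  rw [← PiLp.norm_ofLp, pi_norm_lt_iff hC]

theorem coord_le' {n : ℕ} (x : PiLp ⊤ (fun _ : Fin n => ℂ)) (i : Fin n) : ‖x i‖ ≤ ‖x‖ :=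
  (norm_le' x (norm_nonneg x)).1 le_rfl i

/-- The operator with matrix `A`. -/
noncomputable def E {n d : ℕ} (A : Fin n → Fin d → ℂ) :
    PiLp ⊤ (fun _ : Fin d => ℂ) →L[ℂ] PiLp ⊤ (fun _ : Fin n => ℂ) :=
  LinearMap.toContinuousLinearMap
    { toFun := fun x => WithLp.toLp ⊤ (fun i => ∑ k, A i k * x k)
      map_add' := fun x y => by
        ext i; simp [mul_add, Finset.sum_add_distrib]
      map_smul' := fun c x => by
        ext i; simp [Finset.mul_sum, mul_left_comm] }

theorem E_apply {n d : ℕ} (A : Fin n → Fin d → ℂ) (x : PiLp ⊤ (fun _ : Fin d => ℂ)) (i : Fin n) :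
    E A x i = ∑ k, A i k * x k := rfl

theorem row_le {d : ℕ} (a : Fin d → ℂ) (x : PiLp ⊤ (fun _ : Fin d => ℂ)) :
    ‖∑ k, a k * x k‖ ≤ N a * ‖x‖ := by
  refine (norm_sum_le _ _).trans ?_
  unfold N
  rw [Finset.sum_mul]
  refine Finset.sum_le_sum fun k _ => ?_
  rw [norm_mul]
  exact mul_le_mul_of_nonneg_left (coord_le' x k) (norm_nonneg _)

theorem E_iso {n d : ℕ} {A : Fin n → Fin d → ℂ} (h1 : ∀ i, N (A i) ≤ 1)
    (h2 : ∀ k, ∃ i, A i = Pi.single k 1) (x : PiLp ⊤ (fun _ : Fin d => ℂ)) : ‖E A x‖ = ‖x‖ := by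
  apply le_antisymm
  · rw [norm_le' _ (norm_nonneg _)]
    intro i
    rw [E_apply]
    refine (row_le _ _).trans ?_
    nlinarith [h1 i, norm_nonneg x]
  · rw [norm_le' _ (norm_nonneg _)]
    intro k
    obtain ⟨i, hi⟩ := h2 k
    have : E A x i = x k := by
      rw [E_apply, hi, Finset.sum_eq_single k]
      · simp
      · intro b _ hb; simp [hb]
      · simp
    rw [← this]
    exact coord_le' _ i

theorem exists_matrix {m d : ℕ}
    (η : PiLp ⊤ (fun _ : Fin d => ℂ) →L[ℂ] PiLp ⊤ (fun _ : Fin m => ℂ))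
    (hη : ∀ x, ‖η x‖ = ‖x‖) : ∃ A : Fin m → Fin d → ℂ, (∀ x j, η x j = ∑ k, A j k * x k) ∧
    (∀ j, N (A j) ≤ 1) ∧ ∃ B : Fin d → Fin m → ℂ, (∀ k, N (B k) ≤ 1) ∧
      ∀ k, lin A (B k) = Pi.single k 1 := by
  let e : Fin d → PiLp ⊤ (fun _ : Fin d => ℂ) := fun k => WithLp.toLp ⊤ (Pi.single k 1)
  let A : Fin m → Fin d → ℂ := fun j k => η (e k) j
  have hA : ∀ x j, η x j = ∑ k, A j k * x k := by
    intro x j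
    have hx : x = ∑ k, x k • e k := by
      ext i
      simp [e, Finset.sum_apply, Pi.single_apply]
    conv_lhs => rw [hx]
    rw [map_sum]
    simp [A, mul_comm]
  have hN : ∀ j, N (A j) ≤ 1 := by
    intro j
    let x : PiLp ⊤ (fun _ : Fin d => ℂ) :=
      WithLp.toLp ⊤ (fun k => (starRingEnd ℂ) (A j k) / (‖A j k‖ : ℂ))
    have hx : ‖x‖ ≤ 1 := by
      rw [norm_le' _ zero_le_one]
      intro k
      simp only [x, norm_div, RCLike.norm_conj, Complex.norm_real, norm_norm]
      exact div_self_le_one _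
    have h1 : η x j = ((N (A j) : ℝ) : ℂ) := by
      rw [hA, N, Complex.ofReal_sum]
      refine Finset.sum_congr rfl fun k _ => ?_
      simp only [x]
      by_cases h0 : A j k = 0
      · simp [h0]
      · have : (‖A j k‖ : ℂ) ≠ 0 := by simpa using h0
        rw [mul_div_assoc', Complex.mul_conj']
        field_simp
    have h2 := (coord_le' (η x) j).trans ((hη x).le.trans hx)
    rw [h1, Complex.norm_real, Real.norm_of_nonneg (N_nonneg _)] at h2
    exact h2
  have hone : ∀ k, ∃ j, ‖A j k‖ = 1 := by
    intro k
    by_contra! hc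
    have hlt : ∀ j, ‖A j k‖ < 1 := fun j => lt_of_le_of_ne ((coord_le _ k).trans (hN j)) (hc j)
    have h1 : ‖η (e k)‖ < 1 := (norm_lt' _ one_pos).2 hlt
    rw [hη] at h1
    have h2 := coord_le' (e k) k
    simp [e] at h2 h1
  choose J hJ using hone
  refine ⟨A, hA, hN, fun k => Pi.single (J k) ((starRingEnd ℂ) (A (J k) k)), ?_, ?_⟩
  · intro k
    rw [N_single, RCLike.norm_conj, hJ]
  · intro k
    rw [lin_single]
    funext i
    by_cases hi : i = k
    · subst hi
      simp only [Pi.smul_apply, smul_eq_mul, Pi.single_eq_same]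
      rw [mul_comm, Complex.mul_conj', hJ]; simp
    · have h0 : A (J k) i = 0 := by
        have h1 := hN (J k)
        have h2 : ‖A (J k) k‖ + ‖A (J k) i‖ ≤ N (A (J k)) := by
          unfold N
          rw [← Finset.sum_pair (f := fun k' => ‖A (J k) k'‖) (Ne.symm hi)]
          exact Finset.sum_le_sum_of_subset_of_nonneg (Finset.subset_univ _)
            fun _ _ _ => norm_nonneg _
        rw [hJ] at h2
        exact norm_le_zero_iff.1 (by linarith)
      simp [h0, hi]

end ARP

open ARP in
/-- Approximate Ramsey property of the family `{ℓ∞ⁿ(ℂ)}ₙ` with respect to linear isometric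
embeddings. -/
theorem arp_linf_complex (d m r : ℕ) (ε : ℝ) (hε : 0 < ε) :
    ∃ n : ℕ, ∀ c : {φ : LinfC d →L[ℂ] LinfC n // ∀ x, ‖φ x‖ = ‖x‖} → Fin r,
      ∃ (γ : LinfC m →L[ℂ] LinfC n) (_ : ∀ x, ‖γ x‖ = ‖x‖) (j : Fin r),
        ∀ η : LinfC d →L[ℂ] LinfC m, (∀ x, ‖η x‖ = ‖x‖) →
          ∃ (ξ : LinfC d →L[ℂ] LinfC n) (hξ : ∀ x, ‖ξ x‖ = ‖x‖),
            c ⟨ξ, hξ⟩ = j ∧ ‖γ.comp η - ξ‖ ≤ ε := by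
  classical
  obtain ⟨K, p, hK, hp1, hpe, hnear, hnear'⟩ := snet d hε
  obtain ⟨Fm, hFm, hFm'⟩ := net m hε
  let lI : List (Fin d → Fin m → ℂ) := (Fintype.piFinset fun _ => Fm).toList
  have hlI : ∀ L ∈ lI, ∀ k, N (L k) ≤ 1 := fun L hL k => by
    simp only [lI, Finset.mem_toList, Fintype.mem_piFinset] at hL
    exact hFm _ (hL k)
  have hlI' : ∀ B : Fin d → Fin m → ℂ, (∀ k, N (B k) ≤ 1) → ∃ L ∈ lI, ∀ k, N (B k - L k) ≤ ε := by
    intro B hB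
    choose L hL hL' using fun k => hFm' (B k) (hB k)
    exact ⟨L, by simpa [lI] using hL, fun k => (hL' k).1⟩
  let ρ : (ℕ × (Fin d → Fin m → ℂ)) ⊕ Fin m → Fin m → ℂ :=
    Sum.elim (fun q => lin q.2 (p q.1)) (fun j => Pi.single j 1)
  obtain ⟨n, hn⟩ := gr K 0 (lX K m lI).length (Option (Fin r))
  refine ⟨n, fun c => ?_⟩
  let row : List ℕ → Fin n → Fin d → ℂ := fun w i => p (w.getD i 0)
  obtain ⟨σ, hσ, hσn, j', hj'⟩ := hn (fun w =>
    if h : ∀ x, ‖E (row w) x‖ = ‖x‖ then some (c ⟨E (row w), h⟩) else none)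
  obtain ⟨x, hx, hx', hxF⟩ := read (lX K m lI) hσ hσn
  have main : ∀ F : (ℕ × (Fin d → Fin m → ℂ)) ⊕ Fin m → ℕ,
      (∀ t < K, ∀ L ∈ lI, F (Sum.inl (t, L)) ≤ t) →
      (∀ t < K, ∃ L ∈ lI, F (Sum.inl (t, L)) = t) → (∀ j, F (Sum.inr j) < K) →
      ∃ h : (∀ y, ‖E (fun i => p (F (x i))) y‖ = ‖y‖),
        some (c ⟨E (fun i => p (F (x i))), h⟩) = j' := by
    intro F h1 h2 h3
    have hw := hj' _ (word F h1 h2 h3) (by simp)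
    have e : row (σ.map (sub 0 ((lX K m lI).map F))) = fun i => p (F (x i)) := by
      funext i
      simp only [row]
      rw [hxF F i]
    have hiso : ∀ y, ‖E (fun i => p (F (x i))) y‖ = ‖y‖ := by
      apply E_iso
      · intro i
        apply hp1
        have hxi := hx i
        rcases hy : x i with ⟨t, L⟩ | j
        · rw [hy, mem_lX_inl] at hxi
          exact (h1 t hxi.1 L hxi.2).trans_lt hxi.1
        · exact h3 j
      · intro k
        obtain ⟨t, ht, hpt⟩ := hpe k
        obtain ⟨L, hL, hF⟩ := h2 t ht
        obtain ⟨i, hi⟩ := hx' (Sum.inl (t, L)) (mem_lX_inl.2 ⟨ht, hL⟩)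
        exact ⟨i, by rw [hi, hF, hpt]⟩
    refine ⟨hiso, ?_⟩
    rw [e, dif_pos hiso] at hw
    exact hw
  obtain ⟨L₁, hL₁, -⟩ := hlI' 0 (fun k => by
    show N (0 : Fin m → ℂ) ≤ 1
    rw [N_zero]; exact zero_le_one)
  obtain ⟨h0, hc0⟩ := main (Sum.elim (fun q => q.1) (fun _ => 0)) (fun t _ L _ => le_rfl)
    (fun t _ => ⟨L₁, hL₁, rfl⟩) (fun _ => hK)
  refine ⟨E (fun i => ρ (x i)), ?_, c ⟨_, h0⟩, ?_⟩
  · apply E_iso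
    · intro i
      have hxi := hx i
      rcases hy : x i with ⟨t, L⟩ | j
      · rw [hy, mem_lX_inl] at hxi
        have h1 := N_lin (hlI L hxi.2) (p t)
        have h2 := hp1 t hxi.1
        simp only [ρ, Sum.elim_inl]
        linarith
      · simp only [ρ, Sum.elim_inr]
        rw [N_single]; simp
    · intro j
      obtain ⟨i, hi⟩ := hx' (Sum.inr j) mem_lX_inr
      exact ⟨i, by simp [hi, ρ]⟩
  intro η hη
  obtain ⟨A, hA, hAN, B, hB, hAB⟩ := exists_matrix η hη
  obtain ⟨L₀, hL₀, hBL⟩ := hlI' B hB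
  have hex : ∀ (t : ℕ) (L : Fin d → Fin m → ℂ), ∃ s, t < K → L ∈ lI → s ≤ t ∧
      N (lin A (lin L (p t)) - p s) ≤ ε ∧ (L = L₀ → s = t) := by
    intro t L
    by_cases hh : t < K ∧ L ∈ lI
    · obtain ⟨ht, hL⟩ := hh
      by_cases hLL : L = L₀
      · refine ⟨t, fun _ _ => ⟨le_rfl, ?_, fun _ => rfl⟩⟩
        subst hLL
        have e1 : lin A (lin L (p t)) - p t =
            lin (fun k => lin A (L k) - lin A (B k)) (p t) := by
          rw [← lin_sub, lin_lin]
          simp only [hAB]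
          rw [lin_id]
        rw [e1]
        have h1 : ∀ k, N (lin A (L k) - lin A (B k)) ≤ ε := fun k => by
          rw [lin_sub_right]
          have h2 := N_lin hAN (L k - B k)
          have h3 : N (L k - B k) = N (B k - L k) := by
            unfold N; simp only [Pi.sub_apply, norm_sub_rev]
          have h4 := hBL k
          linarith
        have h2 := N_lin h1 (p t)
        nlinarith [hp1 t ht]
      · have h1 : N (lin A (lin L (p t))) ≤ N (p t) := by
          have h1 := N_lin hAN (lin L (p t))
          have h2 := N_lin (hlI L hL) (p t)
          linarith
        obtain ⟨s, hs, h⟩ := hnear t ht _ h1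
        exact ⟨s, fun _ _ => ⟨hs, h, fun h => absurd h hLL⟩⟩
    · exact ⟨0, fun h1 h2 => absurd ⟨h1, h2⟩ hh⟩
  choose S hS using hex
  choose S' hS' hS'' using fun j => hnear' (A j) (hAN j)
  let F : (ℕ × (Fin d → Fin m → ℂ)) ⊕ Fin m → ℕ := Sum.elim (fun q => S q.1 q.2) S'
  obtain ⟨hξ, hc⟩ := main F (fun t ht L hL => (hS t L ht hL).1)
    (fun t ht => ⟨L₀, hL₀, (hS t L₀ ht hL₀).2.2 rfl⟩) hS'
  refine ⟨E (fun i => p (F (x i))), hξ, ?_, ?_⟩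
  · exact Option.some_injective _ (hc.trans hc0.symm)
  · refine ContinuousLinearMap.opNorm_le_bound _ hε.le fun y => ?_
    rw [norm_le' _ (by positivity)]
    intro i
    have hd : N (lin A (ρ (x i)) - p (F (x i))) ≤ ε := by
      have hxi := hx i
      rcases hy : x i with ⟨t, L⟩ | j
      · rw [hy, mem_lX_inl] at hxi
        exact (hS t L hxi.1 hxi.2).2.1
      · simp only [ρ, F, Sum.elim_inr]
        rw [lin_single, one_smul]
        exact hS'' j
    have e : ((E (fun i => ρ (x i))).comp η - E (fun i => p (F (x i)))) y i =
        ∑ k, (lin A (ρ (x i)) - p (F (x i))) k * y k := by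
      have e1 : ((E (fun i => ρ (x i))).comp η - E (fun i => p (F (x i)))) y i =
        E (fun i => ρ (x i)) (η y) i - E (fun i => p (F (x i))) y i := rfl
      rw [e1, E_apply, E_apply]
      simp only [hA, Pi.sub_apply, sub_mul, Finset.sum_sub_distrib, lin, Finset.sum_mul,
        Finset.mul_sum]
      rw [Finset.sum_comm]
      simp only [mul_assoc]
    rw [e]
    exact (row_le _ _).trans (mul_le_mul_of_nonneg_right hd (norm_nonneg _))
end

section
/- For every d, m, r ∈ ℕ and every ε > 0 there exists n ∈ ℕ such that for every coloring c of the set CQ(ℓ₁^n(ℂ), ℓ₁^d(ℂ)) of contractive quotient mappings with r colors, there exist a contractive quotient mapping γ : ℓ₁^n(ℂ) → ℓ₁^m(ℂ) and a color j such that for every contractive quotient mapping ρ : ℓ₁^m(ℂ) → ℓ₁^d(ℂ) there is a contractive quotient mapping ρ' : ℓ₁^n(ℂ) → ℓ₁^d(ℂ) with c(ρ') = j and ‖ρ ∘ γ − ρ'‖ ≤ ε (operator norm). -/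
/-- `ℓ₁ⁿ(ℂ)`: the space `ℂⁿ` with the norm given by the sum of the absolute values of the
coordinates. -/
abbrev L1C (n : ℕ) : Type := PiLp 1 (fun _ : Fin n => ℂ)

/-- A linear map is a *contractive quotient mapping* if it maps the closed unit ball onto the
closed unit ball. -/
def IsContractiveQuotient {n d : ℕ} (φ : L1C n →L[ℂ] L1C d) : Prop :=
  ⇑φ '' Metric.closedBall 0 1 = Metric.closedBall 0 1

/-- Rigid surjections from `[0,n)` onto `[0,c)` fixing `[0,a)`, extended by zero. -/
structure RS (a n c : ℕ) (f : ℕ → ℕ) : Prop where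
  fix : ∀ x, x < a → f x = x
  zero : ∀ x, n ≤ x → f x = 0
  lt : ∀ x, x < n → f x < c
  ord : ∀ x, x < n → ∀ y, y < f x → ∃ x', x' < x ∧ f x' = y
  surj : ∀ y, y < c → ∃ x, x < n ∧ f x = y

theorem RS.comp {a n b c : ℕ} {g f : ℕ → ℕ} (ha : 1 ≤ a) (hf : RS a b c f) (hg : RS a n b g) :
    RS a n c (f ∘ g) where
  fix x hx := by simp [hg.fix x hx, hf.fix x hx]
  zero x hx := by simp [hg.zero x hx, hf.fix 0 ha]
  lt x hx := hf.lt _ (hg.lt x hx)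
  ord x hx y hy := by
    obtain ⟨z, hz, rfl⟩ := hf.ord _ (hg.lt x hx) y hy
    obtain ⟨w, hw, rfl⟩ := hg.ord x hx z hz
    exact ⟨w, hw, rfl⟩
  surj y hy := by
    obtain ⟨z, hz, rfl⟩ := hf.surj y hy
    obtain ⟨w, hw, rfl⟩ := hg.surj z hz
    exact ⟨w, hw, rfl⟩

theorem RS.mono {a a' n c : ℕ} {f : ℕ → ℕ} (h : RS a n c f) (haa : a' ≤ a) : RS a' n c f :=
  ⟨fun x hx => h.fix x (by omega), h.zero, h.lt, h.ord, h.surj⟩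

theorem RS.self (a n : ℕ) (h : a ≤ n) : RS a n n (fun x => if x < n then x else 0) where
  fix x hx := by simp; omega
  zero x hx := by simp; omega
  lt x hx := by simp [hx]
  ord x hx y hy := by
    simp only [hx, if_true] at hy
    exact ⟨y, hy, by simp; omega⟩
  surj y hy := ⟨y, hy, by simp; omega⟩

theorem RS.comp_self {a n c : ℕ} {f : ℕ → ℕ} (ha : 1 ≤ a) (h : RS a n c f) :
    f ∘ (fun x => if x < n then x else 0) = f := by
  funext x
  by_cases hx : x < n
  · simp [hx]
  · simp [hx, h.fix 0 ha, h.zero x (by omega)]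

def DR (a k : ℕ) : Prop := ∀ (m : ℕ) (κ : Type) [Finite κ] [Nonempty κ], ∃ n, a + m ≤ n ∧
  ∀ C : (ℕ → ℕ) → κ, ∃ γ, RS a n (a + m) γ ∧ ∃ j, ∀ σ, RS a (a + m) (a + k) σ → C (σ ∘ γ) = j

theorem DR_zero (a : ℕ) (ha : 1 ≤ a) : DR a 0 := by
  intro m κ _ _
  obtain ⟨ι, _, hι⟩ := Combinatorics.Line.exists_mono_in_high_dimension (Fin m → Fin a) κ
  classical
  let N := Fintype.card ι
  let e : Fin N ≃ ι := (Fintype.equivFin ι).symm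
  have hdiv : ∀ t, ¬ t < a → t < a + N * m → (t - a) / m < N := by
    intro t h1 h2
    rw [Nat.div_lt_iff_lt_mul]
    · omega
    · rcases Nat.eq_zero_or_pos m with h | h
      · subst h; simp at h2; omega
      · exact h
  have hmod : ∀ t, ¬ t < a → t < a + N * m → (t - a) % m < m := by
    intro t h1 h2
    apply Nat.mod_lt
    rcases Nat.eq_zero_or_pos m with h | h
    · subst h; simp at h2; omega
    · exact h
  let word : (ι → (Fin m → Fin a)) → ℕ → ℕ := fun w t =>
    if h1 : t < a then t else if h2 : t < a + N * m then
      (w (e ⟨(t - a) / m, hdiv t h1 h2⟩) ⟨(t - a) % m, hmod t h1 h2⟩ : ℕ) else 0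
  by_cases hNm : m ≤ N * m
  swap
  · -- N = 0 impossible for a line
    exfalso
    have hN : N = 0 := by
      by_contra h
      exact hNm (Nat.le_mul_of_pos_left m (Nat.pos_of_ne_zero h))
    obtain ⟨l, -⟩ := hι (fun _ => Classical.arbitrary κ)
    obtain ⟨i, -⟩ := l.proper
    have : IsEmpty ι := Fintype.card_eq_zero_iff.mp hN
    exact this.elim i
  refine ⟨a + N * m, by omega, fun C => ?_⟩
  obtain ⟨l, j, hl⟩ := hι (fun w => C (word w))
  let γ : ℕ → ℕ := fun t =>
    if h1 : t < a then t else if h2 : t < a + N * m then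
      (match l.idxFun (e ⟨(t - a) / m, hdiv t h1 h2⟩) with
        | some g => (g ⟨(t - a) % m, hmod t h1 h2⟩ : ℕ)
        | none => a + (t - a) % m) else 0
  have hγ1 : ∀ t, t < a → γ t = t := fun t h => by simp [γ, h]
  have key : ∀ i : Fin N, l.idxFun (e i) = none → ∀ y, y < m →
      a + (i * m + y) < a + N * m ∧ γ (a + (i * m + y)) = a + y := by
    intro i hi y hy
    have h0 : (i : ℕ) * m + y < N * m := by
      have : ((i : ℕ) + 1) * m ≤ N * m := Nat.mul_le_mul_right m i.2
      rw [Nat.add_mul] at this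
      omega
    have hd : (a + (i * m + y) - a) / m = i := by
      rw [Nat.add_sub_cancel_left, mul_comm, Nat.mul_add_div (by omega), Nat.div_eq_of_lt hy]
      simp
    have hm : (a + (i * m + y) - a) % m = y := by
      rw [Nat.add_sub_cancel_left, mul_comm, Nat.mul_add_mod, Nat.mod_eq_of_lt hy]
    refine ⟨by omega, ?_⟩
    have h1 : ¬ (a + (i * m + y) < a) := by omega
    have h2 : (a + (i * m + y) < a + N * m) := by omega
    have h3 : (⟨(a + (i * m + y) - a) / m, hdiv _ h1 h2⟩ : Fin N) = i := Fin.ext hd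
    simp only [γ, h1, h2, dif_pos, dif_neg, not_false_eq_true]
    rw [h3, hi]
    exact congrArg (a + ·) hm
  refine ⟨γ, ⟨hγ1, ?_, ?_, ?_, ?_⟩, j, ?_⟩
  · intro x hx
    have h1 : ¬ x < a := by omega
    have h2 : ¬ x < a + N * m := by omega
    simp [γ, h1, h2]
  · intro x hx
    by_cases h1 : x < a
    · rw [hγ1 x h1]; omega
    · simp only [γ, h1, hx, dif_pos, dif_neg, not_false_eq_true]
      have := hmod x h1 hx
      split
      · rename_i g _
        have := (g ⟨(x - a) % m, hmod x h1 hx⟩).2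
        omega
      · omega
  · intro x hx y hy
    by_cases h1 : x < a
    · rw [hγ1 x h1] at hy
      exact ⟨y, hy, hγ1 y (by omega)⟩
    · by_cases hya : y < a
      · exact ⟨y, by omega, hγ1 y hya⟩
      · rcases hh : l.idxFun (e ⟨(x - a) / m, hdiv x h1 hx⟩) with _ | g
        · have hγx : γ x = a + (x - a) % m := by
            simp only [γ, h1, hx, dif_pos, dif_neg, not_false_eq_true]
            rw [hh]
          have hm := hmod x h1 hx
          obtain ⟨k1, k2⟩ := key _ hh (y - a) (by omega)
          refine ⟨_, ?_, k2.trans (by omega)⟩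
          have := Nat.div_add_mod (x - a) m
          have h4 : m * ((x - a) / m) = (x - a) / m * m := mul_comm _ _
          simp only
          omega
        · have hγx : γ x = g ⟨(x - a) % m, hmod x h1 hx⟩ := by
            simp only [γ, h1, hx, dif_pos, dif_neg, not_false_eq_true]
            rw [hh]
          have := (g ⟨(x - a) % m, hmod x h1 hx⟩).2
          omega
  · intro y hy
    by_cases h1 : y < a
    · exact ⟨y, by omega, hγ1 y h1⟩
    · obtain ⟨i, hi⟩ := l.proper
      obtain ⟨k1, k2⟩ := key (e.symm i) (by simpa using hi) (y - a) (by omega)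
      exact ⟨_, k1, k2.trans (by omega)⟩
  · intro σ hσ
    have hb : ∀ z, z < a + m → σ z < a := fun z hz => hσ.lt z hz
    rw [← hl (fun z => ⟨σ (a + z), hb _ (by omega)⟩)]
    congr 1
    funext t
    by_cases h1 : t < a
    · simp [γ, word, h1, hσ.fix t h1]
    by_cases h2 : t < a + N * m
    · simp only [γ, word, h1, h2, dif_pos, dif_neg, not_false_eq_true, Function.comp]
      rcases hh : l.idxFun (e ⟨(t - a) / m, hdiv t h1 h2⟩) with _ | g
      · rw [Combinatorics.Line.apply_none _ _ _ hh]
      · rw [Combinatorics.Line.apply_some hh]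
        simp only
        exact hσ.fix _ (Fin.is_lt _)
    · simp [γ, word, h1, h2, hσ.fix 0 ha]

def Fst (a p : ℕ) (σ : ℕ → ℕ) : Prop := σ p = a ∧ ∀ t, t < p → σ t < a

theorem exists_fst {a n c : ℕ} {f : ℕ → ℕ} (h : RS a n c f) (y : ℕ) (hy : y < c) :
    ∃ p, p < n ∧ f p = y ∧ ∀ t, t < p → f t < y := by
  classical
  have hex := h.surj y hy
  obtain ⟨h1, h2⟩ := Nat.find_spec hex
  refine ⟨Nat.find hex, h1, h2, fun t ht => ?_⟩
  have hne : f t ≠ y := fun hh => Nat.find_min hex ht ⟨by omega, hh⟩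
  by_contra hlt
  obtain ⟨t', ht', he⟩ := h.ord t (by omega) y (by omega)
  exact Nat.find_min hex (lt_trans ht' ht) ⟨by omega, he⟩

theorem Fst.ge {a p n c : ℕ} {σ : ℕ → ℕ} (h : RS a n c σ) (hf : Fst a p σ) : a ≤ p := by
  by_contra hp
  have := h.fix p (by omega)
  have := hf.1
  omega

theorem Fst.lt {a p n c : ℕ} {σ : ℕ → ℕ} (ha : 1 ≤ a) (h : RS a n c σ) (hf : Fst a p σ) :
    p < n := by
  by_contra hp
  have := h.zero p (by omega)
  have := hf.1
  omega

theorem step1 (a k i b : ℕ) (ha : 1 ≤ a) (hD : DR (a + 1) k) (hai : a ≤ i) (hib : i + 1 ≤ b)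
    (κ : Type) [Finite κ] [Nonempty κ] : ∃ n, b ≤ n ∧ ∀ C : (ℕ → ℕ) → κ, ∃ γ, RS (i + 1) n b γ ∧
      ∀ τ τ', RS a b (a + k + 1) τ → RS a b (a + k + 1) τ' → Fst a i τ →
        (∀ t, t ≤ i → τ t = τ' t) → C (τ ∘ γ) = C (τ' ∘ γ) := by
  obtain ⟨n, hn, H⟩ := hD (b - (i + 1)) ((Fin i → Fin a) → κ)
  refine ⟨n - (a + 1) + (i + 1), by omega, fun C => ?_⟩
  let word : (Fin i → Fin a) → (ℕ → ℕ) → ℕ → ℕ := fun s v t =>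
    if h : t < i then s ⟨t, h⟩ else if t = i then a else v (t - i + a)
  obtain ⟨γ, hγ, j, hj⟩ := H (fun v s => C (word s v))
  let g : ℕ → ℕ := fun t => if t ≤ i then t else
    if γ (t - i + a) < a then γ (t - i + a) else γ (t - i + a) - a + i
  have hg1 : ∀ t, t ≤ i → g t = t := fun t h => by simp [g, h]
  have hg2 : ∀ t, i < t → γ (t - i + a) < a → g t = γ (t - i + a) := fun t h h' => by
    have : ¬ t ≤ i := by omega
    simp [g, this, h']
  have hg3 : ∀ t, i < t → a ≤ γ (t - i + a) → g t = γ (t - i + a) - a + i := fun t h h' => by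
    have h1 : ¬ t ≤ i := by omega
    have h2 : ¬ γ (t - i + a) < a := by omega
    simp [g, h1, h2]
  refine ⟨g, ⟨fun x hx => hg1 x (by omega), ?_, ?_, ?_, ?_⟩, ?_⟩
  · intro x hx
    have hz := hγ.zero (x - i + a) (by omega)
    rw [hg2 x (by omega) (by omega), hz]
  · intro x hx
    by_cases h1 : x ≤ i
    · rw [hg1 x h1]; omega
    · have hl := hγ.lt (x - i + a) (by omega)
      by_cases h2 : γ (x - i + a) < a
      · rw [hg2 x (by omega) h2]; omega
      · rw [hg3 x (by omega) (by omega)]; omega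
  · intro x hx y hy
    by_cases h1 : y ≤ i
    · by_cases h2 : x ≤ i
      · rw [hg1 x h2] at hy
        exact ⟨y, hy, hg1 y h1⟩
      · exact ⟨y, by omega, hg1 y h1⟩
    · have hxi : i < x := by
        by_contra hh
        rw [hg1 x (by omega)] at hy
        omega
      have h3 : a ≤ γ (x - i + a) := by
        by_contra hh
        rw [hg2 x hxi (by omega)] at hy
        omega
      rw [hg3 x hxi h3] at hy
      obtain ⟨z, hz, hz'⟩ := hγ.ord (x - i + a) (by omega) (y - i + a) (by omega)
      have hza : a < z := by
        by_contra hh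
        have := hγ.fix z (by omega)
        omega
      have e1 : z - a + i - i + a = z := by omega
      refine ⟨z - a + i, by omega, ?_⟩
      rw [hg3 _ (by omega) (by rw [e1]; omega), e1]
      omega
  · intro y hy
    by_cases h1 : y ≤ i
    · exact ⟨y, by omega, hg1 y h1⟩
    · obtain ⟨z, hz, hz'⟩ := hγ.surj (y - i + a) (by omega)
      have hza : a < z := by
        by_contra hh
        have := hγ.fix z (by omega)
        omega
      have e1 : z - a + i - i + a = z := by omega
      refine ⟨z - a + i, by omega, ?_⟩
      rw [hg3 _ (by omega) (by rw [e1]; omega), e1]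
      omega
  · -- colour of `τ ∘ g` is determined by the prefix
    have key : ∀ (s : Fin i → Fin a) τ, RS a b (a + k + 1) τ → Fst a i τ →
        (∀ t : Fin i, τ t = s t) → C (τ ∘ g) = j s := by
      intro s τ hτ hf hs
      let v : ℕ → ℕ := fun z => if z ≤ a then z else τ (z - a + i)
      have hv1 : ∀ z, z ≤ a → v z = z := fun z h => by simp [v, h]
      have hv2 : ∀ z, a < z → v z = τ (z - a + i) := fun z h => by
        have : ¬ z ≤ a := by omega
        simp [v, this]
      have hle : ∀ z, z ≤ i → τ z ≤ a := by
        intro z hz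
        rcases Nat.lt_or_eq_of_le hz with h | h
        · exact (hf.2 z h).le
        · rw [h, hf.1]
      have hv : RS (a + 1) (a + 1 + (b - (i + 1))) (a + 1 + k) v := by
        refine ⟨fun x hx => hv1 x (by omega), ?_, ?_, ?_, ?_⟩
        · intro x hx
          rw [hv2 x (by omega)]
          exact hτ.zero _ (by omega)
        · intro x hx
          by_cases h : x ≤ a
          · rw [hv1 x h]; omega
          · rw [hv2 x (by omega)]
            have := hτ.lt (x - a + i) (by omega)
            omega
        · intro x hx y hy
          by_cases h : y ≤ a
          · by_cases h' : x ≤ a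
            · rw [hv1 x h'] at hy
              exact ⟨y, hy, hv1 y h⟩
            · exact ⟨y, by omega, hv1 y h⟩
          · have h' : a < x := by
              by_contra hh
              rw [hv1 x (by omega)] at hy
              omega
            rw [hv2 x h'] at hy
            obtain ⟨z, hz, hz'⟩ := hτ.ord _ (by omega) y hy
            have hzi : i < z := by
              by_contra hh
              have := hle z (by omega)
              omega
            refine ⟨z - i + a, by omega, ?_⟩
            rw [hv2 _ (by omega), ← hz']
            congr 1
            omega
        · intro y hy
          by_cases h : y ≤ a
          · exact ⟨y, by omega, hv1 y h⟩
          · obtain ⟨z, hz, hz'⟩ := hτ.surj y (by omega)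
            have hzi : i < z := by
              by_contra hh
              have := hle z (by omega)
              omega
            refine ⟨z - i + a, by omega, ?_⟩
            rw [hv2 _ (by omega), ← hz']
            congr 1
            omega
      have hjv := congrFun (hj v hv) s
      rw [← hjv]
      congr 1
      funext t
      by_cases h1 : t < i
      · simp only [Function.comp, word, h1, dif_pos]
        rw [hg1 t h1.le]
        exact hs ⟨t, h1⟩
      by_cases h2 : t = i
      · subst h2
        simp only [Function.comp, word, h1, dif_neg, not_false_eq_true, if_true]
        rw [hg1 t le_rfl, hf.1]
      · simp only [Function.comp, word, h1, h2, dif_neg, not_false_eq_true, if_false]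
        by_cases h3 : γ (t - i + a) < a
        · rw [hg2 t (by omega) h3, hv1 _ h3.le, hτ.fix _ h3]
        · rw [hg3 t (by omega) (by omega)]
          by_cases h4 : γ (t - i + a) = a
          · rw [h4, hv1 a le_rfl]
            simpa using hf.1
          · rw [hv2 _ (by omega)]
    intro τ τ' hτ hτ' hf hag
    let s : Fin i → Fin a := fun t => ⟨τ t, hf.2 t t.2⟩
    rw [key s τ hτ hf (fun t => rfl), key s τ' hτ' ⟨by rw [← hag i le_rfl]; exact hf.1,
      fun t ht => by rw [← hag t ht.le]; exact hf.2 t ht⟩ (fun t => (hag t t.2.le).symm)]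

theorem claim1 (a k T : ℕ) (ha : 1 ≤ a) (hD : DR (a + 1) k)
    (κ : Type) [Finite κ] [Nonempty κ] (s : ℕ) : ∀ i, a ≤ i → i + s = T →
    ∃ n, T ≤ n ∧ ∀ C : (ℕ → ℕ) → κ, ∃ γ, RS i n T γ ∧
      ∀ σ σ', RS a T (a + k + 1) σ → RS a T (a + k + 1) σ' → ∀ p, i ≤ p → Fst a p σ →
        (∀ t, t ≤ p → σ t = σ' t) → C (σ ∘ γ) = C (σ' ∘ γ) := by
  induction s with
  | zero =>
    intro i hi hT
    refine ⟨T, le_rfl, fun C => ⟨_, RS.self i T (by omega), ?_⟩⟩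
    intro σ σ' hσ hσ' p hp hf hag
    have := hf.lt ha hσ
    omega
  | succ s ih =>
    intro i hi hT
    obtain ⟨b, hb, H⟩ := ih (i + 1) (by omega) (by omega)
    obtain ⟨n, hn, H1⟩ := step1 a k i b ha hD hi (by omega) κ
    refine ⟨n, by omega, fun C => ?_⟩
    obtain ⟨γ1, hγ1, h1⟩ := H1 C
    obtain ⟨γ2, hγ2, h2⟩ := H (fun τ => C (τ ∘ γ1))
    refine ⟨γ2 ∘ γ1, (RS.comp (by omega) hγ2 hγ1).mono (by omega), ?_⟩
    intro σ σ' hσ hσ' p hp hf hag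
    rcases Nat.eq_or_lt_of_le hp with h | h
    · subst h
      have e : ∀ t, t ≤ i → γ2 t = t := fun t ht => hγ2.fix t (by omega)
      refine h1 (σ ∘ γ2) (σ' ∘ γ2) (RS.comp ha hσ (hγ2.mono (by omega)))
        (RS.comp ha hσ' (hγ2.mono (by omega))) ⟨?_, ?_⟩ ?_
      · simp only [Function.comp, e i le_rfl]; exact hf.1
      · intro t ht
        simp only [Function.comp, e t ht.le]; exact hf.2 t ht
      · intro t ht
        simp only [Function.comp, e t ht]; exact hag t ht
    · exact h2 σ σ' hσ hσ' p h hf hag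

theorem RS.ext_last {a n c : ℕ} {f : ℕ → ℕ} (han : a ≤ n) (h : RS a n c f) :
    RS a (n + 1) (c + 1) (Function.update f n c) where
  fix x hx := by rw [Function.update_of_ne (by omega)]; exact h.fix x hx
  zero x hx := by rw [Function.update_of_ne (by omega)]; exact h.zero x (by omega)
  lt x hx := by
    by_cases hxn : x = n
    · subst hxn; simp
    · rw [Function.update_of_ne hxn]
      have := h.lt x (by omega)
      omega
  ord x hx y hy := by
    by_cases hxn : x = n
    · subst hxn
      simp only [Function.update_self] at hy
      obtain ⟨z, hz, hz'⟩ := h.surj y hy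
      exact ⟨z, hz, by rw [Function.update_of_ne (by omega)]; exact hz'⟩
    · rw [Function.update_of_ne hxn] at hy
      obtain ⟨z, hz, hz'⟩ := h.ord x (by omega) y hy
      exact ⟨z, hz, by rw [Function.update_of_ne (by omega)]; exact hz'⟩
  surj y hy := by
    by_cases hyc : y = c
    · exact ⟨n, by omega, by simp [hyc]⟩
    · obtain ⟨z, hz, hz'⟩ := h.surj y (by omega)
      exact ⟨z, by omega, by rw [Function.update_of_ne (by omega)]; exact hz'⟩

theorem RS.pad {a n c : ℕ} {f : ℕ → ℕ} (hc : 1 ≤ c) (h : RS a n c f) : RS a (n + 1) c f where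
  fix := h.fix
  zero x hx := h.zero x (by omega)
  lt x hx := by
    by_cases hxn : x < n
    · exact h.lt x hxn
    · rw [h.zero x (by omega)]; omega
  ord x hx y hy := by
    by_cases hxn : x < n
    · exact h.ord x hxn y hy
    · rw [h.zero x (by omega)] at hy; omega
  surj y hy := by
    obtain ⟨z, hz, hz'⟩ := h.surj y hy
    exact ⟨z, by omega, hz'⟩

def PI (a n : ℕ) {κ : Type} (C : (ℕ → ℕ) → κ) : Prop :=
  ∀ σ σ' p, RS a n (a + 1) σ → RS a n (a + 1) σ' → Fst a p σ → (∀ t, t ≤ p → σ t = σ' t) →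
    C σ = C σ'

theorem fst_comp {a p n b c : ℕ} {σ γ : ℕ → ℕ} (ha : 1 ≤ a) (hσ : RS a b c σ) (hγ : RS a n b γ)
    (hf : Fst a p σ) : ∃ q, q < n ∧ γ q = p ∧ (∀ t, t < q → γ t < p) ∧ Fst a q (σ ∘ γ) := by
  obtain ⟨q, h1, h2, h3⟩ := exists_fst hγ p (hf.lt ha hσ)
  refine ⟨q, h1, h2, h3, ?_, ?_⟩
  · simp only [Function.comp, h2, hf.1]
  · intro t ht
    exact hf.2 _ (h3 t ht)

theorem claim2 (a : ℕ) (ha : 1 ≤ a) (κ : Type) [Finite κ] [Nonempty κ] (M : ℕ) :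
    ∃ n, a + M ≤ n ∧ ∀ C : (ℕ → ℕ) → κ, PI a n C → ∃ γ, RS a n (a + M) γ ∧
      ∀ σ σ' p, RS a (a + M) (a + 1) σ → RS a (a + M) (a + 1) σ' → Fst a p σ → Fst a p σ' →
        C (σ ∘ γ) = C (σ' ∘ γ) := by
  induction M with
  | zero =>
    refine ⟨a, le_rfl, fun C _ => ⟨_, RS.self a a le_rfl, ?_⟩⟩
    intro σ σ' p hσ hσ' hf hf'
    have h1 := hf.lt ha hσ
    have h2 := hf.ge hσ
    omega
  | succ M ih =>
    obtain ⟨b, hb, H⟩ := ih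
    obtain ⟨n, hn, H0⟩ := DR_zero a ha (b - a) κ
    have eb : a + (b - a) = b := by omega
    rw [eb] at hn H0
    refine ⟨n + 1, by omega, fun C hC => ?_⟩
    obtain ⟨γ1, hγ1, j, hj⟩ := H0 (fun u => C (Function.update u n a))
    obtain ⟨γ2, hγ2, h2⟩ := H (fun τ => C (τ ∘ γ1)) (by
      intro σ σ' p hσ hσ' hf hag
      obtain ⟨q, q1, q2, q3, q4⟩ := fst_comp ha hσ hγ1 hf
      refine hC _ _ q ((hσ.comp ha hγ1).pad (by omega)) ((hσ'.comp ha hγ1).pad (by omega)) q4 ?_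
      intro t ht
      simp only [Function.comp]
      apply hag
      rcases Nat.lt_or_eq_of_le ht with h | h
      · exact (q3 t h).le
      · rw [h, q2])
    have hG1 := hγ1.ext_last (by omega)
    have hG2 := hγ2.ext_last (by omega)
    have hG := hG2.comp ha hG1
    refine ⟨_, hG, ?_⟩
    -- description of the composition
    have desc : ∀ σ, RS a (a + M + 1) (a + 1) σ →
        σ ∘ (Function.update γ2 b (a + M) ∘ Function.update γ1 n b) =
        Function.update ((Function.update σ (a + M) 0 ∘ γ2) ∘ γ1) n (σ (a + M)) := by
      intro σ hσ
      funext t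
      by_cases ht : t = n
      · subst ht; simp
      · simp only [Function.comp, Function.update_of_ne ht]
        by_cases htn : t < n
        · have hl := hγ1.lt t htn
          rw [Function.update_of_ne (by omega)]
          have hl2 := hγ2.lt _ hl
          rw [Function.update_of_ne (by omega)]
        · rw [hγ1.zero t (by omega), Function.update_of_ne (by omega), hγ2.fix 0 ha,
            Function.update_of_ne (by omega)]
    have main : ∀ σ p, RS a (a + M + 1) (a + 1) σ → Fst a p σ → p < a + M →
        RS a (a + M) (a + 1) (Function.update σ (a + M) 0) ∧
        Fst a p (Function.update σ (a + M) 0) ∧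
        C (σ ∘ (Function.update γ2 b (a + M) ∘ Function.update γ1 n b)) =
        C ((Function.update σ (a + M) 0 ∘ γ2) ∘ γ1) := by
      intro σ p hσ hf hp
      have hR : RS a (a + M) (a + 1) (Function.update σ (a + M) 0) := by
        refine ⟨?_, ?_, ?_, ?_, ?_⟩
        · intro x hx
          rw [Function.update_of_ne (by omega)]; exact hσ.fix x hx
        · intro x hx
          by_cases h : x = a + M
          · simp [h]
          · rw [Function.update_of_ne h]; exact hσ.zero x (by omega)
        · intro x hx
          rw [Function.update_of_ne (by omega)]; exact hσ.lt x (by omega)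
        · intro x hx y hy
          rw [Function.update_of_ne (by omega)] at hy
          obtain ⟨z, hz, hz'⟩ := hσ.ord x (by omega) y hy
          exact ⟨z, hz, by rw [Function.update_of_ne (by omega)]; exact hz'⟩
        · intro y hy
          by_cases hya : y = a
          · exact ⟨p, hp, by rw [Function.update_of_ne (by omega), hya]; exact hf.1⟩
          · exact ⟨y, by omega, by rw [Function.update_of_ne (by omega)]; exact hσ.fix y (by omega)⟩
      have hF : Fst a p (Function.update σ (a + M) 0) := by
        refine ⟨?_, ?_⟩
        · rw [Function.update_of_ne (by omega)]; exact hf.1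
        · intro t ht
          rw [Function.update_of_ne (by omega)]; exact hf.2 t ht
      refine ⟨hR, hF, ?_⟩
      obtain ⟨q, q1, q2, q3, q4⟩ := fst_comp ha hR (hγ2.comp ha hγ1) hF
      refine (hC _ _ q ((hR.comp ha (hγ2.comp ha hγ1)).pad (by omega)) (hσ.comp ha hG) q4 ?_).symm
      intro t ht
      rw [desc σ hσ, Function.update_of_ne (by omega)]
      rfl
    intro σ σ' p hσ hσ' hf hf'
    have hpl := hf.lt ha hσ
    by_cases hp : p < a + M
    · obtain ⟨r1, r2, r3⟩ := main σ p hσ hf hp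
      obtain ⟨s1, s2, s3⟩ := main σ' p hσ' hf' hp
      rw [r3, s3]
      exact h2 _ _ p r1 s1 r2 s2
    · have hp' : p = a + M := by omega
      subst hp'
      have fin : ∀ σ, RS a (a + M + 1) (a + 1) σ → Fst a (a + M) σ →
          C (σ ∘ (Function.update γ2 b (a + M) ∘ Function.update γ1 n b)) = j := by
        intro σ hσ hf
        rw [desc σ hσ, hf.1]
        refine hj _ (RS.comp ha ?_ hγ2)
        refine ⟨?_, ?_, ?_, ?_, ?_⟩
        · intro x hx
          rw [Function.update_of_ne (by omega)]; exact hσ.fix x hx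
        · intro x hx
          by_cases h : x = a + M
          · simp [h]
          · rw [Function.update_of_ne h]; exact hσ.zero x (by omega)
        · intro x hx
          rw [Function.update_of_ne (by omega)]; exact hf.2 x hx
        · intro x hx y hy
          rw [Function.update_of_ne (by omega)] at hy
          obtain ⟨z, hz, hz'⟩ := hσ.ord x (by omega) y hy
          exact ⟨z, hz, by rw [Function.update_of_ne (by omega)]; exact hz'⟩
        · intro y hy
          exact ⟨y, by omega, by rw [Function.update_of_ne (by omega)]; exact hσ.fix y (by omega)⟩
      rw [fin σ hσ hf, fin σ' hσ' hf']

theorem RS_select (a M m : ℕ) (ha : 1 ≤ a) (S : Finset ℕ) (hS : ∀ x ∈ S, a ≤ x ∧ x < a + M)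
    (hc : S.card = m) : ∃ γ, RS a (a + M) (a + m) γ ∧ ∀ x, a ≤ γ x → a ≤ x → x ∈ S := by
  classical
  let γ : ℕ → ℕ := fun t => if t < a then t else if t ∈ S then a + Nat.count (· ∈ S) t else 0
  have g1 : ∀ t, t < a → γ t = t := fun t h => by simp [γ, h]
  have g2 : ∀ t, t ∈ S → γ t = a + Nat.count (· ∈ S) t := fun t h => by
    have : ¬ t < a := by have := hS t h; omega
    simp [γ, h, this]
  have g3 : ∀ t, a ≤ t → t ∉ S → γ t = 0 := fun t h h' => by
    have : ¬ t < a := by omega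
    simp [γ, h', this]
  have hfin : (Set.ofPred (· ∈ S)).Finite := S.finite_toSet
  have hcard : hfin.toFinset.card = m := by rw [← hc]; congr 1; ext; simp
  have nth_mem : ∀ e, e < m → Nat.nth (· ∈ S) e ∈ S := fun e he =>
    Nat.nth_mem_of_lt_card hfin (by rw [hcard]; exact he)
  have cnt : ∀ e, e < m → Nat.count (· ∈ S) (Nat.nth (· ∈ S) e) = e := fun e he =>
    Nat.count_nth_of_lt_card_finite hfin (by rw [hcard]; exact he)
  have clt : ∀ t, t ∈ S → Nat.count (· ∈ S) t < m := fun t ht => by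
    have := Nat.count_lt_card hfin ht
    rwa [hcard] at this
  refine ⟨γ, ⟨g1, ?_, ?_, ?_, ?_⟩, ?_⟩
  · intro x hx
    exact g3 x (by omega) (fun h => by have := hS x h; omega)
  · intro x hx
    by_cases h1 : x < a
    · rw [g1 x h1]; omega
    by_cases h2 : x ∈ S
    · rw [g2 x h2]; have := clt x h2; omega
    · rw [g3 x (by omega) h2]; omega
  · intro x hx y hy
    by_cases h1 : x < a
    · rw [g1 x h1] at hy
      exact ⟨y, hy, g1 y (by omega)⟩
    by_cases h2 : x ∈ S
    · by_cases h3 : y < a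
      · exact ⟨y, by omega, g1 y h3⟩
      · rw [g2 x h2] at hy
        have hlt : y - a < Nat.count (· ∈ S) x := by omega
        have hm : y - a < m := hlt.trans (clt x h2)
        refine ⟨Nat.nth (· ∈ S) (y - a), Nat.nth_lt_of_lt_count hlt, ?_⟩
        rw [g2 _ (nth_mem _ hm), cnt _ hm]
        omega
    · rw [g3 x (by omega) h2] at hy; omega
  · intro y hy
    by_cases h3 : y < a
    · exact ⟨y, by omega, g1 y h3⟩
    · have hm : y - a < m := by omega
      refine ⟨Nat.nth (· ∈ S) (y - a), (hS _ (nth_mem _ hm)).2, ?_⟩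
      rw [g2 _ (nth_mem _ hm), cnt _ hm]
      omega
  · intro x hx hax
    by_contra h
    rw [g3 x hax h] at hx
    omega

theorem DR_succ (a k : ℕ) (ha : 1 ≤ a) (hD : DR (a + 1) k) : DR a (k + 1) := by
  classical
  intro m κ _ _
  have := Fintype.ofFinite κ
  obtain ⟨b, hb, H2⟩ := claim2 a ha κ (Fintype.card κ * m)
  obtain ⟨n, hn, H1⟩ := claim1 a k b ha hD κ (b - a) a le_rfl (by omega)
  have hcm : m ≤ Fintype.card κ * m := Nat.le_mul_of_pos_left m Fintype.card_pos
  refine ⟨n, by omega, fun C => ?_⟩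
  obtain ⟨γ1, hγ1, h1⟩ := H1 C
  let Q : (ℕ → ℕ) → (ℕ → ℕ) → Prop := fun τ σ =>
    RS a b (a + k + 1) σ ∧ ∃ p, Fst a p τ ∧ ∀ t, t ≤ p → σ t = τ t
  let C2 : (ℕ → ℕ) → κ := fun τ => C (Classical.epsilon (Q τ) ∘ γ1)
  have huniq : ∀ {p q : ℕ} {τ : ℕ → ℕ}, Fst a p τ → Fst a q τ → p = q := by
    intro p q τ hp hq
    rcases lt_trichotomy p q with h | h | h
    · have := hq.2 p h; have := hp.1; omega
    · exact h
    · have := hp.2 q h; have := hq.1; omega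
  have hfc : ∀ {p : ℕ} {τ τ' : ℕ → ℕ}, (∀ t, t ≤ p → τ t = τ' t) → Fst a p τ → Fst a p τ' := by
    intro p τ τ' h hf
    exact ⟨by rw [← h p le_rfl]; exact hf.1, fun t ht => by rw [← h t ht.le]; exact hf.2 t ht⟩
  have hC2 : PI a b C2 := by
    intro τ τ' p hτ hτ' hf hag
    have : Q τ = Q τ' := by
      funext σ
      apply propext
      constructor
      · rintro ⟨x1, q, x2, x3⟩
        have := huniq hf x2
        subst this
        exact ⟨x1, p, hfc hag hf, fun t ht => (x3 t ht).trans (hag t ht)⟩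
      · rintro ⟨x1, q, x2, x3⟩
        have := huniq (hfc hag hf) x2
        subst this
        exact ⟨x1, p, hf, fun t ht => (x3 t ht).trans (hag t ht).symm⟩
    simp only [C2, this]
  obtain ⟨γ2, hγ2, h2⟩ := H2 C2 hC2
  let M := Fintype.card κ * m
  let R : ℕ → (ℕ → ℕ) → Prop := fun p σ => RS a (a + M) (a + 1) σ ∧ Fst a p σ
  let f : ℕ → κ := fun p => C2 (Classical.epsilon (R p) ∘ γ2)
  obtain ⟨j, -, hj⟩ := Finset.exists_le_card_fiber_of_mul_le_card_of_maps_to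
    (s := Finset.Ico a (a + M)) (t := (Finset.univ : Finset κ)) (f := f) (n := m)
    (fun _ _ => Finset.mem_univ _) Finset.univ_nonempty (by simp [M])
  obtain ⟨S, hS, hSc⟩ := Finset.exists_subset_card_eq hj
  obtain ⟨γ3, hγ3, hsel⟩ := RS_select a M m ha S (fun x hx => by
    have := hS hx
    simp only [Finset.mem_filter, Finset.mem_Ico] at this
    exact this.1) hSc
  have h32 := hγ3.comp ha hγ2
  refine ⟨(γ3 ∘ γ2) ∘ γ1, h32.comp ha hγ1, j, ?_⟩
  intro σ hσ
  let σb : ℕ → ℕ := fun t => min (σ t) a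
  have hσb : RS a (a + m) (a + 1) σb := by
    refine ⟨?_, ?_, ?_, ?_, ?_⟩
    · intro x hx
      simp only [σb, hσ.fix x hx]; omega
    · intro x hx
      simp only [σb, hσ.zero x hx]; omega
    · intro x hx
      simp only [σb]; omega
    · intro x hx y hy
      simp only [σb] at hy ⊢
      obtain ⟨z, hz, hz'⟩ := hσ.ord x hx y (by omega)
      exact ⟨z, hz, by omega⟩
    · intro y hy
      obtain ⟨z, hz, hz'⟩ := hσ.surj y (by omega)
      exact ⟨z, hz, by simp only [σb]; omega⟩
  obtain ⟨p0, hp0, hp1, hp2⟩ := exists_fst hσ a (by omega)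
  have hF : Fst a p0 σ := ⟨hp1, hp2⟩
  have hFb : Fst a p0 σb := ⟨by simp [σb, hp1], fun t ht => by
    simp only [σb]; have := hp2 t ht; omega⟩
  obtain ⟨q, q1, q2, q3, q4⟩ := fst_comp ha hσ h32 hF
  have hQ : Q (σb ∘ γ3 ∘ γ2) (σ ∘ γ3 ∘ γ2) := by
    refine ⟨hσ.comp ha h32, q, ?_, ?_⟩
    · refine ⟨?_, ?_⟩
      · show σb ((γ3 ∘ γ2) q) = a
        rw [q2]; exact hFb.1
      · intro t ht
        exact hFb.2 _ (q3 t ht)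
    · intro t ht
      show σ ((γ3 ∘ γ2) t) = min (σ ((γ3 ∘ γ2) t)) a
      rcases Nat.lt_or_eq_of_le ht with h | h
      · have := hF.2 _ (q3 t h); omega
      · rw [h, q2, hF.1]; simp
  have hE : Q (σb ∘ γ3 ∘ γ2) (Classical.epsilon (Q (σb ∘ γ3 ∘ γ2))) :=
    Classical.epsilon_spec ⟨_, hQ⟩
  have e1 : C ((σ ∘ γ3 ∘ γ2) ∘ γ1) = C2 (σb ∘ γ3 ∘ γ2) := by
    obtain ⟨x1, u, x2, x3⟩ := hQ
    obtain ⟨y1, v, y2, y3⟩ := hE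
    have := huniq x2 y2
    subst this
    have hfu : Fst a u (σ ∘ γ3 ∘ γ2) := hfc (fun t ht => (x3 t ht).symm) x2
    exact h1 _ _ x1 y1 u (hfu.ge x1) hfu
      (fun t ht => (x3 t ht).trans (y3 t ht).symm)
  obtain ⟨p, p1, p2, p3, p4⟩ := fst_comp ha hσb hγ3 hFb
  have hpa : a ≤ p := p4.ge (hσb.comp ha hγ3)
  have hpS : p ∈ S := hsel p (by rw [p2]; exact hFb.ge hσb) hpa
  have hfp : f p = j := (Finset.mem_filter.mp (hS hpS)).2
  have hRp : R p (σb ∘ γ3) := ⟨hσb.comp ha hγ3, p4⟩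
  have hEp : R p (Classical.epsilon (R p)) := Classical.epsilon_spec ⟨_, hRp⟩
  have e2 : C2 ((σb ∘ γ3) ∘ γ2) = f p := h2 _ _ p hRp.1 hEp.1 hRp.2 hEp.2
  rw [← hfp, ← e2]
  exact e1

theorem DR_all (k : ℕ) : ∀ a, 1 ≤ a → DR a k := by
  induction k with
  | zero => exact fun a ha => DR_zero a ha
  | succ k ih => exact fun a ha => DR_succ a k ha (ih (a + 1) (by omega))

noncomputable def colMap {n d : ℕ} (v : Fin n → L1C d) : L1C n →L[ℂ] L1C d :=
  ∑ t, (PiLp.proj 1 (𝕜 := ℂ) (fun _ : Fin n => ℂ) t).smulRight (v t)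

theorem colMap_apply {n d : ℕ} (v : Fin n → L1C d) (x : L1C n) :
    colMap v x = ∑ t, x t • v t := by
  simp [colMap]

noncomputable def stdv {d : ℕ} (i : Fin d) : L1C d := WithLp.toLp 1 (Pi.single i 1)

theorem norm_stdv {d : ℕ} (i : Fin d) : ‖stdv i‖ = 1 := by
  classical
  rw [PiLp.norm_eq_of_L1, Finset.sum_eq_single i]
  · simp [stdv]
  · intro j _ hj
    simp [stdv, hj]
  · simp

theorem sum_stdv {d : ℕ} (y : L1C d) : ∑ i, y i • stdv i = y := by
  classical
  ext k
  rw [WithLp.ofLp_sum, Finset.sum_apply, Finset.sum_eq_single k]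
  · simp [stdv]
  · intro j _ hj
    simp [stdv, hj.symm]
  · simp

theorem norm_colMap_apply {n d : ℕ} (v : Fin n → L1C d) (ε : ℝ) (hv : ∀ t, ‖v t‖ ≤ ε)
    (x : L1C n) : ‖colMap v x‖ ≤ ε * ‖x‖ := by
  rw [colMap_apply, PiLp.norm_eq_of_L1 x, Finset.mul_sum]
  refine (norm_sum_le _ _).trans (Finset.sum_le_sum fun t _ => ?_)
  rw [norm_smul, mul_comm]
  exact mul_le_mul_of_nonneg_right (hv t) (norm_nonneg _)

theorem colMap_stdv {n d : ℕ} (v : Fin n → L1C d) (t : Fin n) : colMap v (stdv t) = v t := by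
  classical
  rw [colMap_apply, Finset.sum_eq_single t]
  · simp [stdv]
  · intro j _ hj
    simp [stdv, hj]
  · simp

theorem colMap_cq {n d : ℕ} (v : Fin n → L1C d) (hv : ∀ t, ‖v t‖ ≤ 1)
    (he : ∀ i : Fin d, ∃ t, v t = stdv i) : IsContractiveQuotient (colMap v) := by
  apply Set.Subset.antisymm
  · rintro _ ⟨x, hx, rfl⟩
    rw [mem_closedBall_zero_iff] at hx ⊢
    have := norm_colMap_apply v 1 hv x
    linarith
  · intro y hy
    rw [mem_closedBall_zero_iff] at hy
    choose t ht using he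
    refine ⟨∑ i, y i • stdv (t i), ?_, ?_⟩
    · rw [mem_closedBall_zero_iff]
      refine (norm_sum_le _ _).trans ?_
      refine le_trans (le_of_eq ?_) hy
      rw [PiLp.norm_eq_of_L1]
      exact Finset.sum_congr rfl fun i _ => by rw [norm_smul, norm_stdv, mul_one]
    · rw [map_sum]
      simp only [map_smul, colMap_stdv, ht]
      exact sum_stdv y

theorem comp_colMap {n m d : ℕ} (ρ : L1C m →L[ℂ] L1C d) (v : Fin n → L1C m) :
    ρ.comp (colMap v) = colMap (fun t => ρ (v t)) := by
  ext1 x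
  simp [colMap_apply, map_sum]

theorem norm_colMap_sub {n d : ℕ} (v w : Fin n → L1C d) (ε : ℝ) (hε : 0 ≤ ε)
    (h : ∀ t, ‖v t - w t‖ ≤ ε) : ‖colMap v - colMap w‖ ≤ ε := by
  refine ContinuousLinearMap.opNorm_le_bound _ hε fun x => ?_
  have : (colMap v - colMap w) x = colMap (fun t => v t - w t) x := by
    simp [colMap_apply, smul_sub]
  rw [this]
  exact norm_colMap_apply _ ε h x

theorem exists_net (d : ℕ) (δ : ℝ) (hδ : 0 < δ) : ∃ (b : ℕ) (f : ℕ → L1C d), 0 < b ∧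
    (∀ l, ‖f l‖ ≤ 1) ∧ (∀ x, ‖x‖ ≤ 1 → ∃ l, l < b ∧ ‖x - f l‖ ≤ δ) ∧
    ∀ i : Fin d, ∃ l, l < b ∧ f l = stdv i := by
  classical
  obtain ⟨t, ht, htf, hcov⟩ := (isCompact_closedBall (0 : L1C d) 1).finite_cover_balls hδ
  let s : Finset (L1C d) := htf.toFinset ∪ Finset.univ.image stdv
  let L := s.toList
  have hL : ∀ x ∈ s, ∃ l, l < L.length ∧ L.getD l 0 = x := by
    intro x hx
    obtain ⟨l, hl, rfl⟩ := List.getElem_of_mem (Finset.mem_toList.mpr hx)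
    exact ⟨l, hl, List.getD_eq_getElem _ _ hl⟩
  have hs : ∀ x ∈ s, ‖x‖ ≤ 1 := by
    intro x hx
    rcases Finset.mem_union.mp hx with h | h
    · simpa using ht (htf.mem_toFinset.mp h)
    · obtain ⟨i, -, rfl⟩ := Finset.mem_image.mp h
      exact (norm_stdv i).le
  have hnet : ∀ x : L1C d, ‖x‖ ≤ 1 → ∃ l, l < L.length ∧ ‖x - L.getD l 0‖ ≤ δ := by
    intro x hx
    have := hcov (mem_closedBall_zero_iff.mpr hx)
    simp only [Set.mem_iUnion, Metric.mem_ball, exists_prop] at this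
    obtain ⟨y, hy, hxy⟩ := this
    obtain ⟨l, hl, e⟩ := hL y (Finset.mem_union_left _ (htf.mem_toFinset.mpr hy))
    exact ⟨l, hl, by rw [e, ← dist_eq_norm]; exact hxy.le⟩
  refine ⟨L.length, fun l => L.getD l 0, ?_, ?_, hnet, ?_⟩
  · obtain ⟨l, hl, -⟩ := hnet 0 (by simp)
    omega
  · intro l
    show ‖L.getD l 0‖ ≤ 1
    by_cases hl : l < L.length
    · rw [List.getD_eq_getElem _ _ hl]
      exact hs _ (Finset.mem_toList.mp (List.getElem_mem hl))
    · rw [List.getD_eq_default _ _ (by omega)]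
      simp
  · intro i
    exact hL _ (Finset.mem_union_right _ (Finset.mem_image_of_mem _ (Finset.mem_univ i)))

theorem cq_le {m d : ℕ} {ρ : L1C m →L[ℂ] L1C d} (h : IsContractiveQuotient ρ) (x : L1C m) (R : ℝ)
    (hR : 0 < R) (hx : ‖x‖ ≤ R) : ‖ρ x‖ ≤ R := by
  have hmem : ρ ((R : ℂ)⁻¹ • x) ∈ Metric.closedBall (0 : L1C d) 1 := by
    rw [← h]
    refine ⟨_, ?_, rfl⟩
    rw [mem_closedBall_zero_iff, norm_smul, norm_inv, Complex.norm_real, Real.norm_of_nonneg hR.le]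
    rw [inv_mul_le_iff₀ hR]
    linarith
  rw [mem_closedBall_zero_iff, map_smul, norm_smul, norm_inv, Complex.norm_real,
    Real.norm_of_nonneg hR.le, inv_mul_le_iff₀ hR] at hmem
  linarith

/-- Scaled net. -/
noncomputable def pts {d : ℕ} (N b : ℕ) (f : ℕ → L1C d) (j : ℕ) : L1C d :=
  (((j / b : ℕ) : ℂ) / (N : ℂ)) • f (j % b)

theorem norm_lev (s N : ℕ) : ‖((s : ℂ) / (N : ℂ))‖ = (s : ℝ) / N := by
  simp

theorem exists_sigma {m d : ℕ} (ε : ℝ) (N b b' : ℕ) (hN : 0 < N) (hb : 0 < b) (hb' : 0 < b')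
    (hNε : 1 / (N : ℝ) ≤ ε / 2) (hε : 0 < ε)
    (f : ℕ → L1C d) (g : ℕ → L1C m) (hf : ∀ l, ‖f l‖ ≤ 1) (hg : ∀ l, ‖g l‖ ≤ 1)
    (hfn : ∀ x, ‖x‖ ≤ 1 → ∃ l, l < b ∧ ‖x - f l‖ ≤ ε / 2)
    (hgn : ∀ x, ‖x‖ ≤ 1 → ∃ l, l < b' ∧ ‖x - g l‖ ≤ ε / 2)
    (ρ : L1C m →L[ℂ] L1C d) (hρ : IsContractiveQuotient ρ) :
    ∃ σ, RS 1 (b * (N + 1) * b') (b * (N + 1)) σ ∧ ∀ t, t < b * (N + 1) * b' →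
      ‖ρ ((((t / b' / b : ℕ) : ℂ) / (N : ℂ)) • g (t % b')) - pts N b f (σ t)‖ ≤ ε := by
  classical
  have hNr : (0 : ℝ) < N := by exact_mod_cast hN
  have hlev : ∀ j, j < b * (N + 1) → (((j / b : ℕ) : ℝ) / N) ≤ 1 := by
    intro j hj
    rw [div_le_one hNr]
    have : j / b < N + 1 := Nat.div_lt_of_lt_mul hj
    exact_mod_cast Nat.lt_succ_iff.mp this
  -- density
  have dens : ∀ j, j < b * (N + 1) → ∀ l, ∃ i, i ≤ j ∧
      ‖ρ ((((j / b : ℕ) : ℂ) / (N : ℂ)) • g l) - pts N b f i‖ ≤ ε := by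
    intro j hj l
    obtain ⟨s, hs⟩ : ∃ s, s = j / b := ⟨_, rfl⟩
    have hl := hlev j hj
    rw [← hs] at hl ⊢
    rcases Nat.eq_zero_or_pos s with h0 | hpos
    · refine ⟨0, by omega, ?_⟩
      simp [h0, pts, hε.le]
    · obtain ⟨i, hi, hi'⟩ := hfn (ρ (g l)) (cq_le hρ _ 1 one_pos (hg l))
      have hjb := Nat.div_add_mod j b
      rw [← hs] at hjb
      obtain ⟨u, rfl⟩ : ∃ u, s = u + 1 := ⟨s - 1, by omega⟩
      have hexp : b * (u + 1) = b * u + b := by ring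
      refine ⟨b * u + i, by omega, ?_⟩
      have e1 : (b * u + i) / b = u := by
        rw [Nat.mul_add_div hb, Nat.div_eq_of_lt hi]; simp
      have e2 : (b * u + i) % b = i := by
        rw [Nat.mul_add_mod, Nat.mod_eq_of_lt hi]
      rw [pts, e1, e2, map_smul]
      have e3 : (((u + 1 : ℕ) : ℂ) / (N : ℂ)) • ρ (g l) - ((u : ℂ) / (N : ℂ)) • f i =
          (((u + 1 : ℕ) : ℂ) / (N : ℂ)) • (ρ (g l) - f i) + (((1 : ℕ) : ℂ) / (N : ℂ)) • f i := by
        push_cast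
        module
      rw [e3]
      refine (norm_add_le _ _).trans ?_
      rw [norm_smul, norm_smul, norm_lev, norm_lev]
      have k1 : ((u + 1 : ℕ) : ℝ) / N * ‖ρ (g l) - f i‖ ≤ 1 * (ε / 2) :=
        mul_le_mul hl hi' (norm_nonneg _) zero_le_one
      have k2 : ((1 : ℕ) : ℝ) / N * ‖f i‖ ≤ (ε / 2) * 1 :=
        mul_le_mul (by simpa using hNε) (hf i) (norm_nonneg _) (by positivity)
      linarith
  -- hitting
  have hit : ∀ j, ∃ l, l < b' ∧ (j < b * (N + 1) →
      ‖ρ ((((j / b : ℕ) : ℂ) / (N : ℂ)) • g l) - pts N b f j‖ ≤ ε) := by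
    intro j
    have hm : f (j % b) ∈ ⇑ρ '' Metric.closedBall 0 1 := by
      rw [hρ]; simpa using hf _
    obtain ⟨x, hx, hxe⟩ := hm
    obtain ⟨l, hl, hl'⟩ := hgn x (by simpa using hx)
    refine ⟨l, hl, fun hj => ?_⟩
    rw [pts, map_smul, ← smul_sub, norm_smul, norm_lev, ← hxe, ← map_sub]
    have k0 : ‖ρ (g l - x)‖ ≤ ε / 2 :=
      cq_le hρ _ _ (by positivity) (by rw [norm_sub_rev]; exact hl')
    have k1 : (((j / b : ℕ) : ℝ) / N) * ‖ρ (g l - x)‖ ≤ 1 * (ε / 2) :=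
      mul_le_mul (hlev j hj) k0 (norm_nonneg _) zero_le_one
    linarith
  choose lam hl1 hl2 using hit
  have dens' : ∀ t, ∃ i, t < b * (N + 1) * b' → (i ≤ t / b' ∧
      ‖ρ ((((t / b' / b : ℕ) : ℂ) / (N : ℂ)) • g (t % b')) - pts N b f i‖ ≤ ε) := by
    intro t
    by_cases ht : t < b * (N + 1) * b'
    · obtain ⟨i, hi⟩ := dens (t / b') (by rwa [Nat.div_lt_iff_lt_mul hb']) (t % b')
      exact ⟨i, fun _ => hi⟩
    · exact ⟨0, fun h => absurd h ht⟩
  choose idx hidx using dens'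
  let σ : ℕ → ℕ := fun t => if t < b * (N + 1) * b' then
    (if t % b' = lam (t / b') then t / b' else idx t) else 0
  have hle : ∀ t, t < b * (N + 1) * b' → σ t ≤ t / b' := by
    intro t ht
    simp only [σ, ht, if_true]
    split
    · exact le_rfl
    · exact (hidx t ht).1
  have hhit : ∀ j, j < b * (N + 1) → b' * j + lam j < b * (N + 1) * b' ∧
      σ (b' * j + lam j) = j ∧ (b' * j + lam j) < b' * (j + 1) := by
    intro j hj
    have h1 := hl1 j
    have h0 : b' * (j + 1) ≤ b * (N + 1) * b' := by
      rw [mul_comm _ b']; exact Nat.mul_le_mul_left _ hj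
    have h00 : b' * (j + 1) = b' * j + b' := by ring
    have hlt : b' * j + lam j < b * (N + 1) * b' := by omega
    have e1 : (b' * j + lam j) / b' = j := by
      rw [Nat.mul_add_div hb', Nat.div_eq_of_lt h1]; simp
    have e2 : (b' * j + lam j) % b' = lam j := by
      rw [Nat.mul_add_mod, Nat.mod_eq_of_lt h1]
    refine ⟨hlt, ?_, by omega⟩
    simp only [σ, hlt, if_true, e1, e2]
  refine ⟨σ, ⟨?_, ?_, ?_, ?_, ?_⟩, ?_⟩
  · intro x hx
    have hx0 : x = 0 := by omega
    subst hx0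
    have := hle 0 (by positivity)
    simpa using this
  · intro x hx
    have : ¬ x < b * (N + 1) * b' := by omega
    simp [σ, this]
  · intro x hx
    have h1 := hle x hx
    have h2 : x / b' < b * (N + 1) := by rwa [Nat.div_lt_iff_lt_mul hb']
    omega
  · intro x hx y hy
    have h1 := hle x hx
    have h2 : x / b' < b * (N + 1) := by rwa [Nat.div_lt_iff_lt_mul hb']
    obtain ⟨k1, k2, k3⟩ := hhit y (by omega)
    refine ⟨_, ?_, k2⟩
    have h3 : b' * (y + 1) ≤ b' * (x / b') := Nat.mul_le_mul_left _ (by omega)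
    have h4 := Nat.mul_div_le x b'
    omega
  · intro y hy
    obtain ⟨k1, k2, k3⟩ := hhit y hy
    exact ⟨_, k1, k2⟩
  · intro t ht
    simp only [σ, ht, if_true]
    split
    · rename_i h
      have := hl2 (t / b') (by rwa [Nat.div_lt_iff_lt_mul hb'])
      rwa [← h] at this
    · exact (hidx t ht).2

theorem arp_dual_l1_complex (d m r : ℕ) (ε : ℝ) (hε : 0 < ε) :
    ∃ n : ℕ, ∀ c : {φ : L1C n →L[ℂ] L1C d // IsContractiveQuotient φ} → Fin r,
      ∃ (γ : L1C n →L[ℂ] L1C m) (_ : IsContractiveQuotient γ) (j : Fin r),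
        ∀ ρ : L1C m →L[ℂ] L1C d, IsContractiveQuotient ρ →
          ∃ (ρ' : L1C n →L[ℂ] L1C d) (hρ' : IsContractiveQuotient ρ'),
            c ⟨ρ', hρ'⟩ = j ∧ ‖ρ.comp γ - ρ'‖ ≤ ε := by
  classical
  rcases Nat.eq_zero_or_pos r with hr | hr
  · subst hr
    refine ⟨d, fun c => ?_⟩
    exact (c ⟨ContinuousLinearMap.id ℂ _, by simp [IsContractiveQuotient]⟩).elim0
  have : Nonempty (Fin r) := ⟨⟨0, hr⟩⟩
  obtain ⟨b, f, hb, hf, hfn, hfe⟩ := exists_net d (ε / 2) (by positivity)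
  obtain ⟨b', g, hb', hg, hgn, hge⟩ := exists_net m (ε / 2) (by positivity)
  obtain ⟨N0, hN0⟩ := exists_nat_one_div_lt (show 0 < ε / 2 by positivity)
  obtain ⟨N, hN⟩ : ∃ N, N = N0 + 1 := ⟨_, rfl⟩
  have hNε : 1 / (N : ℝ) ≤ ε / 2 := by rw [hN]; push_cast; exact hN0.le
  have hNpos : 0 < N := by omega
  have hNr : (0 : ℝ) < N := by exact_mod_cast hNpos
  have hNc : (N : ℂ) ≠ 0 := by exact_mod_cast hNpos.ne'
  obtain ⟨B, hB⟩ : ∃ B, B = b * (N + 1) := ⟨_, rfl⟩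
  have hBpos : 0 < B := by rw [hB]; positivity
  have hBb : 0 < B * b' := by positivity
  have hlev : ∀ j, j < B → (((j / b : ℕ) : ℝ) / N) ≤ 1 := by
    intro j hj
    rw [div_le_one hNr]
    have : j / b < N + 1 := Nat.div_lt_of_lt_mul (by rw [← hB]; exact hj)
    exact_mod_cast Nat.lt_succ_iff.mp this
  have hp1 : ∀ j, j < B → ‖pts N b f j‖ ≤ 1 := by
    intro j hj
    rw [pts, norm_smul, norm_lev]
    exact mul_le_one₀ (hlev j hj) (norm_nonneg _) (hf _)
  have hpe : ∀ i : Fin d, ∃ j, j < B ∧ pts N b f j = stdv i := by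
    intro i
    obtain ⟨l, hl, he⟩ := hfe i
    refine ⟨b * N + l, by rw [hB, Nat.mul_add]; omega, ?_⟩
    rw [pts, Nat.mul_add_div hb, Nat.div_eq_of_lt hl, Nat.mul_add_mod, Nat.mod_eq_of_lt hl, he]
    simp [div_self hNc]
  let q : ℕ → L1C m := fun t => (((t / b' / b : ℕ) : ℂ) / (N : ℂ)) • g (t % b')
  have hq1 : ∀ t, t < B * b' → ‖q t‖ ≤ 1 := by
    intro t ht
    simp only [q]
    rw [norm_smul, norm_lev]
    exact mul_le_one₀ (hlev _ (by rwa [Nat.div_lt_iff_lt_mul hb'])) (norm_nonneg _) (hg _)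
  have hqe : ∀ i : Fin m, ∃ t, t < B * b' ∧ q t = stdv i := by
    intro i
    obtain ⟨l, hl, he⟩ := hge i
    have hlt : b * N < B := by rw [hB, Nat.mul_add]; omega
    refine ⟨b' * (b * N) + l, ?_, ?_⟩
    · have h0 : b' * (b * N + 1) ≤ B * b' := by
        rw [mul_comm B b']; exact Nat.mul_le_mul_left _ hlt
      rw [Nat.mul_add] at h0
      omega
    · simp only [q]
      rw [Nat.mul_add_div hb', Nat.div_eq_of_lt hl, Nat.mul_add_mod, Nat.mod_eq_of_lt hl, he,
        Nat.add_zero, Nat.mul_div_cancel_left _ hb, div_self hNc, one_smul]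
  obtain ⟨n, hn, H⟩ := DR_all (B - 1) 1 le_rfl (B * b' - 1) (Fin r)
  have e1 : 1 + (B * b' - 1) = B * b' := by omega
  have e2 : 1 + (B - 1) = B := by omega
  rw [e1, e2] at H
  refine ⟨n, fun c => ?_⟩
  obtain ⟨γ, hγ, j, hj⟩ := H (fun τ =>
    if h : IsContractiveQuotient (colMap fun t : Fin n => pts N b f (τ t)) then c ⟨_, h⟩
    else ⟨0, hr⟩)
  refine ⟨colMap fun t : Fin n => q (γ t), ?_, j, ?_⟩
  · refine colMap_cq _ (fun t => hq1 _ (hγ.lt t t.2)) fun i => ?_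
    obtain ⟨t, ht, hte⟩ := hqe i
    obtain ⟨x, hx, rfl⟩ := hγ.surj t ht
    exact ⟨⟨x, hx⟩, hte⟩
  · intro ρ hρ
    obtain ⟨σ, hσ, hσε⟩ := exists_sigma ε N b b' hNpos hb hb' hNε hε f g hf hg hfn hgn ρ hρ
    rw [← hB] at hσ hσε
    have hτ := hσ.comp le_rfl hγ
    have hcq : IsContractiveQuotient (colMap fun t : Fin n => pts N b f ((σ ∘ γ) t)) := by
      refine colMap_cq _ (fun t => hp1 _ (hτ.lt t t.2)) fun i => ?_
      obtain ⟨t, ht, hte⟩ := hpe i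
      obtain ⟨x, hx, hxe⟩ := hτ.surj t ht
      exact ⟨⟨x, hx⟩, by simp only [hxe, hte]⟩
    refine ⟨_, hcq, ?_, ?_⟩
    · have := hj σ hσ
      rwa [dif_pos hcq] at this
    · rw [comp_colMap]
      exact norm_colMap_sub _ _ ε hε.le fun t => hσε _ (hγ.lt t t.2)
end

section
/- For every d, m, r ∈ ℕ and every ε > 0 there exists n ∈ ℕ such that for every coloring c of the set of linear isometric embeddings of ℓ∞^d(ℝ) into ℓ∞^n(ℝ) with r colors, there exist a linear isometric embedding γ : ℓ∞^m(ℝ) → ℓ∞^n(ℝ) and a color j such that for every linear isometric embedding η : ℓ∞^d(ℝ) → ℓ∞^m(ℝ) there is a linear isometric embedding ξ : ℓ∞^d(ℝ) → ℓ∞^n(ℝ) with c(ξ) = j and ‖γ ∘ η − ξ‖ ≤ ε (operator norm). -/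
/-- `ℓ∞ⁿ(ℝ)`: the space `ℝⁿ` with the supremum norm. -/
abbrev LinfR (n : ℕ) : Type := PiLp ⊤ (fun _ : Fin n => ℝ)


inductive RigidW : ℕ → ℕ → List ℕ → Prop
  | nil (k : ℕ) : RigidW k k []
  | old {a k b : ℕ} {w : List ℕ} : b < a → RigidW a k w → RigidW a k (b :: w)
  | new {a k : ℕ} {w : List ℕ} : RigidW (a + 1) k w → RigidW a k (a :: w)

def subW (t σ : List ℕ) : List ℕ := σ.map (fun i => t.getD i 0)

lemma subW_length (t σ : List ℕ) : (subW t σ).length = σ.length := by simp [subW]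

lemma subW_append (t σ σ' : List ℕ) : subW t (σ ++ σ') = subW t σ ++ subW t σ' := by
  simp [subW]

lemma RigidW.le {a k : ℕ} {w : List ℕ} (h : RigidW a k w) : a ≤ k := by
  induction h <;> omega

lemma RigidW.lt {a k : ℕ} {w : List ℕ} (h : RigidW a k w) : ∀ x ∈ w, x < k := by
  induction h with
  | nil => simp
  | old hb h ih => have := h.le; simp; exact ⟨by omega, ih⟩
  | new h ih => have := h.le; simp; exact ⟨by omega, ih⟩

lemma RigidW.append {a b k : ℕ} {w w' : List ℕ} (h : RigidW a b w) (h' : RigidW b k w') :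
    RigidW a k (w ++ w') := by
  induction h with
  | nil => simpa
  | old hb h ih => exact RigidW.old hb (ih h')
  | new h ih => exact RigidW.new (ih h')

lemma RigidW.of_lt {a : ℕ} {w : List ℕ} (h : ∀ x ∈ w, x < a) : RigidW a a w := by
  induction w with
  | nil => exact RigidW.nil a
  | cons x w ih => 
    simp at h
    exact RigidW.old h.1 (ih h.2)

lemma RigidW.mem {a k : ℕ} {w : List ℕ} (h : RigidW a k w) : ∀ x, a ≤ x → x < k → x ∈ w := by
  induction h with
  | nil => intros; omega
  | old hb h ih => intro x h1 h2; simp [ih x h1 h2]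
  | @new a k w h ih => 
    intro x h1 h2
    rcases Nat.eq_or_lt_of_le h1 with rfl | h3
    · simp
    · simp [ih x h3 h2]

lemma RigidW.shift {a k : ℕ} {w : List ℕ} (h : RigidW a k w) : ∀ s, s ≤ a →
    RigidW (a + 1) (k + 1) (w.map (fun i => if i < s then i else i + 1)) := by
  induction h with
  | nil => intro s _; exact RigidW.nil _
  | old hb h ih => 
    intro s hs
    refine RigidW.old ?_ (ih s hs)
    beta_reduce
    split_ifs <;> omega
  | @new a k w h ih => 
    intro s hs
    rw [List.map_cons, if_neg (by omega)]
    exact RigidW.new (ih s (by omega))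

lemma RigidW.decomp {a k : ℕ} {w : List ℕ} (h : RigidW a k w) : a < k →
    ∃ u v, w = u ++ a :: v ∧ (∀ x ∈ u, x < a) ∧ RigidW (a + 1) k v := by
  induction h with
  | nil => intro; omega
  | @old a k b w hb h ih => 
    intro hk
    obtain ⟨u, v, rfl, h1, h2⟩ := ih hk
    exact ⟨b :: u, v, rfl, by simpa using ⟨hb, h1⟩, h2⟩
  | @new a k w h ih => 
    intro hk
    exact ⟨[], w, rfl, by simp, h⟩

lemma RigidW.comp {a m : ℕ} {σ : List ℕ} (h : RigidW a m σ) : ∀ {a' k : ℕ} {e τ : List ℕ},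
    e.length = a → (∀ x ∈ e, x < a') → RigidW a' k τ → e.length + τ.length = m →
    RigidW a' k (subW (e ++ τ) σ) := by
  induction h with
  | nil => 
    intro a' k e τ h1 h2 h3 h4
    have : τ = [] := List.eq_nil_of_length_eq_zero (by omega)
    subst this
    simpa [subW] using h3
  | @old a m b w hb h ih => 
    intro a' k e τ h1 h2 h3 h4
    refine RigidW.old ?_ (ih h1 h2 h3 h4)
    have : b < e.length := by omega
    beta_reduce
    rw [List.getD_append _ _ _ _ this, List.getD_eq_getElem _ _ this]
    exact h2 _ (List.getElem_mem _)
  | @new a m w h ih => 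
    intro a' k e τ h1 h2 h3 h4
    have hm := h.le
    cases h3 with
    | nil => simp at h4; omega
    | @old _ _ b τ hb h3 =>
      have := ih (e := e ++ [b]) (by simp [h1])
        (by simp only [List.mem_append, List.mem_singleton]; rintro x (hx | rfl); exacts [h2 x hx, hb]) 
        h3 (by simp at h4 ⊢; omega)
      simp only [List.append_assoc, List.singleton_append] at this
      refine RigidW.old ?_ this
      beta_reduce
      rw [List.getD_append_right _ _ _ _ (by omega)]
      simpa [h1] using hb
    | @new _ _ τ h3 =>
      have := ih (e := e ++ [a']) (by simp [h1])
        (by simp only [List.mem_append, List.mem_singleton]; rintro x (hx | rfl); exacts [(h2 x hx).trans (by omega), by omega]) 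
        h3 (by simp at h4 ⊢; omega)
      simp only [List.append_assoc, List.singleton_append] at this
      have h5 : (e ++ a' :: τ).getD a 0 = a' := by
        rw [List.getD_append_right _ _ _ _ (by omega)]
        simp [h1]
      simp only [subW, List.map_cons] at this ⊢
      rw [h5]
      exact RigidW.new this

lemma RigidW.comp' {a m k : ℕ} {σ τ : List ℕ} (h : RigidW a m σ) (h' : RigidW a k τ)
    (hl : a + τ.length = m) : RigidW a k (subW (List.range a ++ τ) σ) :=
  h.comp (by simp) (by simp) h' (by simpa using hl)

lemma subW_assoc (T S σ : List ℕ) (h : ∀ x ∈ σ, x < S.length) :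
    subW T (subW S σ) = subW (subW T S) σ := by
  simp only [subW, List.map_map]
  apply List.map_congr_left
  intro x hx
  have := h x hx
  simp [List.getD_eq_getElem?_getD, this]

lemma subW_congr (T S σ : List ℕ) (h : ∀ x ∈ σ, T.getD x 0 = S.getD x 0) :
    subW T σ = subW S σ := List.map_congr_left h

lemma subW_id (T σ : List ℕ) (h : ∀ x ∈ σ, T.getD x 0 = x) :
    subW T σ = σ := by
  conv_rhs => rw [← List.map_id σ]
  exact List.map_congr_left h

lemma getD_range_append (a : ℕ) (τ : List ℕ) (x : ℕ) (h : x < a) :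
    (List.range a ++ τ).getD x 0 = x := by
  rw [List.getD_append _ _ _ _ (by simpa)]
  simp [List.getD_eq_getElem?_getD, h]

lemma getD_range_append' (a : ℕ) (τ : List ℕ) (x : ℕ) (h : a ≤ x) :
    (List.range a ++ τ).getD x 0 = τ.getD (x - a) 0 := by
  rw [List.getD_append_right _ _ _ _ (by simpa)]
  simp

lemma subW_range (a : ℕ) (τ ρ : List ℕ) :
    subW (List.range a ++ τ) (List.range a ++ ρ) = List.range a ++ subW (List.range a ++ τ) ρ := by
  rw [subW_append, subW_id _ (List.range a)]
  intro x hx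
  exact getD_range_append _ _ _ (by simpa using hx)

def GRW (a k : ℕ) : Prop := ∀ (q : ℕ) (κ : Type) [Finite κ], ∃ n, ∀ c : List ℕ → κ,
  ∃ σ, RigidW a (a + q) σ ∧ σ.length = n ∧ ∃ j, ∀ τ, RigidW a k τ → τ.length = q →
    c (subW (List.range a ++ τ) σ) = j

lemma GRW_base (a : ℕ) : GRW a a := by
  classical
  intro q κ _
  obtain ⟨ι, _, hι⟩ := Combinatorics.Line.exists_mono_in_high_dimension (Fin q → Fin a) (Option κ)
  refine ⟨(Finset.univ : Finset ι).toList.length * q, fun c => ?_⟩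
  obtain ⟨L, j, hL⟩ := hι (fun x => some (c ((Finset.univ : Finset ι).toList.flatMap
    (fun i => List.ofFn (fun t => (x i t : ℕ))))))
  let blk : ι → List ℕ := fun i => match L.idxFun i with
    | some g => List.ofFn (fun t => (g t : ℕ))
    | none => List.range' a q
  have hr : ∀ q a, RigidW a (a + q) (List.range' a q) := by
    intro q
    induction q with
    | zero => intro a; exact RigidW.nil a
    | succ q ih => 
      intro a
      rw [List.range'_succ]
      apply RigidW.new
      have := ih (a + 1)
      rwa [show a + 1 + q = a + (q + 1) by ring] at this
  have hlt : ∀ i, ∀ x ∈ blk i, x < a + q := by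
    intro i x hx
    simp only [blk] at hx
    split at hx
    · simp only [List.mem_ofFn] at hx
      obtain ⟨t, rfl⟩ := hx
      omega
    · simp at hx
      omega
  have hbig : ∀ l : List ι, RigidW (a + q) (a + q) (l.flatMap blk) := by
    intro l
    apply RigidW.of_lt
    simp only [List.mem_flatMap]
    rintro x ⟨i, _, hx⟩
    exact hlt i x hx
  have hrig : ∀ l : List ι, (∃ i ∈ l, L.idxFun i = none) → RigidW a (a + q) (l.flatMap blk) := by
    intro l
    induction l with
    | nil => simp
    | cons i l ih => 
      intro h
      rw [List.flatMap_cons]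
      by_cases hi : L.idxFun i = none
      · have : blk i = List.range' a q := by simp [blk, hi]
        rw [this]
        exact (hr q a).append (hbig l)
      · obtain ⟨g, hg⟩ := Option.ne_none_iff_exists'.1 hi
        have : blk i = List.ofFn (fun t => (g t : ℕ)) := by simp [blk, hg]
        rw [this]
        refine RigidW.append (RigidW.of_lt ?_) (ih ?_)
        · simp only [List.mem_ofFn]
          rintro x ⟨t, rfl⟩
          exact (g t).2
        · obtain ⟨i', h1, h2⟩ := h
          rcases List.mem_cons.1 h1 with rfl | h1
          · exact absurd h2 hi
          · exact ⟨i', h1, h2⟩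
  have hlen : ∀ i, (blk i).length = q := by
    intro i
    simp only [blk]
    split <;> simp
  refine ⟨(Finset.univ : Finset ι).toList.flatMap blk, hrig _ ?_, ?_, ?_⟩
  · obtain ⟨i, hi⟩ := L.proper
    exact ⟨i, by simp, hi⟩
  · simp [List.length_flatMap, hlen]
  · have key : ∀ τ, RigidW a a τ → τ.length = q → some (c (subW (List.range a ++ τ)
        ((Finset.univ : Finset ι).toList.flatMap blk))) = j := by
      intro τ hτ hl
      have h1 := hτ.lt
      rw [← hL (fun t => ⟨τ[t.1]'(by omega), h1 _ (List.getElem_mem _)⟩)]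
      congr 2
      rw [subW, List.map_flatMap]
      congr 1
      funext i
      simp only [blk, Combinatorics.Line.apply_def]
      split
      · rename_i g hg
        simp only [hg, Option.getD_some]
        apply subW_id
        simp only [List.mem_ofFn]
        rintro x ⟨t, rfl⟩
        exact getD_range_append _ _ _ (g t).2
      · rename_i hg
        simp only [hg, Option.getD_none]
        apply List.ext_getElem
        · simp
        · intro t h2 h3
          simp at h2
          simp only [List.getElem_map, List.getElem_range', List.getElem_ofFn]
          rw [getD_range_append' _ _ _ (by omega)]
          simp [List.getD_eq_getElem?_getD, hl, h2]
    cases j with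
    | none => exact ⟨c [], fun τ h1 h2 => by simpa using key τ h1 h2⟩
    | some j => exact ⟨j, fun τ h1 h2 => by simpa using key τ h1 h2⟩

lemma subW_shift (a b : ℕ) (T T' σ : List ℕ) (hb : T'.length = a) :
    subW (T' ++ b :: T) (σ.map (fun i => if i < a then i else i + 1)) = subW (T' ++ T) σ := by
  simp only [subW, List.map_map]
  apply List.map_congr_left
  intro x _
  simp only [Function.comp]
  split_ifs with h
  · rw [List.getD_append _ _ _ _ (by omega), List.getD_append _ _ _ _ (by omega)]
  · rw [List.getD_append_right _ _ _ _ (by omega), List.getD_append_right _ _ _ _ (by omega)]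
    rw [show x + 1 - T'.length = (x - T'.length) + 1 by omega]
    simp

/-- Step A: the colour depends only on the prefix before the first new letter. -/
def SAW (a k q : ℕ) : Prop := ∀ (κ : Type) [Finite κ], ∃ n, ∀ c : List ℕ → κ,
  ∃ σ, RigidW a (a + q) σ ∧ σ.length = n ∧ ∃ j : List ℕ → κ, ∀ u v, (∀ x ∈ u, x < a) →
    RigidW (a + 1) k v → u.length + 1 + v.length = q →
    c (subW (List.range a ++ (u ++ a :: v)) σ) = j u

lemma SAW_all (a k : ℕ) (hG : GRW (a + 1) k) (q : ℕ) : SAW a k q := by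
  induction q with
  | zero =>
    intro κ _
    refine ⟨0, fun c => ⟨[], RigidW.nil _, rfl, fun _ => c [], ?_⟩⟩
    intros; omega
  | succ q ih =>
    intro κ _
    obtain ⟨nS, hS⟩ := ih (Fin a → κ)
    obtain ⟨n1, h1⟩ := hG nS κ
    refine ⟨n1 + 1, fun c => ?_⟩
    obtain ⟨σ1, hσ1, hl1, J1, hJ1⟩ := h1 (fun w => c (a :: w))
    obtain ⟨σ', hσ', hl', J2, hJ2⟩ := hS (fun w b => c ((b : ℕ) :: subW (List.range a ++ (b : ℕ) :: w) σ1))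
    have hsh := hσ'.shift a le_rfl
    set sh := σ'.map (fun i => if i < a then i else i + 1) with hshd
    have hshl : sh.length = nS := by simp [hshd, hl']
    refine ⟨a :: subW (List.range (a + 1) ++ sh) σ1, ?_, by simp [subW_length, hl1],
      fun u => match u with
        | [] => J1
        | b :: u => if h : b < a then J2 u ⟨b, h⟩ else J1, ?_⟩
    · have := hσ1.comp' hsh (by omega)
      rw [show a + (q + 1) = a + q + 1 by ring]
      exact RigidW.new this
    · intro u v hu hv hl
      have has : ∀ x ∈ σ1, x < (List.range (a + 1) ++ sh).length := by
        intro x hx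
        have := hσ1.lt x hx
        simp [hshl]; omega
      cases u with
      | nil =>
        have hT : List.range a ++ ([] ++ a :: v) = List.range (a + 1) ++ v := by
          simp [List.range_succ]
        rw [hT]
        have h2 : subW (List.range (a + 1) ++ v) (a :: subW (List.range (a + 1) ++ sh) σ1)
          = a :: subW (List.range (a + 1) ++ subW (List.range (a + 1) ++ v) sh) σ1 := by
          rw [← subW_range, ← subW_assoc _ _ _ has]
          simp only [subW, List.map_cons]
          rw [getD_range_append _ _ _ (by omega)]
        rw [h2]
        apply hJ1
        · apply hsh.comp' hv
          simp at hl; omega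
        · simp [subW_length, hshl]
      | cons b u =>
        simp only [List.mem_cons, forall_eq_or_imp] at hu
        simp only [hu.1, dif_pos]
        have h2 : subW (List.range a ++ (b :: u ++ a :: v))
            (a :: subW (List.range (a + 1) ++ sh) σ1)
          = b :: subW (List.range a ++ b :: subW (List.range a ++ (u ++ a :: v)) σ') σ1 := by
          have e1 : subW (List.range a ++ (b :: u ++ a :: v)) (List.range (a + 1) ++ sh) =
              List.range a ++ b :: subW (List.range a ++ (u ++ a :: v)) σ' := by
            rw [← subW_shift a b (u ++ a :: v) _ σ' (by simp)]
            rw [List.range_succ, List.append_assoc, subW_range, List.singleton_append]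
            simp only [subW, List.map_cons, ← hshd]
            rw [getD_range_append' _ _ _ le_rfl]
            simp
          rw [← e1, ← subW_assoc _ _ _ has]
          simp only [subW, List.map_cons]
          rw [getD_range_append' _ _ _ le_rfl]
          simp
        rw [h2]
        have := congrFun (hJ2 u v hu.2 hv (by simp at hl; omega)) ⟨b, hu.1⟩
        simpa using this

lemma RigidW.takeWhile {a m : ℕ} {σ : List ℕ} (h : RigidW a m σ) (x : ℕ) : a ≤ x → x < m →
    ∃ σ2, σ = σ.takeWhile (fun i => decide (i < x)) ++ x :: σ2 ∧
      RigidW a x (σ.takeWhile (fun i => decide (i < x))) := by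
  induction h with
  | nil => intros; omega
  | @old a k b w hb h ih =>
    intro h1 h2
    obtain ⟨σ2, h3, h4⟩ := ih h1 h2
    refine ⟨σ2, ?_, ?_⟩
    · rw [List.takeWhile_cons_of_pos (by simp; omega), List.cons_append, ← h3]
    · rw [List.takeWhile_cons_of_pos (by simp; omega)]
      exact RigidW.old hb h4
  | @new a k w h ih =>
    intro h1 h2
    rcases Nat.eq_or_lt_of_le h1 with rfl | h5
    · refine ⟨w, ?_, ?_⟩
      · rw [List.takeWhile_cons_of_neg (by simp)]; rfl
      · rw [List.takeWhile_cons_of_neg (by simp)]; exact RigidW.nil _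
    · obtain ⟨σ2, h3, h4⟩ := ih h5 h2
      refine ⟨σ2, ?_, ?_⟩
      · rw [List.takeWhile_cons_of_pos (by simp; omega), List.cons_append, ← h3]
      · rw [List.takeWhile_cons_of_pos (by simp; omega)]
        exact RigidW.new h4

lemma SBW (a q : ℕ) : ∀ (κ : Type) [Finite κ], ∃ n, ∀ f : List ℕ → κ,
    ∃ ρ, RigidW a (a + q) ρ ∧ ρ.length = n ∧ ∃ j : ℕ → κ, ∀ i < q, ∃ ρ1 ρ2,
      ρ = ρ1 ++ (a + i) :: ρ2 ∧ RigidW a (a + i) ρ1 ∧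
      ∀ u, (∀ x ∈ u, x < a) → u.length = i → f (subW (List.range a ++ u) ρ1) = j i := by
  induction q with
  | zero =>
    intro κ _
    exact ⟨0, fun f => ⟨[], RigidW.nil _, rfl, fun _ => f [], fun i hi => by omega⟩⟩
  | succ q ih =>
    intro κ _
    obtain ⟨N, hN⟩ := ih κ
    obtain ⟨n1, h1⟩ := GRW_base a N κ
    refine ⟨n1 + 1, fun f => ?_⟩
    obtain ⟨σ1, hσ1, hl1, J1, hJ1⟩ := h1 f
    obtain ⟨ρ', hρ', hl', j', hj'⟩ := hN (fun u => f (subW (List.range a ++ u)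
      (σ1.takeWhile (fun i => decide (i < a + u.length)))))
    have hR : RigidW a (a + q) (subW (List.range a ++ ρ') σ1) := hσ1.comp' hρ' (by omega)
    refine ⟨subW (List.range a ++ ρ') σ1 ++ [a + q], 
      hR.append (RigidW.new (RigidW.nil _)), by simp [subW_length, hl1],
      fun i => if i < q then j' i else J1, fun i hi => ?_⟩
    by_cases hiq : i < q
    · obtain ⟨ρ1, ρ2, e, hr1, hf⟩ := hj' i hiq
      have hlt : ρ1.length < N := by rw [← hl', e]; simp
      obtain ⟨τ2, e2, hτ1⟩ := hσ1.takeWhile (a + ρ1.length) (by omega) (by omega)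
      set τ1 := σ1.takeWhile (fun i => decide (i < a + ρ1.length)) with hτ
      refine ⟨subW (List.range a ++ ρ1) τ1, subW (List.range a ++ ρ') τ2 ++ [a + q], ?_, 
        hτ1.comp' hr1 rfl, ?_⟩
      · rw [e2, subW_append, List.append_assoc]
        congr 1
        · apply subW_congr
          intro x hx
          have := hτ1.lt x hx
          rw [e, ← List.append_assoc]
          rw [List.getD_append (List.range a ++ ρ1) _ _ _ (by simpa)]
        · simp only [subW, List.map_cons, List.cons_append]
          rw [getD_range_append' _ _ _ (by omega), e, List.getD_append_right _ _ _ _ (by omega)]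
          simp
      · intro u hu hul
        beta_reduce
        rw [if_pos hiq, subW_assoc _ _ _ (by simpa using hτ1.lt), subW_range, ← hf u hu hul]
        simp only [subW_length, hτ]
    · have : i = q := by omega
      subst this
      refine ⟨subW (List.range a ++ ρ') σ1, [], rfl, hR, ?_⟩
      intro u hu hul
      beta_reduce
      rw [if_neg hiq, subW_assoc _ _ _ (by simpa [hl'] using hσ1.lt), subW_range]
      apply hJ1
      · exact hρ'.comp' (RigidW.of_lt hu) (by omega)
      · simp [subW_length, hl']

lemma RigidW.tail {a k : ℕ} : ∀ {u v : List ℕ}, (∀ x ∈ u, x < a) → RigidW a k (u ++ a :: v) →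
    RigidW (a + 1) k v := by
  intro u
  induction u with
  | nil => 
    intro v _ h
    rcases h with _ | ⟨hb, _⟩ | h
    · omega
    · exact h
  | cons b u ih =>
    intro v hu h
    simp only [List.mem_cons, forall_eq_or_imp] at hu
    rcases h with _ | ⟨hb, h⟩ | h
    · exact ih hu.2 h
    · omega

lemma exists_skip (a : ℕ) (ha : 1 ≤ a) (I : ℕ → Prop) [DecidablePred I] (M : ℕ) :
    ∃ ρ, ρ.length = M ∧ RigidW a (a + Nat.count I M) ρ ∧ 
      ∀ i (hi : i < ρ.length), a ≤ ρ[i] → I i := by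
  induction M with
  | zero => exact ⟨[], rfl, by simpa using RigidW.nil a, by simp⟩
  | succ M ih =>
    obtain ⟨ρ, hl, hr, hI⟩ := ih
    by_cases h : I M
    · refine ⟨ρ ++ [a + Nat.count I M], by simp [hl], ?_, ?_⟩
      · rw [Nat.count_succ, if_pos h]
        exact hr.append (RigidW.new (RigidW.nil _))
      · intro i hi hai
        by_cases hi' : i < ρ.length
        · rw [List.getElem_append_left hi'] at hai
          exact hI i hi' hai
        · simp at hi
          have : i = M := by omega
          rwa [this]
    · refine ⟨ρ ++ [0], by simp [hl], ?_, ?_⟩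
      · rw [Nat.count_succ, if_neg h]
        exact hr.append (RigidW.old (by omega) (RigidW.nil _))
      · intro i hi hai
        by_cases hi' : i < ρ.length
        · rw [List.getElem_append_left hi'] at hai
          exact hI i hi' hai
        · rw [List.getElem_append_right (by omega)] at hai
          simp at hai
          omega

lemma GRW_step (a k : ℕ) (ha : 1 ≤ a) (hk : a < k) (hG : GRW (a + 1) k) : GRW a k := by
  classical
  intro q κ _
  have := Fintype.ofFinite κ
  obtain ⟨N, hN⟩ := SBW a (Fintype.card κ * q) κ
  obtain ⟨n, hn⟩ := SAW_all a k hG N κ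
  refine ⟨n, fun c => ?_⟩
  obtain ⟨σ0, hσ0, hl0, j0, hj0⟩ := hn c
  obtain ⟨ρ, hρ, hlρ, j1, hj1⟩ := hN j0
  have : Nonempty κ := ⟨c []⟩
  obtain ⟨j, -, hj⟩ := Finset.exists_le_card_fiber_of_mul_le_card_of_maps_to
    (s := Finset.range (Fintype.card κ * q)) (t := (Finset.univ : Finset κ)) (f := j1) (n := q)
    (by simp) Finset.univ_nonempty (by simp)
  obtain ⟨I, hI, hIc⟩ := Finset.exists_subset_card_eq hj
  obtain ⟨ρ3, hl3, hr3, hI3⟩ := exists_skip a ha (fun i => i ∈ I) (Fintype.card κ * q)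
  have hcount : Nat.count (fun i => i ∈ I) (Fintype.card κ * q) = q := by
    rw [Nat.count_eq_card_filter_range]
    refine Eq.trans (congrArg Finset.card ?_) hIc
    ext x
    simp only [Finset.mem_filter, and_iff_right_iff_imp]
    intro hx
    exact (Finset.mem_filter.1 (hI hx)).1
  rw [hcount] at hr3
  have hρ2 : RigidW a (a + q) (subW (List.range a ++ ρ3) ρ) := hρ.comp' hr3 (by omega)
  have hρ2l : (subW (List.range a ++ ρ3) ρ).length = N := by simp [subW_length, hlρ]
  refine ⟨subW (List.range a ++ subW (List.range a ++ ρ3) ρ) σ0, hσ0.comp' hρ2 (by omega),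
    by simp [subW_length, hl0], j, fun τ hτ hlτ => ?_⟩
  rw [subW_assoc _ _ _ (by simpa [hρ2l] using hσ0.lt), subW_range, 
    subW_assoc _ _ _ (by simpa [hl3] using hρ.lt), subW_range]
  have hw : RigidW a k (subW (List.range a ++ τ) ρ3) := hr3.comp' hτ (by omega)
  have hwl : (subW (List.range a ++ τ) ρ3).length = Fintype.card κ * q := by 
    simp [subW_length, hl3]
  obtain ⟨u, v, e, hu, hv⟩ := hw.decomp hk
  have hul : u.length < Fintype.card κ * q := by rw [← hwl, e]; simp
  have huI : u.length ∈ I := by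
    apply hI3 _ (by omega)
    by_contra hlt
    have h1 : (subW (List.range a ++ τ) ρ3)[u.length]'(by omega) = a := by
      simp [e]
    simp only [subW, List.getElem_map] at h1
    rw [getD_range_append _ _ _ (by omega)] at h1
    omega
  obtain ⟨ρ1, ρ2, e2, hr1, hf⟩ := hj1 u.length hul
  have hww : RigidW a k (subW (List.range a ++ subW (List.range a ++ τ) ρ3) ρ) := 
    hρ.comp' hw (by omega)
  have hwwl : (subW (List.range a ++ subW (List.range a ++ τ) ρ3) ρ).length = N := by
    simp [subW_length, hlρ]
  have e3 : subW (List.range a ++ subW (List.range a ++ τ) ρ3) ρ = 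
      subW (List.range a ++ u) ρ1 ++ a :: subW (List.range a ++ (u ++ a :: v)) ρ2 := by
    rw [e, e2, subW_append]
    congr 1
    · apply subW_congr
      intro x hx
      have := hr1.lt x hx
      rw [← List.append_assoc, List.getD_append (List.range a ++ u) _ _ _ (by simpa)]
    · simp only [subW, List.map_cons]
      rw [getD_range_append' _ _ _ (by omega), List.getD_append_right _ _ _ _ (by omega)]
      simp
  have hlt1 : ∀ x ∈ subW (List.range a ++ u) ρ1, x < a := 
    (hr1.comp' (RigidW.of_lt hu) rfl).lt
  rw [e3] at hww hwwl ⊢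
  rw [hj0 _ _ hlt1 (hww.tail hlt1) (by simp at hwwl; omega), hf u hu rfl]
  exact (Finset.mem_filter.1 (hI huI)).2

lemma GRW_all (k a : ℕ) (ha : 1 ≤ a) (hk : a ≤ k) : GRW a k := by
  obtain ⟨d, rfl⟩ := Nat.exists_eq_add_of_le hk
  induction d generalizing a with
  | zero => exact GRW_base a
  | succ d ih =>
    apply GRW_step a _ ha (by omega)
    have := ih (a + 1) (by omega) (by omega)
    rwa [show a + 1 + d = a + (d + 1) by ring] at this

lemma linfR_norm_le {n : ℕ} (x : LinfR n) (C : ℝ) (hC : 0 ≤ C) (h : ∀ i, |x i| ≤ C) :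
    ‖x‖ ≤ C := by
  rw [PiLp.norm_eq_ciSup]
  exact Real.iSup_le (fun i => by simpa using h i) hC

/-- the operator with given rows. -/
noncomputable def mkRows {d n : ℕ} (A : Fin n → (LinfR d →L[ℝ] ℝ)) : LinfR d →L[ℝ] LinfR n :=
  ((PiLp.continuousLinearEquiv ⊤ ℝ (fun _ : Fin n => ℝ)).symm : (Fin n → ℝ) →L[ℝ] LinfR n).comp
    (ContinuousLinearMap.pi A)

lemma mkRows_apply {d n : ℕ} (A : Fin n → (LinfR d →L[ℝ] ℝ)) (x : LinfR d) (i : Fin n) :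
    mkRows A x i = A i x := rfl

noncomputable def coordR {d : ℕ} (k : Fin d) : LinfR d →L[ℝ] ℝ := PiLp.proj ⊤ (fun _ => ℝ) k

lemma coordR_apply {d : ℕ} (k : Fin d) (x : LinfR d) : coordR k x = x k := rfl

lemma coordR_norm {d : ℕ} (k : Fin d) : ‖coordR k‖ ≤ 1 := by
  apply ContinuousLinearMap.opNorm_le_bound _ zero_le_one
  intro x
  rw [one_mul, coordR_apply]
  exact PiLp.norm_apply_le x k

lemma coordR_ne {d : ℕ} (k : Fin d) : coordR k ≠ 0 := by
  intro h
  have := congrArg (fun f => f (WithLp.toLp ⊤ (fun _ => (1:ℝ)))) h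
  simp [coordR_apply] at this

lemma mkRows_iso {d n : ℕ} (A : Fin n → (LinfR d →L[ℝ] ℝ)) (h1 : ∀ i, ‖A i‖ ≤ 1)
    (h2 : ∀ k, ∃ i, A i = coordR k) (x : LinfR d) : ‖mkRows A x‖ = ‖x‖ := by
  apply le_antisymm
  · apply linfR_norm_le _ _ (norm_nonneg _)
    intro i
    rw [mkRows_apply, ← Real.norm_eq_abs]
    exact (A i).le_of_opNorm_le (h1 i) x |>.trans (by simp)
  · apply linfR_norm_le _ _ (norm_nonneg _)
    intro k
    obtain ⟨i, hi⟩ := h2 k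
    have := PiLp.norm_apply_le (mkRows A x) i
    rwa [mkRows_apply, hi] at this

lemma rows_close {d n : ℕ} (f g : LinfR d →L[ℝ] LinfR n) (ε : ℝ) (hε : 0 ≤ ε)
    (h : ∀ i, ‖(coordR i).comp f - (coordR i).comp g‖ ≤ ε) : ‖f - g‖ ≤ ε := by
  apply ContinuousLinearMap.opNorm_le_bound _ hε
  intro x
  apply linfR_norm_le _ _ (by positivity)
  intro i
  exact ((coordR i).comp f - (coordR i).comp g).le_of_opNorm_le (h i) x

lemma exists_net_s3 {E : Type*} [NormedAddCommGroup E] [NormedSpace ℝ E] [FiniteDimensional ℝ E]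
    (ρ ε : ℝ) (hε : 0 < ε) : ∃ l : List E, (∀ y ∈ l, ‖y‖ ≤ ρ) ∧
      ∀ x : E, ‖x‖ ≤ ρ → ∃ y ∈ l, ‖x - y‖ ≤ ε := by
  have : ProperSpace E := FiniteDimensional.proper_real E
  obtain ⟨t, ht, htf, hc⟩ := (isCompact_closedBall (0 : E) ρ).finite_cover_balls hε
  refine ⟨htf.toFinset.toList, ?_, ?_⟩
  · intro y hy
    simpa using ht (by simpa using hy)
  · intro x hx
    have := hc (show x ∈ Metric.closedBall (0 : E) ρ by simpa using hx)
    simp only [Set.mem_iUnion, Metric.mem_ball, dist_eq_norm] at this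
    obtain ⟨y, hy, h⟩ := this
    exact ⟨y, by simpa using hy, h.le⟩

lemma lift_functional {d m : ℕ} (η : LinfR d →L[ℝ] LinfR m) (hη : ∀ x, ‖η x‖ = ‖x‖)
    (w : LinfR d →L[ℝ] ℝ) : ∃ p : LinfR m →L[ℝ] ℝ, p.comp η = w ∧ ‖p‖ ≤ ‖w‖ := by
  let L : LinfR d →ₗᵢ[ℝ] LinfR m := ⟨η.toLinearMap, hη⟩
  let e := L.equivRange
  obtain ⟨p, h1, h2⟩ := exists_extension_norm_eq (LinearMap.range L.toLinearMap)
    (w.comp (e.symm.toContinuousLinearEquiv : _ →L[ℝ] LinfR d))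
  refine ⟨p, ?_, ?_⟩
  · ext x
    have h3 := h1 (e x)
    have h4 : ((e x : LinearMap.range L.toLinearMap) : LinfR m) = η x := rfl
    rw [h4] at h3
    simpa using h3
  · rw [h2]
    refine ContinuousLinearMap.opNorm_le_bound _ (norm_nonneg _) (fun y => ?_)
    refine (w.le_opNorm _).trans ?_
    simp

/-- The list `D` of functionals is realised. -/
def RealW (d m : ℕ) (ε : ℝ) (D : List (LinfR d →L[ℝ] ℝ)) : Prop :=
  ∃ R : List (LinfR m →L[ℝ] ℝ), (∀ p ∈ R, ‖p‖ ≤ 1) ∧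
    ∀ η : LinfR d →L[ℝ] LinfR m, (∀ x, ‖η x‖ = ‖x‖) →
      ∃ τ : List ℕ, RigidW 1 D.length τ ∧
        List.Forall₂ (fun p t => ‖p.comp η - D.getD t 0‖ ≤ ε) R τ

lemma comp_iso_norm {d m : ℕ} (η : LinfR d →L[ℝ] LinfR m) (hη : ∀ x, ‖η x‖ = ‖x‖)
    (p : LinfR m →L[ℝ] ℝ) : ‖p.comp η‖ ≤ ‖p‖ := by
  refine ContinuousLinearMap.opNorm_le_bound _ (norm_nonneg _) (fun y => ?_)
  exact (p.le_opNorm _).trans (le_of_eq (congrArg (‖p‖ * ·) (hη y)))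

lemma block_any {d m : ℕ} {ε : ℝ} (η : LinfR d →L[ℝ] LinfR m) (hη : ∀ x, ‖η x‖ = ‖x‖)
    (D : List (LinfR d →L[ℝ] ℝ)) (ρ : ℝ) 
    (hw : ∀ x : LinfR d →L[ℝ] ℝ, ‖x‖ ≤ ρ → ∃ y ∈ D, ‖x - y‖ ≤ ε)
    (p : LinfR m →L[ℝ] ℝ) (hp : ‖p‖ ≤ ρ) (w : List (LinfR d →L[ℝ] ℝ)) :
    ∃ t < D.length, ‖p.comp η - (D ++ w).getD t 0‖ ≤ ε := by
  obtain ⟨y, hy, h⟩ := hw (p.comp η) ((comp_iso_norm η hη p).trans hp)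
  obtain ⟨t, ht, rfl⟩ := List.getElem_of_mem hy
  exact ⟨t, ht, by rwa [List.getD_append _ _ _ _ ht, List.getD_eq_getElem _ _ ht]⟩

lemma block_all {d m : ℕ} {ε : ℝ} (η : LinfR d →L[ℝ] LinfR m) (hη : ∀ x, ‖η x‖ = ‖x‖)
    (D : List (LinfR d →L[ℝ] ℝ)) (ρ : ℝ) 
    (hw : ∀ x : LinfR d →L[ℝ] ℝ, ‖x‖ ≤ ρ → ∃ y ∈ D, ‖x - y‖ ≤ ε)
    (w : List (LinfR d →L[ℝ] ℝ)) (B : List (LinfR m →L[ℝ] ℝ)) (hB : ∀ p ∈ B, ‖p‖ ≤ ρ) :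
    ∃ τ : List ℕ, (∀ x ∈ τ, x < D.length) ∧ 
      List.Forall₂ (fun p t => ‖p.comp η - (D ++ w).getD t 0‖ ≤ ε) B τ := by
  induction B with
  | nil => exact ⟨[], by simp, List.Forall₂.nil⟩
  | cons p B ih =>
    simp only [List.mem_cons, forall_eq_or_imp] at hB
    obtain ⟨τ, h1, h2⟩ := ih hB.2
    obtain ⟨t, h3, h4⟩ := block_any η hη D ρ hw p hB.1 w
    exact ⟨t :: τ, by simpa using ⟨h3, h1⟩, List.Forall₂.cons h4 h2⟩

lemma block_new {d m : ℕ} {ε : ℝ} (η : LinfR d →L[ℝ] LinfR m) (hη : ∀ x, ‖η x‖ = ‖x‖)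
    (D : List (LinfR d →L[ℝ] ℝ)) (ρ : ℝ) 
    (hw : ∀ x : LinfR d →L[ℝ] ℝ, ‖x‖ ≤ ρ → ∃ y ∈ D, ‖x - y‖ ≤ ε)
    (w : LinfR d →L[ℝ] ℝ) (B : List (LinfR m →L[ℝ] ℝ)) (hB : ∀ p ∈ B, ‖p‖ ≤ ρ)
    (hex : ∃ p ∈ B, ‖p.comp η - w‖ ≤ ε) :
    ∃ τ : List ℕ, RigidW D.length (D.length + 1) τ ∧ 
      List.Forall₂ (fun p t => ‖p.comp η - (D ++ [w]).getD t 0‖ ≤ ε) B τ := by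
  induction B with
  | nil => simp at hex
  | cons p B ih =>
    simp only [List.mem_cons, forall_eq_or_imp] at hB
    by_cases hp : ‖p.comp η - w‖ ≤ ε
    · obtain ⟨τ, h1, h2⟩ := block_all η hη D ρ hw [w] B hB.2
      refine ⟨D.length :: τ, RigidW.new (RigidW.of_lt fun x hx => (h1 x hx).trans (by omega)), 
        List.Forall₂.cons ?_ h2⟩
      rw [List.getD_append_right _ _ _ _ le_rfl]
      simpa using hp
    · obtain ⟨τ, h1, h2⟩ := ih hB.2 (by
        obtain ⟨p', h1, h2⟩ := hex
        rcases List.mem_cons.1 h1 with rfl | h1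
        · exact absurd h2 hp
        · exact ⟨p', h1, h2⟩)
      obtain ⟨t, h3, h4⟩ := block_any η hη D ρ hw p hB.1 [w]
      exact ⟨t :: τ, RigidW.old h3 h1, List.Forall₂.cons h4 h2⟩

lemma RigidW.lt' {a k : ℕ} {w : List ℕ} (h : RigidW a k w) : ∀ x ∈ w, x < k := h.lt

lemma forall₂_append' {α β : Type*} {r : α → β → Prop} {l1 l2 : List α} {m1 m2 : List β}
    (h1 : List.Forall₂ r l1 m1) (h2 : List.Forall₂ r l2 m2) :
    List.Forall₂ r (l1 ++ l2) (m1 ++ m2) := List.rel_append h1 h2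

lemma forall₂_getD_append {d m : ℕ} {ε : ℝ} (η : LinfR d →L[ℝ] LinfR m)
    (D w : List (LinfR d →L[ℝ] ℝ)) {R : List (LinfR m →L[ℝ] ℝ)} {τ : List ℕ} 
    (h : List.Forall₂ (fun p t => ‖p.comp η - D.getD t 0‖ ≤ ε) R τ) :
    (∀ x ∈ τ, x < D.length) → 
      List.Forall₂ (fun p t => ‖p.comp η - (D ++ w).getD t 0‖ ≤ ε) R τ := by
  induction h with
  | nil => intro _; exact List.Forall₂.nil
  | cons h1 h2 ih => 
    intro h
    simp only [List.mem_cons, forall_eq_or_imp] at h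
    refine List.Forall₂.cons ?_ (ih h.2)
    rwa [List.getD_append _ _ _ _ h.1]

lemma RealW_snoc {d m : ℕ} {ε : ℝ} (hε : 0 < ε) (D : List (LinfR d →L[ℝ] ℝ)) 
    (w : LinfR d →L[ℝ] ℝ) (hD : RealW d m ε D) (hw1 : ‖w‖ ≤ 1)
    (hw : ∀ x : LinfR d →L[ℝ] ℝ, ‖x‖ ≤ ‖w‖ → ∃ y ∈ D, ‖x - y‖ ≤ ε) : 
    RealW d m ε (D ++ [w]) := by
  obtain ⟨R, hR, h⟩ := hD
  obtain ⟨B, hB, hBn⟩ := exists_net_s3 (E := LinfR m →L[ℝ] ℝ) ‖w‖ ε hε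
  refine ⟨R ++ B, ?_, fun η hη => ?_⟩
  · intro p hp
    rcases List.mem_append.1 hp with hp | hp
    · exact hR p hp
    · exact (hB p hp).trans hw1
  · obtain ⟨τ, h1, h2⟩ := h η hη
    obtain ⟨p0, hp0, hpn⟩ := lift_functional η hη w
    obtain ⟨p, hp, hpp⟩ := hBn p0 hpn
    obtain ⟨τ', h3, h4⟩ := block_new η hη D ‖w‖ hw w B hB ⟨p, hp, by
      rw [← hp0, ← ContinuousLinearMap.sub_comp]
      refine (comp_iso_norm η hη _).trans ?_
      rwa [norm_sub_rev]⟩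
    refine ⟨τ ++ τ', ?_, forall₂_append' (forall₂_getD_append η D [w] h2 h1.lt) h4⟩
    simpa using h1.append h3

lemma RealW_append {d m : ℕ} {ε : ℝ} (hε : 0 < ε) (l : List (LinfR d →L[ℝ] ℝ)) : 
    ∀ (D : List (LinfR d →L[ℝ] ℝ)), RealW d m ε D → (∀ w ∈ l, ‖w‖ ≤ 1 ∧ 
    ∀ x : LinfR d →L[ℝ] ℝ, ‖x‖ ≤ ‖w‖ → ∃ y ∈ D, ‖x - y‖ ≤ ε) → RealW d m ε (D ++ l) := by
  induction l with
  | nil => intro D h _; simpa using h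
  | cons w l ih =>
    intro D h hw
    have := ih (D ++ [w]) (RealW_snoc hε D w h (hw w (by simp)).1 (hw w (by simp)).2) (by
      intro w' hw'
      obtain ⟨h1, h2⟩ := hw w' (by simp [hw'])
      refine ⟨h1, fun x hx => ?_⟩
      obtain ⟨y, hy, hy2⟩ := h2 x hx
      exact ⟨y, by simp [hy], hy2⟩)
    simpa using this

lemma RealW_levels (d m : ℕ) {ε : ℝ} (hε : 0 < ε) (T : ℕ) (hT : 0 < T) (hTε : 1 / (T : ℝ) ≤ ε / 2)
    (t : ℕ) : t ≤ T → ∃ D : List (LinfR d →L[ℝ] ℝ), RealW d m ε (0 :: D) ∧ 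
      (∀ y ∈ D, ‖y‖ ≤ 1) ∧
      ∀ x : LinfR d →L[ℝ] ℝ, ‖x‖ ≤ t / T → ∃ y ∈ 0 :: D, ‖x - y‖ ≤ ε / 2 := by
  have hT' : (0 : ℝ) < T := by exact_mod_cast hT
  induction t with
  | zero =>
    intro _
    refine ⟨[], ⟨[], by simp, fun η hη => ⟨[], RigidW.nil _, List.Forall₂.nil⟩⟩, by simp, ?_⟩
    intro x hx
    refine ⟨0, by simp, ?_⟩
    simp at hx
    simp [hx]
    linarith
  | succ t ih =>
    intro ht
    obtain ⟨D, h1, h2, h3⟩ := ih (by omega)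
    obtain ⟨l, hl, hln⟩ := exists_net_s3 (E := LinfR d →L[ℝ] ℝ) ((t + 1 : ℕ) / T) (ε / 2) (by linarith)
    have hle : ((t + 1 : ℕ) / T : ℝ) ≤ 1 := by
      rw [div_le_one hT']; exact_mod_cast ht
    refine ⟨D ++ l, ?_, ?_, ?_⟩
    · rw [← List.cons_append]
      apply RealW_append hε _ _ h1
      intro w hw
      refine ⟨(hl w hw).trans hle, fun x hx => ?_⟩
      have hx' := hx.trans (hl w hw)
      have ht1 : (0 : ℝ) < (t : ℝ) + 1 := by positivity
      push_cast at hx'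
      obtain ⟨y, hy, hxy⟩ := h3 (((t : ℝ) / (t + 1)) • x) (by
        rw [norm_smul, Real.norm_of_nonneg (by positivity)]
        calc (t : ℝ) / (t + 1) * ‖x‖ ≤ (t : ℝ) / (t + 1) * ((t + 1) / T) := by gcongr
          _ = t / T := by field_simp)
      refine ⟨y, hy, ?_⟩
      have e : x - y = ((1 : ℝ) / (t + 1)) • x + (((t : ℝ) / (t + 1)) • x - y) := by
        rw [← add_sub_assoc, ← add_smul, ← add_div, add_comm (1 : ℝ), div_self ht1.ne', one_smul]
      rw [e]
      refine (norm_add_le _ _).trans ?_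
      have : ‖((1 : ℝ) / (t + 1)) • x‖ ≤ 1 / T := by
        rw [norm_smul, Real.norm_of_nonneg (by positivity)]
        calc (1 : ℝ) / (t + 1) * ‖x‖ ≤ (1 : ℝ) / (t + 1) * ((t + 1) / T) := by gcongr
          _ = 1 / T := by field_simp
      linarith
    · intro y hy
      rcases List.mem_append.1 hy with hy | hy
      · exact h2 y hy
      · exact (hl y hy).trans hle
    · intro x hx
      obtain ⟨y, hy, h⟩ := hln x hx
      exact ⟨y, by simp [hy], h⟩

lemma RealW_final (d m : ℕ) {ε : ℝ} (hε : 0 < ε) : ∃ (D : List (LinfR d →L[ℝ] ℝ)) 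
    (R : List (LinfR m →L[ℝ] ℝ)), (∀ y ∈ D, ‖y‖ ≤ 1) ∧ (∀ k, coordR k ∈ D) ∧
      (∀ p ∈ R, ‖p‖ ≤ 1) ∧ (∀ k, coordR k ∈ R) ∧ 
      ∀ η : LinfR d →L[ℝ] LinfR m, (∀ x, ‖η x‖ = ‖x‖) →
      ∃ τ : List ℕ, RigidW 1 (D.length + 1) τ ∧
        List.Forall₂ (fun p t => ‖p.comp η - (0 :: D).getD t 0‖ ≤ ε) R τ := by
  obtain ⟨T, hT⟩ := exists_nat_one_div_lt (show 0 < ε / 2 by linarith)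
  obtain ⟨D, h1, h2, h3⟩ := RealW_levels d m hε (T + 1) (by omega) (by push_cast; exact hT.le) 
    (T + 1) le_rfl
  have hdense : ∀ x : LinfR d →L[ℝ] ℝ, ‖x‖ ≤ 1 → ∃ y ∈ 0 :: D, ‖x - y‖ ≤ ε := by
    intro x hx
    obtain ⟨y, hy, h⟩ := h3 x (by rw [div_self (by positivity)]; exact hx)
    exact ⟨y, hy, by linarith⟩
  obtain ⟨R, hR, h⟩ := RealW_append hε (List.ofFn fun k : Fin d => coordR k) _ h1 (by
    intro w hw
    obtain ⟨k, rfl⟩ := List.mem_ofFn.1 hw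
    exact ⟨coordR_norm k, fun x hx => hdense x (hx.trans (coordR_norm k))⟩)
  refine ⟨D ++ List.ofFn fun k : Fin d => coordR k, R ++ List.ofFn fun k : Fin m => coordR k, 
    ?_, ?_, ?_, ?_, ?_⟩
  · intro y hy
    rcases List.mem_append.1 hy with hy | hy
    · exact h2 y hy
    · obtain ⟨k, rfl⟩ := List.mem_ofFn.1 hy
      exact coordR_norm k
  · intro k
    exact List.mem_append_right _ (List.mem_ofFn.2 ⟨k, rfl⟩)
  · intro y hy
    rcases List.mem_append.1 hy with hy | hy
    · exact hR y hy
    · obtain ⟨k, rfl⟩ := List.mem_ofFn.1 hy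
      exact coordR_norm k
  · intro k
    exact List.mem_append_right _ (List.mem_ofFn.2 ⟨k, rfl⟩)
  · intro η hη
    obtain ⟨τ, h4, h5⟩ := h η hη
    obtain ⟨τ', h6, h7⟩ := block_all (ε := ε) η hη (0 :: D) 1 hdense 
      (List.ofFn fun k : Fin d => coordR k) (List.ofFn fun k : Fin m => coordR k) (by
        intro p hp
        obtain ⟨k, rfl⟩ := List.mem_ofFn.1 hp
        exact coordR_norm k)
    rw [List.cons_append] at h4 h5 h7
    refine ⟨τ ++ τ', ?_, forall₂_append' h5 h7⟩
    refine RigidW.append h4 ?_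
    refine RigidW.of_lt fun x hx => ?_
    have := h6 x hx
    simp at this ⊢
    omega

lemma exists_emb (d m : ℕ) (h : d ≤ m) : ∃ η : LinfR d →L[ℝ] LinfR m, ∀ x, ‖η x‖ = ‖x‖ := by
  refine ⟨mkRows (fun i : Fin m => if hi : i.1 < d then coordR ⟨i, hi⟩ else 0), 
    mkRows_iso _ ?_ ?_⟩
  · intro i
    split_ifs
    · exact coordR_norm _
    · simp
  · intro k
    exact ⟨⟨k, by omega⟩, by simp⟩

/-- Approximate Ramsey property of the family `{ℓ∞ⁿ(ℝ)}ₙ` with respect to linear isometric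
embeddings. -/
theorem arp_linf_real (d m r : ℕ) (ε : ℝ) (hε : 0 < ε) :
    ∃ n : ℕ, ∀ c : {φ : LinfR d →L[ℝ] LinfR n // ∀ x, ‖φ x‖ = ‖x‖} → Fin r,
      ∃ (γ : LinfR m →L[ℝ] LinfR n) (_ : ∀ x, ‖γ x‖ = ‖x‖) (j : Fin r),
        ∀ η : LinfR d →L[ℝ] LinfR m, (∀ x, ‖η x‖ = ‖x‖) →
          ∃ (ξ : LinfR d →L[ℝ] LinfR n) (hξ : ∀ x, ‖ξ x‖ = ‖x‖),
            c ⟨ξ, hξ⟩ = j ∧ ‖γ.comp η - ξ‖ ≤ ε := by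
  classical
  rcases Nat.lt_or_ge m d with hmd | hdm
  · refine ⟨d, fun c => ?_⟩
    obtain ⟨γ, hγ⟩ := exists_emb m d hmd.le
    obtain ⟨φ, hφ⟩ := exists_emb d d le_rfl
    refine ⟨γ, hγ, c ⟨φ, hφ⟩, fun η hη => ?_⟩
    exfalso
    let L : LinfR d →ₗᵢ[ℝ] LinfR m := ⟨η.toLinearMap, hη⟩
    have := LinearMap.finrank_le_finrank_of_injective (f := L.toLinearMap) L.injective
    have e : ∀ k, Module.finrank ℝ (LinfR k) = k := fun k => by
      rw [(PiLp.continuousLinearEquiv ⊤ ℝ (fun _ : Fin k => ℝ)).toLinearEquiv.finrank_eq]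
      simp
    rw [e, e] at this
    omega
  obtain ⟨D, R, hD1, hDc, hR1, hRc, hreal⟩ := RealW_final d m hε
  obtain ⟨n, hn⟩ := GRW_all (D.length + 1) 1 le_rfl (by omega) R.length (Option (Fin r))
  refine ⟨n, fun c => ?_⟩
  let Φ : List ℕ → (LinfR d →L[ℝ] LinfR n) := fun w => mkRows (fun i => (0 :: D).getD (w.getD i 0) 0)
  have hΦ : ∀ w, RigidW 1 (D.length + 1) w → w.length = n → ∀ x, ‖Φ w x‖ = ‖x‖ := by
    intro w hw hl
    apply mkRows_iso
    · intro i
      have : w.getD i 0 < (0 :: D).length := by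
        rw [List.getD_eq_getElem _ _ (by omega)]
        exact hw.lt _ (List.getElem_mem _)
      rw [List.getD_eq_getElem _ _ this]
      rcases List.mem_cons.1 (List.getElem_mem this) with h | h
      · rw [h]; simp
      · exact hD1 _ h
    · intro k
      obtain ⟨t, ht, e⟩ := List.getElem_of_mem (hDc k)
      obtain ⟨i, hi, e2⟩ := List.getElem_of_mem (hw.mem (t + 1) (by omega) (by omega))
      refine ⟨⟨i, by omega⟩, ?_⟩
      rw [List.getD_eq_getElem _ _ hi, e2, List.getD_cons_succ, List.getD_eq_getElem _ _ ht, e]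
  obtain ⟨σ, hσ, hl, j, hj⟩ := hn (fun w => if h : ∀ x, ‖Φ w x‖ = ‖x‖ then some (c ⟨Φ w, h⟩) else none)
  have hlet : ∀ i : Fin n, σ.getD i 0 < 1 + R.length := by
    intro i
    rw [List.getD_eq_getElem _ _ (by omega)]
    exact hσ.lt _ (List.getElem_mem _)
  let γ : LinfR m →L[ℝ] LinfR n := mkRows (fun i => (0 :: R).getD (σ.getD i 0) 0)
  have hγ : ∀ x, ‖γ x‖ = ‖x‖ := by
    apply mkRows_iso
    · intro i
      have : σ.getD i 0 < (0 :: R).length := by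
        have := hlet i
        simp only [List.length_cons]; omega
      rw [List.getD_eq_getElem _ _ this]
      rcases List.mem_cons.1 (List.getElem_mem this) with h | h
      · rw [h]; simp
      · exact hR1 _ h
    · intro k
      obtain ⟨t, ht, e⟩ := List.getElem_of_mem (hRc k)
      obtain ⟨i, hi, e2⟩ := List.getElem_of_mem (hσ.mem (t + 1) (by omega) (by omega))
      refine ⟨⟨i, by omega⟩, ?_⟩
      rw [List.getD_eq_getElem _ _ hi, e2, List.getD_cons_succ, List.getD_eq_getElem _ _ ht, e]
  have key : ∀ η : LinfR d →L[ℝ] LinfR m, (∀ x, ‖η x‖ = ‖x‖) →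
      ∃ (ξ : LinfR d →L[ℝ] LinfR n) (hξ : ∀ x, ‖ξ x‖ = ‖x‖),
        some (c ⟨ξ, hξ⟩) = j ∧ ‖γ.comp η - ξ‖ ≤ ε := by
    intro η hη
    obtain ⟨τ, hτ, hF⟩ := hreal η hη
    have hτl : τ.length = R.length := hF.length_eq.symm
    have h1 := hj τ hτ hτl
    have hiso := hΦ _ (hσ.comp' hτ (by omega)) (by rw [subW_length, hl])
    rw [dif_pos hiso] at h1
    refine ⟨_, hiso, h1, ?_⟩
    apply rows_close _ _ _ hε.le
    intro i
    have hi := hlet i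
    have e1 : (coordR i).comp (γ.comp η) = ((0 :: R).getD (σ.getD i 0) 0).comp η := rfl
    have e2 : (coordR i).comp (Φ (subW (List.range 1 ++ τ) σ)) = 
      (0 :: D).getD ((subW (List.range 1 ++ τ) σ).getD i 0) 0 := rfl
    have e3 : (subW (List.range 1 ++ τ) σ).getD i 0 = (0 :: τ).getD (σ.getD i 0) 0 := by
      rw [List.getD_eq_getElem _ _ (by rw [subW_length]; omega), 
        List.getD_eq_getElem σ _ (by omega)]
      simp [subW]
    rw [e1, e2, e3]
    generalize σ.getD i 0 = s at hi
    cases s with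
    | zero => simp [hε.le]
    | succ t =>
      have ht : t < R.length := by omega
      rw [List.getD_cons_succ, List.getD_cons_succ, List.getD_eq_getElem _ _ ht, 
        List.getD_eq_getElem τ _ (by omega)]
      exact (List.forall₂_iff_get.1 hF).2 t ht (by omega)
  obtain ⟨η0, hη0⟩ := exists_emb d m hdm
  obtain ⟨ξ0, hξ0, hc0, -⟩ := key η0 hη0
  refine ⟨γ, hγ, c ⟨ξ0, hξ0⟩, fun η hη => ?_⟩
  obtain ⟨ξ, hξ, h1, h2⟩ := key η hη
  exact ⟨ξ, hξ, by simpa using h1.trans hc0.symm, h2⟩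
end

section
/- Let B be an n × d complex matrix and let η_B : ℓ∞^d(ℂ) → ℓ∞^n(ℂ) be the induced linear map. Then η_B is a linear isometric embedding (i.e., ‖η_B(x)‖ = ‖x‖ for all x) if and only if every row of B has ℓ₁-norm at most 1 and for every i ∈ {1,…,d} there exists j ∈ {1,…,n} such that |B_{j i}| = 1. -/
/-- The linear map `ℓ∞ᵈ(ℂ) → ℓ∞ⁿ(ℂ)` induced by an `n × d` complex matrix. -/
noncomputable def matrixMapLinf {n d : ℕ} (B : Matrix (Fin n) (Fin d) ℂ) (x : LinfC d) :
    LinfC n :=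
  (WithLp.equiv ⊤ (Fin n → ℂ)).symm (B.mulVec (WithLp.equiv ⊤ (Fin d → ℂ) x))

theorem linf_norm_aux {n : ℕ} (x : LinfC n) : ‖x‖ = ‖(WithLp.equiv ⊤ (Fin n → ℂ) x)‖ := by
  rw [PiLp.norm_eq_ciSup]
  apply le_antisymm
  · exact Real.iSup_le (fun i => norm_le_pi_norm (WithLp.equiv ⊤ (Fin n → ℂ) x) i) (norm_nonneg _)
  · refine (pi_norm_le_iff_of_nonneg (Real.iSup_nonneg fun i => norm_nonneg _)).2 fun i => ?_
    exact le_ciSup (f := fun i => ‖x i‖) (Set.finite_range _).bddAbove i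

theorem matrix_norm_aux {n d : ℕ} (B : Matrix (Fin n) (Fin d) ℂ) :
    (∀ v : Fin d → ℂ, ‖B.mulVec v‖ = ‖v‖) ↔
      (∀ j : Fin n, ∑ i : Fin d, ‖B j i‖ ≤ 1) ∧
        (∀ i : Fin d, ∃ j : Fin n, ‖B j i‖ = 1) := by
  constructor
  · intro h
    have h1 : ∀ j : Fin n, ∑ i : Fin d, ‖B j i‖ ≤ 1 := by
      intro j
      let v : Fin d → ℂ := fun i => (starRingEnd ℂ) (B j i) / (‖B j i‖ : ℂ)
      have hv : ‖v‖ ≤ 1 := by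
        refine (pi_norm_le_iff_of_nonneg zero_le_one).2 fun i => ?_
        simp only [v, norm_div, RCLike.norm_conj, Complex.norm_real, norm_norm]
        exact div_self_le_one _
      have hj : B.mulVec v j = ((∑ i, ‖B j i‖ : ℝ) : ℂ) := by
        rw [Matrix.mulVec, dotProduct, Complex.ofReal_sum]
        refine Finset.sum_congr rfl fun i _ => ?_
        by_cases h0 : B j i = 0
        · simp [h0]
        · have : (‖B j i‖ : ℂ) ≠ 0 := by simpa using h0
          simp only [v]
          rw [← mul_div_assoc, Complex.mul_conj', pow_two, mul_div_assoc, div_self this, mul_one]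
      calc ∑ i, ‖B j i‖ = ‖B.mulVec v j‖ := by
            rw [hj, Complex.norm_real, Real.norm_of_nonneg]
            exact Finset.sum_nonneg fun i _ => norm_nonneg _
        _ ≤ ‖B.mulVec v‖ := norm_le_pi_norm _ j
        _ ≤ 1 := by rw [h v]; exact hv
    refine ⟨h1, fun i => ?_⟩
    by_contra! hne
    have hlt : ∀ j, ‖B j i‖ < 1 := fun j => lt_of_le_of_ne
      ((Finset.single_le_sum (f := fun i => ‖B j i‖) (fun _ _ => norm_nonneg _)
        (Finset.mem_univ i)).trans (h1 j)) (hne j)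
    have h2 := h (Pi.single i 1)
    have h3 : ‖B.mulVec (Pi.single i 1)‖ < 1 := by
      refine (pi_norm_lt_iff zero_lt_one).2 fun j => ?_
      simpa using hlt j
    have h4 : (1 : ℝ) ≤ ‖(Pi.single i 1 : Fin d → ℂ)‖ := by
      simpa using norm_le_pi_norm (Pi.single i 1 : Fin d → ℂ) i
    linarith
  · rintro ⟨h1, h2⟩ v
    apply le_antisymm
    · refine (pi_norm_le_iff_of_nonneg (norm_nonneg _)).2 fun j => ?_
      calc ‖B.mulVec v j‖ ≤ ∑ i, ‖B j i * v i‖ := by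
            rw [Matrix.mulVec, dotProduct]
            exact norm_sum_le _ _
        _ ≤ ∑ i, ‖B j i‖ * ‖v‖ := by
            refine Finset.sum_le_sum fun i _ => ?_
            rw [norm_mul]
            exact mul_le_mul_of_nonneg_left (norm_le_pi_norm v i) (norm_nonneg _)
        _ = (∑ i, ‖B j i‖) * ‖v‖ := by rw [Finset.sum_mul]
        _ ≤ ‖v‖ := mul_le_of_le_one_left (norm_nonneg _) (h1 j)
    · refine (pi_norm_le_iff_of_nonneg (norm_nonneg _)).2 fun i => ?_
      obtain ⟨j, hj⟩ := h2 i
      have h0 : ∀ k, k ≠ i → B j k = 0 := by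
        intro k hk
        have := Finset.add_le_sum (f := fun i => ‖B j i‖) (s := Finset.univ)
          (fun _ _ => norm_nonneg _) (Finset.mem_univ k) (Finset.mem_univ i) hk
        have h3 := h1 j
        exact norm_le_zero_iff.1 (by linarith)
      have : B.mulVec v j = B j i * v i := by
        rw [Matrix.mulVec, dotProduct]
        exact Finset.sum_eq_single i (fun k _ hk => by rw [h0 k hk, zero_mul]) (by simp)
      calc ‖v i‖ = ‖B.mulVec v j‖ := by rw [this, norm_mul, hj, one_mul]
        _ ≤ _ := norm_le_pi_norm _ j

/-- A matrix induces a linear isometric embedding `ℓ∞ᵈ(ℂ) → ℓ∞ⁿ(ℂ)` if and only if every row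
has `ℓ₁`-norm at most `1` and every column contains an entry of modulus `1`. -/
theorem matrix_isometric_embedding_iff (n d : ℕ) (B : Matrix (Fin n) (Fin d) ℂ) :
    (∀ x : LinfC d, ‖matrixMapLinf B x‖ = ‖x‖) ↔
      (∀ j : Fin n, ∑ i : Fin d, ‖B j i‖ ≤ 1) ∧
        (∀ i : Fin d, ∃ j : Fin n, ‖B j i‖ = 1) := by
  rw [← matrix_norm_aux]
  constructor
  · intro h v
    have := h ((WithLp.equiv ⊤ (Fin d → ℂ)).symm v)
    simpa only [linf_norm_aux, matrixMapLinf, Equiv.apply_symm_apply] using this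
  · intro h x
    simpa only [linf_norm_aux, matrixMapLinf, Equiv.apply_symm_apply] using
      h (WithLp.equiv ⊤ (Fin d → ℂ) x)
end
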